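/- arXiv:2204.01272 — 3 statements merged into one kernel-verified Lean document; each statement's English description precedes it below -/
import Mathlib

section
/- Let ρ > 0 and c ∈ L^∞(B_ρ⁺). Suppose u ∈ C^{2s+α}(B_ρ) ∩ 𝒜_s(ℝⁿ) for some α > 0 with 2s+α not an integer, u ≥ 0 in ℝⁿ₊, and (−Δ)^s u + c·u = 0 pointwise in B_ρ⁺. Then there exists C_ρ ≥ 1, depending only on n, s, ‖c‖_{L^∞(B_ρ⁺)} and ρ, such that sup_{x∈B_{ρ/2}⁺} u(x)/x₁ ≤ C_ρ · inf_{x∈B_{ρ/2}⁺} u(x)/x₁, and moreover C_ρ⁻¹‖u‖_{𝒜_s(ℝⁿ)} ≤ inf_{x∈B_{ρ/2}⁺} u(x)/x₁ ≤ sup_{x∈B_{ρ/2}⁺} u(x)/x₁ ≤ C_ρ‖u‖_{𝒜_s(ℝⁿ)}. -/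
/-!
The proof compares `u` with two explicit antisymmetric barriers in the half ball of radius
`R = 3ρ/4`, by touching.

The coefficient `(c_{1,s}/s) x₁^{-2s}` equals `2 c_{n,s} ∫ |x-y|^{-n-2s} dy` over the complement of
the half space (`zero_order_const`), so the operator is an integral operator with an explicit zeroth
order term. The kernel `|z|^{-n-2s}` is split at a scale `r` into a singular part `fcut`,
supported in `|z| < r`, and a bounded part `kcut` (`trunc_split`). Unfolding the half space to `ℝⁿ`
by antisymmetry and averaging over the four points `x ± z`, `x ± z_*` controls the singular part on
a barrier by its second differences, with the factor `x₁` retained (`sing_lower`, `four_point`).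
The bounded part of the antisymmetric kernel is at most `C r^{-n-2s-2} x₁ y₁ / (1+|y|^{n+2s+2})`
(`kdiff_upper`), and the full kernel is at least `c x₁ y₁ / (1+|y|^{n+2s+2})` (`kernel_lower`).

From below, let `φ = y₁ (R²-|y|²)₊²`. If `u - τφ` is negative somewhere in the half space, then it
has a negative minimum at some `x` in the half ball. There the kernel lower bound produces a term
`-c x₁ ‖u‖` in the operator, while all other terms are `O(τ x₁)`; hence `‖u‖ ≤ C τ`
(`lower_touch`), and so `u ≥ c ‖u‖ φ`.

From above, let `ψ = y₁ (R²-|y|²)^{-(n+2)}`, which is infinite on the sphere. If `u > τψ` somewhere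
in the half ball, then `u - τψ` has a positive maximum at some `x` there. Split at the
scale `r = θ (R²-|x|²)`: the zeroth order mass of the bounded part contributes at least
`(|B₁|/2) r^{-2s} u(x)`, which for small `θ` absorbs the barrier term and the potential, and the
remaining term is at most `C r^{-n-2s-2} x₁ ‖u‖`. As `u(x) ≥ τ ψ(x)`, the powers of `R²-|x|²` cancel
and `τ ≤ C ‖u‖` (`upper_touch`), so that `u ≤ C ‖u‖ ψ`.

Both bounds on the ball of radius `ρ/2` give the theorem. Of the Hölder regularity of `u` only
continuity enters, since the equation already asserts convergence of the truncated integrals.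
-/

open MeasureTheory Metric Filter Topology

noncomputable section

/-- Euclidean space `ℝⁿ`. -/
abbrev Euc (n : ℕ) := EuclideanSpace ℝ (Fin n)

/-- Reflection `x ↦ x_* = (-x₁, x')` across the hyperplane `{x₁ = 0}`. -/
def reflFirst (n : ℕ) [NeZero n] (x : Euc n) : Euc n :=
  x - (2 * x 0) • EuclideanSpace.single 0 1

/-- The open half space `ℝⁿ₊ = {x : x₁ > 0}`. -/
def halfSpace (n : ℕ) [NeZero n] : Set (Euc n) := {x | 0 < x 0}

/-- `u` is antisymmetric: `u(x_*) = -u(x)`. -/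
def AntiSymmFn (n : ℕ) [NeZero n] (u : Euc n → ℝ) : Prop :=
  ∀ x, u (reflFirst n x) = - u x

/-- The normalising constant `c_{n,s}` of the fractional Laplacian. -/
def cns (n : ℕ) (s : ℝ) : ℝ :=
  s * (4 : ℝ) ^ s * Real.Gamma (((n : ℝ) + 2 * s) / 2) /
    (Real.pi ^ ((n : ℝ) / 2) * Real.Gamma (1 - s))

/-- The constant `γ_{n,s}` of the mean value formula. -/
def gammans (n : ℕ) (s : ℝ) : ℝ :=
  Real.sin (Real.pi * s) * Real.Gamma ((n : ℝ) / 2) / Real.pi ^ ((n : ℝ) / 2 + 1)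

/-- The first standard basis vector `e₁`. -/
def e1 (n : ℕ) [NeZero n] : Euc n := EuclideanSpace.single 0 1

/-- `‖u‖_{𝒜ₛ(ℝⁿ)} = ∫_{ℝⁿ₊} x₁|u(x)|/(1+|x|^{n+2s+2}) dx`. -/
def ANorm (n : ℕ) [NeZero n] (s : ℝ) (u : Euc n → ℝ) : ℝ :=
  ∫ x in halfSpace n, x 0 * |u x| / (1 + ‖x‖ ^ ((n : ℝ) + 2 * s + 2))

/-- `u ∈ 𝒜ₛ(ℝⁿ)`. -/
def MemA (n : ℕ) [NeZero n] (s : ℝ) (u : Euc n → ℝ) : Prop :=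
  AntiSymmFn n u ∧ LocallyIntegrable u volume ∧
    IntegrableOn (fun x => x 0 * |u x| / (1 + ‖x‖ ^ ((n : ℝ) + 2 * s + 2))) (halfSpace n) volume

/-- `u ∈ ℒₛ(ℝⁿ)`. -/
def MemL (n : ℕ) (s : ℝ) (u : Euc n → ℝ) : Prop :=
  LocallyIntegrable u volume ∧
    Integrable (fun x => |u x| / (1 + ‖x‖ ^ ((n : ℝ) + 2 * s))) volume

/-- Membership in the Hölder space `C^β = C^{⌊β⌋, β-⌊β⌋}` on `Ω`. -/
def MemHolderOn {X : Type*} [NormedAddCommGroup X] [NormedSpace ℝ X]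
    (β : ℝ) (Ω : Set X) (u : X → ℝ) : Prop :=
  ContDiffOn ℝ (⌊β⌋₊ : ℕ) u Ω ∧
    ∃ C : NNReal, HolderOnWith C (β - ⌊β⌋₊).toNNReal (iteratedFDerivWithin ℝ ⌊β⌋₊ u Ω) Ω

/-- `K` bounds the `C^β = C^{⌊β⌋, β-⌊β⌋}` norm of `u` on `Ω`. -/
def HolderBoundBy {X : Type*} [NormedAddCommGroup X] [NormedSpace ℝ X]
    (β : ℝ) (Ω : Set X) (u : X → ℝ) (K : ℝ) : Prop :=
  (∀ i ≤ ⌊β⌋₊, ∀ x ∈ Ω, ‖iteratedFDerivWithin ℝ i u Ω x‖ ≤ K) ∧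
    HolderOnWith K.toNNReal (β - ⌊β⌋₊).toNNReal (iteratedFDerivWithin ℝ ⌊β⌋₊ u Ω) Ω

/-- `β` is not an integer. -/
def NotInteger (β : ℝ) : Prop := ∀ k : ℤ, β ≠ k

/-- The antisymmetric kernel `|x-y|^{-n-2s} - |x_*-y|^{-n-2s}`. -/
def aKernel (n : ℕ) [NeZero n] (s : ℝ) (x y : Euc n) : ℝ :=
  ‖x - y‖ ^ (-((n : ℝ) + 2 * s)) - ‖reflFirst n x - y‖ ^ (-((n : ℝ) + 2 * s))

/-- `(-Δ)ˢ u (x) = L` in the antisymmetric sense of Definition 1.4: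
the truncated integrals over `ℝⁿ₊ ∖ B_ε(x)` (plus the constant zero-th order term)
converge to `L` as `ε → 0⁺`. -/
def HasAntiFracLap (n : ℕ) [NeZero n] (s : ℝ) (u : Euc n → ℝ) (x : Euc n) (L : ℝ) : Prop :=
  Filter.Tendsto
    (fun ε : ℝ =>
      cns n s * (∫ y in halfSpace n \ Metric.ball x ε, aKernel n s x y * (u x - u y)) +
        (cns 1 s / s) * u x * (x 0) ^ (-(2 * s)))
    (𝓝[>] (0 : ℝ)) (𝓝 L)

/-- `(-Δ)ˢ u (x) = L` in the principal value sense. -/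
def HasPVFracLap (n : ℕ) (s : ℝ) (u : Euc n → ℝ) (x : Euc n) (L : ℝ) : Prop :=
  Filter.Tendsto
    (fun ε : ℝ =>
      cns n s * ∫ y in (Metric.ball x ε)ᶜ, (u x - u y) / ‖x - y‖ ^ ((n : ℝ) + 2 * s))
    (𝓝[>] (0 : ℝ)) (𝓝 L)

/-! ### The reflection -/

/-- The reflection `x ↦ x_*` as a linear isometry. -/
def reflIso (n : ℕ) [NeZero n] : Euc n ≃ₗᵢ[ℝ] Euc n :=
  LinearIsometryEquiv.piLpCongrRight 2
    (fun i : Fin n => if i = 0 then LinearIsometryEquiv.neg ℝ (E := ℝ)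
      else LinearIsometryEquiv.refl ℝ ℝ)

section Refl
variable {n : ℕ} [NeZero n]

lemma reflIso_eq (x : Euc n) : reflIso n x = reflFirst n x := by
  ext i
  by_cases h : i = 0
  · subst h
    simp [reflIso, reflFirst]
    ring
  · simp [reflIso, reflFirst, h]

lemma refl_zero (x : Euc n) : reflFirst n x 0 = - x 0 := by
  simp [reflFirst]; ring

lemma refl_norm (x : Euc n) : ‖reflFirst n x‖ = ‖x‖ := by
  rw [← reflIso_eq, LinearIsometryEquiv.norm_map]

lemma refl_add (x y : Euc n) : reflFirst n (x + y) = reflFirst n x + reflFirst n y := by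
  simp only [← reflIso_eq, map_add]

lemma refl_sub (x y : Euc n) : reflFirst n (x - y) = reflFirst n x - reflFirst n y := by
  simp only [← reflIso_eq, map_sub]

lemma refl_neg (x : Euc n) : reflFirst n (-x) = - reflFirst n x := by
  simp only [← reflIso_eq, map_neg]

lemma refl_refl (x : Euc n) : reflFirst n (reflFirst n x) = x := by
  ext i
  by_cases h : i = 0
  · subst h
    simp [reflFirst]
    ring
  · simp [reflFirst, h]

lemma refl_mp : MeasurePreserving (reflFirst n) (volume : Measure (Euc n)) volume := by
  have h := (reflIso n).measurePreserving
  have : (reflIso n : Euc n → Euc n) = reflFirst n := funext reflIso_eq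
  rwa [this] at h

lemma refl_emb : MeasurableEmbedding (reflFirst n) := by
  have h := (reflIso n).toMeasurableEquiv.measurableEmbedding
  have : ((reflIso n).toMeasurableEquiv : Euc n → Euc n) = reflFirst n := funext reflIso_eq
  rwa [this] at h

lemma refl_sub_norm_sq (x y : Euc n) :
    ‖reflFirst n x - y‖ ^ 2 = ‖x - y‖ ^ 2 + 4 * (x 0 * y 0) := by
  have h : reflFirst n x - y = (x - y) - (2 * x 0) • EuclideanSpace.single 0 1 := by
    simp only [reflFirst]; abel
  rw [h, norm_sub_sq_real, inner_smul_right, EuclideanSpace.inner_single_right, norm_smul]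
  simp
  rw [mul_pow, sq_abs]
  ring

lemma norm_sub_le_refl {x y : Euc n} (hx : 0 < x 0) (hy : 0 < y 0) :
    ‖x - y‖ ≤ ‖reflFirst n x - y‖ := by
  have := refl_sub_norm_sq x y
  have h2 : 0 < x 0 * y 0 := mul_pos hx hy
  exact le_of_sq_le_sq (by linarith) (norm_nonneg _)

lemma abs_coord_le (x : Euc n) : |x 0| ≤ ‖x‖ := by
  simpa using PiLp.norm_apply_le x 0

lemma refl_norm_ge {x y : Euc n} (hx : 0 < x 0) (hy : 0 < y 0) :
    x 0 ≤ ‖reflFirst n x - y‖ := by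
  have := abs_coord_le (reflFirst n x - y)
  simp only [PiLp.sub_apply, refl_zero] at this
  rw [abs_of_neg (by linarith)] at this
  linarith

lemma meas_half : MeasurableSet (halfSpace n) :=
  (isOpen_lt continuous_const (by fun_prop)).measurableSet

lemma vol_hyper : volume {y : Euc n | y 0 = 0} = 0 := by
  let S : Submodule ℝ (Euc n) := LinearMap.ker
    (EuclideanSpace.proj (𝕜 := ℝ) 0 : Euc n →L[ℝ] ℝ).toLinearMap
  have h : S ≠ ⊤ := by
    intro h
    have : (EuclideanSpace.single 0 1 : Euc n) ∈ S := by rw [h]; trivial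
    simp [S] at this
  have := Measure.addHaar_submodule volume S h
  convert this using 2
  ext y
  simp [S]

lemma refl_preimage_half :
    (reflFirst n) ⁻¹' (halfSpace n) =ᵐ[volume] (halfSpace n)ᶜ := by
  have : ∀ᵐ y : Euc n, y 0 ≠ 0 := by
    rw [ae_iff]; simpa using vol_hyper
  filter_upwards [this] with y hy
  apply propext
  change (0 < reflFirst n y 0) ↔ ¬ (0 < y 0)
  rw [refl_zero]
  constructor
  · intro h; linarith
  · intro h
    rcases lt_or_gt_of_ne hy with h' | h'
    · linarith
    · exact absurd h' h

/-- Change of variables `y ↦ y_*`, from the half space to its complement. -/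
lemma setIntegral_refl (g : Euc n → ℝ) :
    ∫ y in (halfSpace n)ᶜ, g (reflFirst n y) = ∫ y in halfSpace n, g y := by
  rw [← refl_mp.setIntegral_preimage_emb refl_emb g, setIntegral_congr_set refl_preimage_half]
  rfl

lemma integrableOn_refl (g : Euc n → ℝ) :
    IntegrableOn (fun y => g (reflFirst n y)) (halfSpace n)ᶜ ↔ IntegrableOn g (halfSpace n) := by
  rw [← refl_mp.integrableOn_comp_preimage refl_emb (f := g), integrableOn_congr_set_ae refl_preimage_half]
  rfl

end Refl

/-! ### Splitting the kernel at a scale `r` -/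

/-- The part of the kernel `‖z‖^{-n-2s}` that is frozen inside `B_r`: `max(‖z‖, r)^{-n-2s}`. -/
def kcut (n : ℕ) (s r : ℝ) (z : Euc n) : ℝ := (max ‖z‖ r) ^ (-((n : ℝ) + 2 * s))

/-- The singular part `(‖z‖^{-n-2s} - r^{-n-2s})₊` of the kernel, supported in `B_r`.
At `z = 0`, where `‖z‖^{-n-2s}` has the junk value `0`, it is `0`. -/
def fcut (n : ℕ) (s r : ℝ) (z : Euc n) : ℝ :=
  max (‖z‖ ^ (-((n : ℝ) + 2 * s)) - kcut n s r z) 0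

lemma cns_pos {n : ℕ} {s : ℝ} (hs : s ∈ Set.Ioo (0 : ℝ) 1) : 0 < cns n s := by
  have h1 := hs.1
  have h2 := hs.2
  unfold cns
  have := Real.Gamma_pos_of_pos (s := ((n : ℝ) + 2 * s) / 2) (by positivity)
  have := Real.Gamma_pos_of_pos (s := 1 - s) (by linarith)
  positivity

lemma rpow_neg_tangent {q A B : ℝ} (hq : 0 < q) (hA : 0 < A) (hB : 0 < B) :
    B ^ (-q) + q * B ^ (-q - 1) * (B - A) ≤ A ^ (-q) := by
  have h1 : 1 - q * (A / B - 1) ≤ (A / B) ^ (-q) := by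
    have hAB : 0 < A / B := by positivity
    rw [Real.rpow_def_of_pos hAB]
    have h := Real.add_one_le_exp (Real.log (A / B) * -q)
    have h3 := Real.log_le_sub_one_of_pos hAB
    nlinarith
  rw [Real.div_rpow hA.le hB.le, le_div_iff₀ (by positivity)] at h1
  have h2 : B ^ (-q - 1) = B ^ (-q) / B := by
    rw [Real.rpow_sub_one hB.ne']
  rw [h2]
  refine le_trans (le_of_eq ?_) h1
  field_simp
  ring

section Kernel
variable {n : ℕ} [NeZero n] {s : ℝ}

lemma kcut_nonneg {r : ℝ} (z : Euc n) : 0 ≤ kcut n s r z := by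
  unfold kcut
  exact Real.rpow_nonneg (le_max_of_le_left (norm_nonneg _)) _

lemma fcut_nonneg {r : ℝ} (z : Euc n) : 0 ≤ fcut n s r z := le_max_right _ _

lemma p_pos (hs : 0 < s) : 0 < (n : ℝ) + 2 * s := by positivity

lemma kcut_le_rpow (hs : 0 < s) {r : ℝ} {z : Euc n} (hz : z ≠ 0) :
    kcut n s r z ≤ ‖z‖ ^ (-((n : ℝ) + 2 * s)) := by
  unfold kcut
  exact Real.rpow_le_rpow_of_nonpos (norm_pos_iff.2 hz) (le_max_left _ _)
    (by have := p_pos (n := n) hs; linarith)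

lemma fcut_add_kcut (hs : 0 < s) {r : ℝ} {z : Euc n} (hz : z ≠ 0) :
    ‖z‖ ^ (-((n : ℝ) + 2 * s)) = fcut n s r z + kcut n s r z := by
  unfold fcut
  rw [max_eq_left (by have := kcut_le_rpow (r := r) hs hz; linarith)]
  ring

lemma fcut_le_rpow {r : ℝ} (z : Euc n) : fcut n s r z ≤ ‖z‖ ^ (-((n : ℝ) + 2 * s)) := by
  unfold fcut
  refine max_le ?_ (by positivity)
  have := kcut_nonneg (s := s) (r := r) z
  linarith

lemma fcut_eq_zero {r : ℝ} {z : Euc n} (h : r ≤ ‖z‖) : fcut n s r z = 0 := by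
  unfold fcut kcut
  rw [max_eq_left h]; simp

lemma kcut_anti (hs : 0 < s) {r : ℝ} (hr : 0 < r) {z w : Euc n} (h : ‖z‖ ≤ ‖w‖) :
    kcut n s r w ≤ kcut n s r z := by
  unfold kcut
  exact Real.rpow_le_rpow_of_nonpos (lt_max_of_lt_right hr) (max_le_max h le_rfl)
    (by have := p_pos (n := n) hs; linarith)

lemma fcut_anti (hs : 0 < s) {r : ℝ} {z w : Euc n} (hz : z ≠ 0) (h : ‖z‖ ≤ ‖w‖) :
    fcut n s r w ≤ fcut n s r z := by
  rcases le_or_gt r ‖w‖ with hw | hw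
  · rw [fcut_eq_zero hw]; exact fcut_nonneg z
  · have hzr : ‖z‖ < r := h.trans_lt hw
    unfold fcut kcut
    rw [max_eq_right hw.le, max_eq_right hzr.le]
    refine max_le_max ?_ le_rfl
    have := Real.rpow_le_rpow_of_nonpos (norm_pos_iff.2 hz) h
      (z := -((n : ℝ) + 2 * s)) (by have := p_pos (n := n) hs; linarith)
    linarith

lemma kcut_le_const (hs : 0 < s) {r : ℝ} (hr : 0 < r) (z : Euc n) :
    kcut n s r z ≤ r ^ (-((n : ℝ) + 2 * s)) := by
  unfold kcut
  exact Real.rpow_le_rpow_of_nonpos hr (le_max_right _ _)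
    (by have := p_pos (n := n) hs; linarith)

lemma fcut_le_of_le (hs : 0 < s) {r ε : ℝ} (hε : 0 < ε) {z : Euc n} (hz : ε ≤ ‖z‖) :
    fcut n s r z ≤ ε ^ (-((n : ℝ) + 2 * s)) :=
  (fcut_le_rpow z).trans (Real.rpow_le_rpow_of_nonpos hε hz
    (by have := p_pos (n := n) hs; linarith))

@[fun_prop]
lemma kcut_meas {r : ℝ} : Measurable (kcut n s r) := by
  unfold kcut; fun_prop

@[fun_prop]
lemma fcut_meas {r : ℝ} : Measurable (fcut n s r) := by
  unfold fcut; fun_prop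

lemma kcut_neg {r : ℝ} (z : Euc n) : kcut n s r (-z) = kcut n s r z := by simp [kcut]
lemma fcut_neg {r : ℝ} (z : Euc n) : fcut n s r (-z) = fcut n s r z := by simp [fcut, kcut]
lemma kcut_refl {r : ℝ} (z : Euc n) : kcut n s r (reflFirst n z) = kcut n s r z := by
  simp [kcut, refl_norm]
lemma fcut_refl {r : ℝ} (z : Euc n) : fcut n s r (reflFirst n z) = fcut n s r z := by
  simp [fcut, kcut, refl_norm]

lemma rpow_norm_eq_sq {a q : ℝ} (ha : 0 ≤ a) : a ^ (-q) = (a ^ 2) ^ (-(q / 2)) := by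
  rw [← Real.rpow_natCast a 2, ← Real.rpow_mul ha]
  congr 1
  push_cast; ring

/-- The antisymmetric kernel dominates the weight of the `𝒜ₛ` norm. -/
lemma kernel_lower (hs : 0 < s) {R : ℝ} (hR : 0 < R) :
    ∃ c > 0, ∀ x y : Euc n, 0 < x 0 → ‖x‖ ≤ R → 0 < y 0 → y ≠ x →
      c * x 0 * (y 0 / (1 + ‖y‖ ^ ((n : ℝ) + 2 * s + 2))) ≤ aKernel n s x y := by
  have hp := p_pos (n := n) hs
  set p := (n : ℝ) + 2 * s with hpdef
  refine ⟨2 * p / (2 ^ (p + 2) * (R ^ (p + 2) + 1)), by positivity, ?_⟩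
  intro x y hx hxR hy hyx
  have ha : 0 < ‖x - y‖ := norm_pos_iff.2 (sub_ne_zero.2 (Ne.symm hyx))
  have hb : 0 < ‖reflFirst n x - y‖ := ha.trans_le (norm_sub_le_refl hx hy)
  have hbR : ‖reflFirst n x - y‖ ≤ R + ‖y‖ :=
    (norm_sub_le _ _).trans (by rw [refl_norm]; linarith)
  have key := rpow_neg_tangent (q := p / 2) (A := ‖x - y‖ ^ 2) (B := ‖reflFirst n x - y‖ ^ 2)
    (by positivity) (by positivity) (by positivity)
  rw [← rpow_norm_eq_sq (norm_nonneg _), ← rpow_norm_eq_sq (norm_nonneg _),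
    refl_sub_norm_sq] at key
  unfold aKernel
  rw [← refl_sub_norm_sq] at key
  have h2 : (‖reflFirst n x - y‖ ^ 2) ^ (-(p / 2) - 1) = ‖reflFirst n x - y‖ ^ (-(p + 2)) := by
    rw [rpow_norm_eq_sq (norm_nonneg _)]; congr 1; ring
  rw [h2] at key
  have h3 : (R + ‖y‖) ^ (p + 2) ≤ 2 ^ (p + 2) * (R ^ (p + 2) + 1) *
      (1 + ‖y‖ ^ (p + 2)) := by
    have hm : (R + ‖y‖) ≤ 2 * max R ‖y‖ := by
      have := le_max_left R ‖y‖; have := le_max_right R ‖y‖; linarith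
    have h4 : (R + ‖y‖) ^ (p + 2) ≤ (2 * max R ‖y‖) ^ (p + 2) :=
      Real.rpow_le_rpow (by positivity) hm (by positivity)
    rw [Real.mul_rpow (by positivity) (by positivity)] at h4
    have h5 : (max R ‖y‖) ^ (p + 2) ≤ (R ^ (p + 2) + 1) * (1 + ‖y‖ ^ (p + 2)) := by
      have : 0 ≤ R ^ (p + 2) := by positivity
      have : 0 ≤ ‖y‖ ^ (p + 2) := by positivity
      rcases max_cases R ‖y‖ with ⟨h, _⟩ | ⟨h, _⟩ <;> rw [h] <;> nlinarith
    calc _ ≤ _ := h4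
      _ ≤ 2 ^ (p + 2) * ((R ^ (p + 2) + 1) * (1 + ‖y‖ ^ (p + 2))) := by gcongr
      _ = _ := by ring
  have h6 : (2 ^ (p + 2) * (R ^ (p + 2) + 1) * (1 + ‖y‖ ^ (p + 2)))⁻¹ ≤
      ‖reflFirst n x - y‖ ^ (-(p + 2)) := by
    rw [Real.rpow_neg (norm_nonneg _)]
    apply inv_anti₀ (by positivity)
    exact (Real.rpow_le_rpow (norm_nonneg _) hbR (by positivity)).trans h3
  have h7 : p / 2 * ‖reflFirst n x - y‖ ^ (-(p + 2)) *
      (‖x - y‖ ^ 2 + 4 * (x 0 * y 0) - ‖x - y‖ ^ 2) =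
      2 * p * (x 0 * y 0) * ‖reflFirst n x - y‖ ^ (-(p + 2)) := by ring
  rw [refl_sub_norm_sq x y, h7] at key
  have h8 := mul_le_mul_of_nonneg_left h6 (show 0 ≤ 2 * p * (x 0 * y 0) by positivity)
  calc _ = 2 * p * (x 0 * y 0) *
        (2 ^ (p + 2) * (R ^ (p + 2) + 1) * (1 + ‖y‖ ^ (p + 2)))⁻¹ := by
        field_simp
    _ ≤ _ := by linarith

lemma kdiff_nonneg (hs : 0 < s) {r : ℝ} (hr : 0 < r) {x y : Euc n} (hx : 0 < x 0)
    (hy : 0 < y 0) : 0 ≤ kcut n s r (x - y) - kcut n s r (reflFirst n x - y) := by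
  have := kcut_anti (n := n) hs hr (norm_sub_le_refl hx hy)
  linarith

lemma fdiff_nonneg (hs : 0 < s) {r : ℝ} {x y : Euc n} (hx : 0 < x 0)
    (hy : 0 < y 0) (hyx : y ≠ x) :
    0 ≤ fcut n s r (x - y) - fcut n s r (reflFirst n x - y) := by
  have := fcut_anti (n := n) (r := r) hs (sub_ne_zero.2 (Ne.symm hyx)) (norm_sub_le_refl hx hy)
  linarith

/-- The regular part of the antisymmetric kernel is controlled by the weight of the `𝒜ₛ` norm. -/
lemma kdiff_upper (hs : 0 < s) {R : ℝ} (hR : 0 < R) :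
    ∃ C > 0, ∀ r : ℝ, 0 < r → r ≤ R → ∀ x y : Euc n, 0 < x 0 → ‖x‖ ≤ R → 0 < y 0 →
      kcut n s r (x - y) - kcut n s r (reflFirst n x - y) ≤
        C * r ^ (-((n : ℝ) + 2 * s + 2)) * x 0 *
          (y 0 / (1 + ‖y‖ ^ ((n : ℝ) + 2 * s + 2))) := by
  have hp := p_pos (n := n) hs
  set p := (n : ℝ) + 2 * s with hpdef
  refine ⟨2 * p * (1 + (2 * R) ^ (p + 2)), by positivity, ?_⟩
  intro r hr hrR x y hx hxR hy
  set a := max ‖x - y‖ r with ha_def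
  set b := max ‖reflFirst n x - y‖ r with hb_def
  have ha : 0 < a := lt_max_of_lt_right hr
  have hb : 0 < b := lt_max_of_lt_right hr
  have key := rpow_neg_tangent (q := p / 2) (A := b ^ 2) (B := a ^ 2)
    (by positivity) (by positivity) (by positivity)
  rw [← rpow_norm_eq_sq ha.le, ← rpow_norm_eq_sq hb.le] at key
  have h2 : (a ^ 2) ^ (-(p / 2) - 1) = a ^ (-(p + 2)) := by
    rw [rpow_norm_eq_sq ha.le]; congr 1; ring
  rw [h2] at key
  have hxy := mul_pos hx hy
  have hba : b ^ 2 - a ^ 2 ≤ 4 * (x 0 * y 0) := by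
    have h := refl_sub_norm_sq x y
    rcases le_or_gt ‖reflFirst n x - y‖ r with h1 | h1
    · have : b = r := max_eq_right h1
      have : r ≤ a := le_max_right _ _
      nlinarith
    · have h3 : b = ‖reflFirst n x - y‖ := max_eq_left h1.le
      have h4 : ‖x - y‖ ≤ a := le_max_left _ _
      have := norm_nonneg (x - y)
      rw [h3]
      nlinarith
  have h5 : a ^ (-(p + 2)) ≤ (1 + (2 * R) ^ (p + 2)) * r ^ (-(p + 2)) *
      (1 / (1 + ‖y‖ ^ (p + 2))) := by
    have hra : 1 ≤ a / r := by rw [le_div_iff₀ hr]; simp [ha_def]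
    have hy1 : ‖y‖ ≤ (a / r) * (2 * R) := by
      have h6 : ‖y‖ ≤ ‖x‖ + ‖x - y‖ := by
        have := norm_sub_le x (x - y); simpa using this
      have h7 : ‖x - y‖ ≤ a := le_max_left _ _
      have h8 : a = (a / r) * r := by field_simp
      nlinarith
    have h9 : 1 + ‖y‖ ^ (p + 2) ≤ (a / r) ^ (p + 2) * (1 + (2 * R) ^ (p + 2)) := by
      have := Real.rpow_le_rpow (norm_nonneg y) hy1 (show 0 ≤ p + 2 by positivity)
      rw [Real.mul_rpow (by positivity) (by positivity)] at this
      have h10 := Real.one_le_rpow hra (show 0 ≤ p + 2 by positivity)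
      nlinarith
    rw [Real.div_rpow ha.le hr.le, div_mul_eq_mul_div, le_div_iff₀ (by positivity)] at h9
    rw [Real.rpow_neg ha.le, Real.rpow_neg hr.le, inv_le_iff_one_le_mul₀ (by positivity)]
    have e : (1 + (2 * R) ^ (p + 2)) * (r ^ (p + 2))⁻¹ * (1 / (1 + ‖y‖ ^ (p + 2))) * a ^ (p + 2)
        = (a ^ (p + 2) * (1 + (2 * R) ^ (p + 2))) / ((1 + ‖y‖ ^ (p + 2)) * r ^ (p + 2)) := by
      field_simp
    rw [e, one_le_div (by positivity)]
    exact h9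
  unfold kcut
  have h7 : p / 2 * a ^ (-(p + 2)) * (b ^ 2 - a ^ 2) ≤ 2 * p * (x 0 * y 0) * a ^ (-(p + 2)) := by
    have : 0 ≤ p / 2 * a ^ (-(p + 2)) := by positivity
    nlinarith
  have h8 := mul_le_mul_of_nonneg_left h5 (show 0 ≤ 2 * p * (x 0 * y 0) by positivity)
  calc a ^ (-p) - b ^ (-p) ≤ 2 * p * (x 0 * y 0) * a ^ (-(p + 2)) := by
        have e : p / 2 * a ^ (-(p + 2)) * (a ^ 2 - b ^ 2) =
          - (p / 2 * a ^ (-(p + 2)) * (b ^ 2 - a ^ 2)) := by ring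
        rw [e] at key
        linarith
    _ ≤ _ := h8
    _ = _ := by ring

end Kernel

/-! ### The constant in front of the zeroth-order term -/

section Const
variable {n : ℕ} [NeZero n] {s : ℝ}

lemma lintegral_gamma {a R : ℝ} (ha : 0 < a) (hR : 0 < R) :
    ∫⁻ t in Set.Ioi (0 : ℝ), ENNReal.ofReal (t ^ (a - 1) * Real.exp (-(R * t))) =
      ENNReal.ofReal (Real.Gamma a * R ^ (-a)) := by
  have h := Real.integral_rpow_mul_exp_neg_mul_Ioi ha hR
  have hG := Real.Gamma_pos_of_pos ha
  have hint : IntegrableOn (fun t : ℝ => t ^ (a - 1) * Real.exp (-(R * t))) (Set.Ioi 0) :=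
    .of_integral_ne_zero (by rw [h]; positivity)
  rw [← ofReal_integral_eq_lintegral_ofReal hint, h]
  · congr 1
    rw [one_div, Real.inv_rpow hR.le, Real.rpow_neg hR.le]; ring
  · filter_upwards [ae_restrict_mem measurableSet_Ioi] with t ht
    have : 0 < t := ht
    simp only [Pi.zero_apply]
    positivity

/-- The Gaussian integral over the half space `{z₁ > b}`, with the `n - 1` tangential variables
integrated out. -/
lemma gauss_half (b : ℝ) {t : ℝ} (ht : 0 < t) :
    ∫⁻ z in {z : Euc n | b < z 0}, ENNReal.ofReal (Real.exp (-(‖z‖ ^ 2 * t))) =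
      ENNReal.ofReal ((Real.pi / t) ^ (((n : ℝ) - 1) / 2)) *
        ∫⁻ x in Set.Ioi b, ENNReal.ofReal (Real.exp (-(x ^ 2 * t))) := by
  classical
  let f : Fin n → ℝ → ℝ := fun i x => if i = 0 then
    (Set.Ioi b).indicator (fun x => Real.exp (-t * x ^ 2)) x else Real.exp (-t * x ^ 2)
  have hS : MeasurableSet {z : Euc n | b < z 0} :=
    (isOpen_lt continuous_const (by fun_prop)).measurableSet
  have hg1 : Integrable (fun x : ℝ => Real.exp (-t * x ^ 2)) := integrable_exp_neg_mul_sq ht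
  have hfi : ∀ i, Integrable (f i) := by
    intro i
    by_cases h : i = 0
    · simp only [f, h, if_true]; exact hg1.indicator measurableSet_Ioi
    · simp only [f, h, if_false]; exact hg1
  have hprod : ∀ z : Fin n → ℝ, {z : Euc n | b < z 0}.indicator
      (fun z : Euc n => Real.exp (-(‖z‖ ^ 2 * t))) (WithLp.toLp 2 z) = ∏ i, f i (z i) := by
    intro z
    have h1 : Real.exp (-(‖(WithLp.toLp 2 z : Euc n)‖ ^ 2 * t)) =
        ∏ i, Real.exp (-t * z i ^ 2) := by
      rw [← Real.exp_sum, EuclideanSpace.norm_sq_eq]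
      congr 1
      simp only [Real.norm_eq_abs, sq_abs, ← Finset.mul_sum]
      ring
    by_cases hz : b < z 0
    · rw [Set.indicator_of_mem (by simpa using hz), h1]
      refine Finset.prod_congr rfl fun i _ => ?_
      by_cases h : i = 0
      · subst h; simp [f, hz]
      · simp [f, h]
    · rw [Set.indicator_of_notMem (by simpa using hz)]
      symm
      apply Finset.prod_eq_zero (Finset.mem_univ (0 : Fin n))
      simp only [f, if_true]
      exact Set.indicator_of_notMem (by simpa using hz) _
  have hI : Integrable (fun z : Fin n → ℝ => ∏ i, f i (z i)) :=
    Integrable.fintype_prod (f := f) hfi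
  have hI2 : Integrable ({z : Euc n | b < z 0}.indicator
      (fun z : Euc n => Real.exp (-(‖z‖ ^ 2 * t)))) := by
    rw [← (PiLp.volume_preserving_toLp (Fin n)).integrable_comp_emb
      (MeasurableEquiv.toLp 2 _).measurableEmbedding]
    exact hI.congr (ae_of_all _ fun z => (hprod z).symm)
  have hval : ∫ z in {z : Euc n | b < z 0}, Real.exp (-(‖z‖ ^ 2 * t)) =
      (Real.pi / t) ^ (((n : ℝ) - 1) / 2) * ∫ x in Set.Ioi b, Real.exp (-(x ^ 2 * t)) := by
    rw [← integral_indicator hS, ← (PiLp.volume_preserving_toLp (Fin n)).integral_comp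
      (MeasurableEquiv.toLp 2 _).measurableEmbedding]
    simp only [hprod]
    rw [integral_fintype_prod_volume_eq_prod f]
    have h0 : ∫ x, f 0 x = ∫ x in Set.Ioi b, Real.exp (-(x ^ 2 * t)) := by
      simp only [f, if_true]
      rw [integral_indicator measurableSet_Ioi]
      congr 1; ext x; congr 1; ring
    have h1 : ∀ i ∈ Finset.univ.erase (0 : Fin n), ∫ x, f i x = √(Real.pi / t) := by
      intro i hi
      have : i ≠ 0 := Finset.ne_of_mem_erase hi
      simp only [f, this, if_false]
      exact integral_gaussian t
    rw [← Finset.mul_prod_erase _ _ (Finset.mem_univ (0 : Fin n)), Finset.prod_congr rfl h1, h0,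
      Finset.prod_const, Finset.card_erase_of_mem (Finset.mem_univ _), Finset.card_univ,
      Fintype.card_fin, mul_comm]
    congr 1
    rw [Real.sqrt_eq_rpow, ← Real.rpow_natCast, ← Real.rpow_mul (by positivity),
      Nat.cast_sub (Nat.one_le_iff_ne_zero.2 (NeZero.ne n))]
    congr 1
    push_cast; ring
  have hg2 : Integrable (fun x : ℝ => Real.exp (-(x ^ 2 * t))) := by
    convert hg1 using 2 with x
    ring_nf
  rw [← ofReal_integral_eq_lintegral_ofReal ((integrable_indicator_iff hS).1 hI2)
      (ae_of_all _ fun _ => (Real.exp_pos _).le),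
    ← ofReal_integral_eq_lintegral_ofReal hg2.integrableOn (ae_of_all _ fun _ => (Real.exp_pos _).le),
    hval, ENNReal.ofReal_mul (by positivity)]

lemma lintegral_half_kernel (hs : 0 < s) {b : ℝ} (hb : 0 < b) :
    ENNReal.ofReal (Real.Gamma (((n : ℝ) + 2 * s) / 2)) *
      ∫⁻ z in {z : Euc n | b < z 0}, ENNReal.ofReal (‖z‖ ^ (-((n : ℝ) + 2 * s))) =
    ENNReal.ofReal (Real.pi ^ (((n : ℝ) - 1) / 2) * Real.Gamma ((1 + 2 * s) / 2) *
      (b ^ (-(2 * s)) / (2 * s))) := by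
  have hp := p_pos (n := n) hs
  set p := (n : ℝ) + 2 * s with hpdef
  have hS : MeasurableSet {z : Euc n | b < z 0} :=
    (isOpen_lt continuous_const (by fun_prop)).measurableSet
  have hG := Real.Gamma_pos_of_pos (s := p / 2) (by positivity)
  have hG2 := Real.Gamma_pos_of_pos (s := (1 + 2 * s) / 2) (by positivity)
  have hpi := Real.pi_pos
  rw [← lintegral_const_mul _ (by fun_prop)]
  have step1 : ∫⁻ z in {z : Euc n | b < z 0}, ENNReal.ofReal (Real.Gamma (p / 2)) *
      ENNReal.ofReal (‖z‖ ^ (-p)) = ∫⁻ z in {z : Euc n | b < z 0}, ∫⁻ t in Set.Ioi (0 : ℝ),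
        ENNReal.ofReal (t ^ (p / 2 - 1) * Real.exp (-(‖z‖ ^ 2 * t))) := by
    refine setLIntegral_congr_fun hS fun z hz => ?_
    have hz' : 0 < ‖z‖ := by
      have h1 : b < z 0 := hz
      have := abs_coord_le z
      have := le_abs_self (z 0)
      linarith
    rw [lintegral_gamma (by positivity) (by positivity), ← ENNReal.ofReal_mul hG.le,
      rpow_norm_eq_sq (norm_nonneg z)]
  have step2 : ∀ t ∈ Set.Ioi (0 : ℝ), ∫⁻ z in {z : Euc n | b < z 0},
      ENNReal.ofReal (t ^ (p / 2 - 1) * Real.exp (-(‖z‖ ^ 2 * t))) =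
      ∫⁻ x in Set.Ioi b, ENNReal.ofReal (Real.pi ^ (((n : ℝ) - 1) / 2)) *
        ENNReal.ofReal (t ^ ((1 + 2 * s) / 2 - 1) * Real.exp (-(x ^ 2 * t))) := by
    intro t ht
    have ht' : 0 < t := ht
    have e1 : ∀ z : Euc n, ENNReal.ofReal (t ^ (p / 2 - 1) * Real.exp (-(‖z‖ ^ 2 * t))) =
        ENNReal.ofReal (t ^ (p / 2 - 1)) * ENNReal.ofReal (Real.exp (-(‖z‖ ^ 2 * t))) :=
      fun z => ENNReal.ofReal_mul (by positivity)
    have e2 : ∀ x : ℝ, ENNReal.ofReal (Real.pi ^ (((n : ℝ) - 1) / 2)) *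
        ENNReal.ofReal (t ^ ((1 + 2 * s) / 2 - 1) * Real.exp (-(x ^ 2 * t))) =
        ENNReal.ofReal (Real.pi ^ (((n : ℝ) - 1) / 2) * t ^ ((1 + 2 * s) / 2 - 1)) *
          ENNReal.ofReal (Real.exp (-(x ^ 2 * t))) := by
      intro x
      rw [← ENNReal.ofReal_mul (by positivity), ← ENNReal.ofReal_mul (by positivity), mul_assoc]
    simp only [e1, e2]
    rw [lintegral_const_mul _ (by fun_prop), lintegral_const_mul _ (by fun_prop), gauss_half b ht',
      ← mul_assoc, ← ENNReal.ofReal_mul (by positivity)]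
    congr 2
    rw [Real.div_rpow hpi.le ht'.le, mul_div_left_comm, ← Real.rpow_sub ht']
    congr 2
    rw [hpdef]; ring
  rw [step1, lintegral_lintegral_swap, setLIntegral_congr_fun measurableSet_Ioi step2,
    lintegral_lintegral_swap]
  · have step3 : ∀ x ∈ Set.Ioi b, ∫⁻ t in Set.Ioi (0 : ℝ),
        ENNReal.ofReal (Real.pi ^ (((n : ℝ) - 1) / 2)) *
        ENNReal.ofReal (t ^ ((1 + 2 * s) / 2 - 1) * Real.exp (-(x ^ 2 * t))) =
        ENNReal.ofReal (Real.pi ^ (((n : ℝ) - 1) / 2) * Real.Gamma ((1 + 2 * s) / 2) *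
          x ^ (-1 - 2 * s)) := by
      intro x hx
      have hx' : 0 < x := hb.trans hx
      rw [lintegral_const_mul _ (by fun_prop), lintegral_gamma (by positivity) (by positivity),
        ← ENNReal.ofReal_mul (by positivity), ← rpow_norm_eq_sq hx'.le, mul_assoc]
      congr 4; ring
    rw [setLIntegral_congr_fun measurableSet_Ioi step3]
    have hint : IntegrableOn (fun x : ℝ => x ^ (-1 - 2 * s)) (Set.Ioi b) :=
      integrableOn_Ioi_rpow_of_lt (by linarith) hb
    rw [← ofReal_integral_eq_lintegral_ofReal]
    · congr 1
      rw [integral_const_mul, integral_Ioi_rpow_of_lt (by linarith) hb]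
      congr 1
      have : -1 - 2 * s + 1 = -(2 * s) := by ring
      rw [this]
      field_simp
    · exact hint.const_mul _
    · filter_upwards [ae_restrict_mem measurableSet_Ioi] with x hx
      have hx' : 0 < x := hb.trans hx
      simp only [Pi.zero_apply]
      positivity
  · fun_prop
  · fun_prop

lemma integrable_kcut (hs : 0 < s) {r : ℝ} (hr : 0 < r) : Integrable (kcut n s r) := by
  have hp := p_pos (n := n) hs
  have h := (integrable_one_add_norm (E := Euc n) (μ := volume) (r := (n : ℝ) + 2 * s)
    (by simp; exact hs)).const_mul ((r / (1 + r)) ^ (-((n : ℝ) + 2 * s)))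
  refine h.mono' kcut_meas.aestronglyMeasurable (ae_of_all _ fun z => ?_)
  rw [Real.norm_of_nonneg (kcut_nonneg z), ← Real.mul_rpow (by positivity) (by positivity)]
  unfold kcut
  refine Real.rpow_le_rpow_of_nonpos (by positivity) ?_ (by linarith)
  have h1 := le_max_left ‖z‖ r
  have h2 := le_max_right ‖z‖ r
  rw [div_mul_eq_mul_div, div_le_iff₀ (by positivity)]
  nlinarith

lemma norm_ge_of_compl {x y : Euc n} (hy : y ∈ (halfSpace n)ᶜ) : x 0 ≤ ‖x - y‖ := by
  have h1 : ¬ (0 < y 0) := hy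
  have := abs_coord_le (x - y)
  have h2 := le_abs_self ((x - y) 0)
  simp only [PiLp.sub_apply] at this h2
  linarith

lemma integrableOn_compl_kernel (hs : 0 < s) {x : Euc n} (hx : 0 < x 0) :
    IntegrableOn (fun y => ‖x - y‖ ^ (-((n : ℝ) + 2 * s))) (halfSpace n)ᶜ := by
  have h : IntegrableOn (fun y => kcut n s (x 0) (x - y)) (halfSpace n)ᶜ :=
    ((integrable_kcut hs hx).comp_sub_left x).integrableOn
  refine h.congr_fun (fun y hy => ?_) meas_half.compl
  simp only [kcut]
  rw [max_eq_left (norm_ge_of_compl hy)]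

/-- The zeroth-order coefficient in the definition of the operator is twice the mass that the
kernel gives to the reflected half space. -/
lemma zero_order_const (hs : s ∈ Set.Ioo (0 : ℝ) 1) {x : Euc n} (hx : 0 < x 0) :
    (cns 1 s / s) * (x 0) ^ (-(2 * s)) =
      cns n s * (2 * ∫ y in (halfSpace n)ᶜ, ‖x - y‖ ^ (-((n : ℝ) + 2 * s))) := by
  have hs0 := hs.1
  have hp := p_pos (n := n) hs0
  have hG := Real.Gamma_pos_of_pos (s := ((n : ℝ) + 2 * s) / 2) (by positivity)
  have hG2 := Real.Gamma_pos_of_pos (s := (1 + 2 * s) / 2) (by positivity)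
  have hG3 := Real.Gamma_pos_of_pos (s := 1 - s) (by linarith [hs.2])
  have hpi := Real.pi_pos
  have e1 : ENNReal.ofReal (∫ y in (halfSpace n)ᶜ, ‖x - y‖ ^ (-((n : ℝ) + 2 * s))) =
      ∫⁻ z in {z : Euc n | x 0 < z 0}, ENNReal.ofReal (‖z‖ ^ (-((n : ℝ) + 2 * s))) := by
    rw [ofReal_integral_eq_lintegral_ofReal (integrableOn_compl_kernel hs0 hx)
      (ae_of_all _ fun _ => by positivity)]
    have hmp : MeasurePreserving (fun y : Euc n => x - y) volume volume :=
      Measure.measurePreserving_sub_left volume x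
    have hemb : MeasurableEmbedding (fun y : Euc n => x - y) :=
      (MeasurableEquiv.subLeft x).measurableEmbedding
    rw [← hmp.setLIntegral_comp_preimage_emb hemb
      (fun z => ENNReal.ofReal (‖z‖ ^ (-((n : ℝ) + 2 * s))))]
    apply setLIntegral_congr
    have : ∀ᵐ y : Euc n, y 0 ≠ 0 := by
      rw [ae_iff]; simpa using vol_hyper
    filter_upwards [this] with y hy
    apply propext
    change ¬ (0 < y 0) ↔ x 0 < (x - y) 0
    simp only [PiLp.sub_apply]
    constructor
    · intro h
      rcases lt_or_gt_of_ne hy with h' | h'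
      · linarith
      · exact absurd h' h
    · intro h; linarith
  have e2 := lintegral_half_kernel (n := n) hs0 hx
  rw [← e1, ← ENNReal.ofReal_mul hG.le] at e2
  have hI : 0 ≤ ∫ y in (halfSpace n)ᶜ, ‖x - y‖ ^ (-((n : ℝ) + 2 * s)) :=
    integral_nonneg fun _ => by positivity
  rw [ENNReal.ofReal_eq_ofReal_iff (by positivity) (by positivity)] at e2
  have e3 : ∫ y in (halfSpace n)ᶜ, ‖x - y‖ ^ (-((n : ℝ) + 2 * s)) =
    Real.pi ^ (((n : ℝ) - 1) / 2) * Real.Gamma ((1 + 2 * s) / 2) *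
      ((x 0) ^ (-(2 * s)) / (2 * s)) / Real.Gamma (((n : ℝ) + 2 * s) / 2) := by
    rw [eq_div_iff hG.ne', mul_comm]; exact e2
  rw [e3]
  unfold cns
  have e4 : Real.pi ^ ((n : ℝ) / 2) = Real.pi ^ (((n : ℝ) - 1) / 2) * Real.pi ^ ((1 : ℝ) / 2) := by
    rw [← Real.rpow_add hpi]; congr 1; ring
  rw [e4]
  push_cast
  field_simp

end Const

section Sing
variable {n : ℕ} [NeZero n] {s : ℝ}

/-! ### Mass and second moment of the two parts of the kernel -/

lemma tendsto_diff_ball {S : Set (Euc n)} {g : Euc n → ℝ}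
    (hg : IntegrableOn g S) (x : Euc n) :
    Tendsto (fun ε : ℝ => ∫ y in S \ ball x ε, g y) (𝓝[>] 0) (𝓝 (∫ y in S, g y)) := by
  have hvol : Tendsto ((volume.restrict S) ∘ fun ε : ℝ => ball x ε) (𝓝[>] 0) (𝓝 0) := by
    have h1 : Tendsto (fun ε : ℝ => volume (ball x ε)) (𝓝[>] 0) (𝓝 0) := by
      have h3 : ∀ ε ∈ Set.Ioi (0 : ℝ), ENNReal.ofReal (ε ^ n) * volume (ball (0 : Euc n) 1) =
          volume (ball x ε) := by
        intro ε hε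
        have := Measure.addHaar_ball_of_pos (volume : Measure (Euc n)) x hε
        simpa using this.symm
      have h4 : Tendsto (fun ε : ℝ => ENNReal.ofReal (ε ^ n) * volume (ball (0 : Euc n) 1))
          (𝓝[>] 0) (𝓝 0) := by
        have h5 : Tendsto (fun ε : ℝ => ENNReal.ofReal (ε ^ n)) (𝓝[>] 0) (𝓝 0) := by
          have h6 : Tendsto (fun ε : ℝ => ε ^ n) (𝓝[>] 0) (𝓝 0) := by
            have : Continuous fun ε : ℝ => ε ^ n := by fun_prop
            have := this.tendsto 0
            rw [zero_pow (NeZero.ne n)] at this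
            exact this.mono_left nhdsWithin_le_nhds
          simpa using ENNReal.tendsto_ofReal h6
        have := ENNReal.Tendsto.mul_const h5 (b := volume (ball (0 : Euc n) 1))
          (Or.inr measure_ball_lt_top.ne)
        simpa using this
      exact h4.congr' (by filter_upwards [self_mem_nhdsWithin] with ε hε using h3 ε hε)
    exact tendsto_of_tendsto_of_tendsto_of_le_of_le tendsto_const_nhds h1 (fun _ => bot_le)
      (fun ε => Measure.restrict_apply_le _ _)
  have h := Integrable.tendsto_setIntegral_nhds_zero hg hvol
  have h2 : ∀ ε : ℝ, ∫ y in S \ ball x ε, g y =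
      (∫ y in S, g y) - ∫ y in ball x ε, g y ∂(volume.restrict S) := by
    intro ε
    rw [Measure.restrict_restrict measurableSet_ball, Set.inter_comm,
      ← integral_inter_add_sdiff (measurableSet_ball (x := x) (ε := ε)) hg]
    ring
  simp only [h2]
  simpa using tendsto_const_nhds.sub h

lemma integrableOn_of_bdd_ball {S : Set (Euc n)} (hS : MeasurableSet S) {g : Euc n → ℝ}
    (hg : Measurable g) {x : Euc n} {r C : ℝ} (hC : ∀ y ∈ S, y ∈ ball x r → |g y| ≤ C)
    (h0 : ∀ y ∈ S, y ∉ ball x r → g y = 0) : IntegrableOn g S := by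
  have h : Integrable ((ball x r).indicator fun _ => C) (volume.restrict S) :=
    (integrable_indicator_iff measurableSet_ball).2
      (integrableOn_const (by
        exact ((Measure.restrict_apply_le _ _).trans_lt measure_ball_lt_top).ne))
  refine h.mono' hg.aestronglyMeasurable ?_
  filter_upwards [ae_restrict_mem hS] with y hy
  by_cases hb : y ∈ ball x r
  · rw [Set.indicator_of_mem hb]; exact hC y hy hb
  · rw [Set.indicator_of_notMem hb, h0 y hy hb]; simp

/-- The singular part has finite second moment because `s < 1`; the power of `r` is by scaling. -/
lemma second_moment (hs : s ∈ Set.Ioo (0 : ℝ) 1) :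
    ∃ C > 0, ∀ r : ℝ, 0 < r → Integrable (fun z : Euc n => fcut n s r z * ‖z‖ ^ 2) ∧
      ∫ z : Euc n, fcut n s r z * ‖z‖ ^ 2 ≤ C * r ^ (2 - 2 * s) := by
  have hs0 := hs.1
  have hs1 := hs.2
  have hp := p_pos (n := n) hs0
  have hn1 : 1 ≤ n := Nat.one_le_iff_ne_zero.2 (NeZero.ne n)
  have hω : 0 < volume.real (ball (0 : Euc n) 1) :=
    ENNReal.toReal_pos (measure_ball_pos _ _ one_pos).ne' measure_ball_lt_top.ne
  refine ⟨n * (volume.real (ball (0 : Euc n) 1) * (1 / (2 - 2 * s))), ?_, ?_⟩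
  · have : 0 < (n : ℝ) := by exact_mod_cast hn1
    have : 0 < 2 - 2 * s := by linarith
    positivity
  intro r hr
  let f : ℝ → ℝ := (Set.Iio r).indicator fun t => t ^ (2 - ((n : ℝ) + 2 * s))
  have hcongr : ∀ t ∈ Set.Ioi (0 : ℝ), t ^ (n - 1) • f t =
      (Set.Ioo 0 r).indicator (fun t => t ^ (1 - 2 * s)) t := by
    intro t ht
    have ht' : 0 < t := ht
    by_cases h : t < r
    · simp only [f]
      rw [Set.indicator_of_mem (show t ∈ Set.Iio r from h),
        Set.indicator_of_mem (show t ∈ Set.Ioo 0 r from ⟨ht, h⟩), smul_eq_mul,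
        ← Real.rpow_natCast, ← Real.rpow_add ht', Nat.cast_sub hn1]
      congr 1; push_cast; ring
    · simp only [f]
      rw [Set.indicator_of_notMem (by simpa using h), Set.indicator_of_notMem (by simp [h])]
      simp
  have hint1 : IntegrableOn (fun t : ℝ => t ^ (1 - 2 * s)) (Set.Ioo 0 r) := by
    have := (intervalIntegral.intervalIntegrable_rpow' (a := 0) (b := r) (r := 1 - 2 * s)
      (by linarith)).1
    exact this.mono_set Set.Ioo_subset_Ioc_self
  have hI : Integrable (fun z : Euc n => f ‖z‖) := by
    rw [integrable_fun_norm_addHaar, finrank_euclideanSpace_fin,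
      integrableOn_congr_fun hcongr measurableSet_Ioi]
    exact ((integrable_indicator_iff measurableSet_Ioo).2 hint1).integrableOn
  have hval : ∫ z : Euc n, f ‖z‖ =
      n * (volume.real (ball (0 : Euc n) 1) * (1 / (2 - 2 * s))) * r ^ (2 - 2 * s) := by
    rw [integral_fun_norm_addHaar, finrank_euclideanSpace_fin,
      setIntegral_congr_fun measurableSet_Ioi hcongr, setIntegral_indicator measurableSet_Ioo]
    have : Set.Ioi (0 : ℝ) ∩ Set.Ioo 0 r = Set.Ioo 0 r :=
      Set.inter_eq_right.2 Set.Ioo_subset_Ioi_self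
    rw [this, ← integral_Ioc_eq_integral_Ioo, ← intervalIntegral.integral_of_le hr.le,
      integral_rpow (Or.inl (by linarith))]
    have e : 1 - 2 * s + 1 = 2 - 2 * s := by ring
    rw [e, Real.zero_rpow (by linarith)]
    simp only [nsmul_eq_mul, smul_eq_mul]
    ring
  have hle : ∀ z : Euc n, fcut n s r z * ‖z‖ ^ 2 ≤ f ‖z‖ := by
    intro z
    rcases le_or_gt r ‖z‖ with h | h
    · rw [fcut_eq_zero h]
      simp only [f]
      rw [Set.indicator_of_notMem (by simpa using h)]; simp
    · simp only [f]
      rw [Set.indicator_of_mem (show ‖z‖ ∈ Set.Iio r from h)]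
      rcases eq_or_ne z 0 with rfl | hz
      · simp only [norm_zero]
        rw [zero_pow two_ne_zero, mul_zero]; positivity
      · have hz' : 0 < ‖z‖ := norm_pos_iff.2 hz
        calc _ ≤ ‖z‖ ^ (-((n : ℝ) + 2 * s)) * ‖z‖ ^ 2 := by
              gcongr; exact fcut_le_rpow z
          _ = _ := by
              rw [← Real.rpow_natCast, ← Real.rpow_add hz']
              congr 1; push_cast; ring
  have hnn : ∀ z : Euc n, 0 ≤ fcut n s r z * ‖z‖ ^ 2 := fun z =>
    mul_nonneg (fcut_nonneg z) (by positivity)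
  have hI2 : Integrable (fun z : Euc n => fcut n s r z * ‖z‖ ^ 2) := by
    refine hI.mono' (by fun_prop) (ae_of_all _ fun z => ?_)
    rw [Real.norm_of_nonneg (hnn z)]; exact hle z
  exact ⟨hI2, (integral_mono hI2 hI hle).trans hval.le⟩

lemma kcut_sub_int (hs : 0 < s) {r : ℝ} (hr : 0 < r) (x : Euc n) :
    Integrable fun y => kcut n s r (x - y) := (integrable_kcut hs hr).comp_sub_left x

lemma integral_kcut_refl {r : ℝ} (x : Euc n) :
    ∫ y in halfSpace n, kcut n s r (reflFirst n x - y) =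
      ∫ y in (halfSpace n)ᶜ, kcut n s r (x - y) := by
  rw [← setIntegral_refl]
  simp only [← refl_sub, kcut_refl]

lemma mass_upper (hs : 0 < s) {r : ℝ} (hr : 0 < r) {x : Euc n} (ε : ℝ) :
    (∫ y in halfSpace n \ ball x ε, (kcut n s r (x - y) - kcut n s r (reflFirst n x - y))) +
      2 * ∫ y in (halfSpace n)ᶜ, kcut n s r (x - y) ≤ 2 * ∫ z : Euc n, kcut n s r z := by
  have hk := kcut_sub_int (n := n) hs hr x
  have h1 : (∫ y in halfSpace n \ ball x ε,
      (kcut n s r (x - y) - kcut n s r (reflFirst n x - y))) ≤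
      ∫ y in halfSpace n, kcut n s r (x - y) := by
    calc _ ≤ ∫ y in halfSpace n \ ball x ε, kcut n s r (x - y) := by
          refine integral_mono ?_ hk.integrableOn ?_
          · exact (hk.sub (kcut_sub_int hs hr (reflFirst n x))).integrableOn
          · intro y
            have := kcut_nonneg (s := s) (r := r) (reflFirst n x - y)
            simp only; linarith
      _ ≤ _ := setIntegral_mono_set hk.integrableOn (ae_of_all _ fun y => kcut_nonneg _)
          (Set.sdiff_subset.eventuallyLE)
  have h2 : (∫ y in halfSpace n, kcut n s r (x - y)) + ∫ y in (halfSpace n)ᶜ, kcut n s r (x - y)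
      = ∫ z : Euc n, kcut n s r z := by
    rw [integral_add_compl meas_half hk, integral_sub_left_eq_self (kcut n s r) volume x]
  have h3 : 0 ≤ ∫ y in halfSpace n, kcut n s r (x - y) :=
    integral_nonneg fun y => kcut_nonneg _
  linarith

lemma mass_lower (hs : 0 < s) {r : ℝ} (hr : 0 < r) {x : Euc n} {ε : ℝ} (hε : ε ≤ r / 2) :
    volume.real (ball (0 : Euc n) 1) / 2 * r ^ (-(2 * s)) ≤
    (∫ y in halfSpace n \ ball x ε, (kcut n s r (x - y) - kcut n s r (reflFirst n x - y))) +
      2 * ∫ y in (halfSpace n)ᶜ, kcut n s r (x - y) := by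
  have hk := kcut_sub_int (n := n) hs hr x
  have hk' := kcut_sub_int (n := n) hs hr (reflFirst n x)
  have hn1 : 1 ≤ n := Nat.one_le_iff_ne_zero.2 (NeZero.ne n)
  have hm : MeasurableSet (halfSpace n \ ball x ε) := meas_half.diff measurableSet_ball
  rw [integral_sub hk.integrableOn hk'.integrableOn]
  have h1 : ∫ y in halfSpace n \ ball x ε, kcut n s r (reflFirst n x - y) ≤
      ∫ y in (halfSpace n)ᶜ, kcut n s r (x - y) := by
    rw [← integral_kcut_refl]
    exact setIntegral_mono_set hk'.integrableOn (ae_of_all _ fun y => kcut_nonneg _)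
          (Set.sdiff_subset.eventuallyLE)
  have h2 : (∫ y in halfSpace n \ ball x ε, kcut n s r (x - y)) +
      ∫ y in (halfSpace n)ᶜ, kcut n s r (x - y) =
      ∫ y in (halfSpace n \ ball x ε) ∪ (halfSpace n)ᶜ, kcut n s r (x - y) := by
    rw [setIntegral_union _ meas_half.compl hk.integrableOn hk.integrableOn]
    exact Set.disjoint_left.2 fun y hy hy' => hy' hy.1
  have h3 : ∫ y in ball x r \ ball x (r / 2), kcut n s r (x - y) ≤
      ∫ y in (halfSpace n \ ball x ε) ∪ (halfSpace n)ᶜ, kcut n s r (x - y) := by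
    have hsub : ball x r \ ball x (r / 2) ⊆ (halfSpace n \ ball x ε) ∪ (halfSpace n)ᶜ := by
      intro y hy
      by_cases h : y ∈ halfSpace n
      · exact Or.inl ⟨h, fun h' => hy.2 (ball_subset_ball hε h')⟩
      · exact Or.inr h
    exact setIntegral_mono_set hk.integrableOn (ae_of_all _ fun y => kcut_nonneg _)
      hsub.eventuallyLE
  have h4 : ∫ y in ball x r \ ball x (r / 2), kcut n s r (x - y) =
      volume.real (ball x r \ ball x (r / 2)) * r ^ (-((n : ℝ) + 2 * s)) := by
    rw [setIntegral_congr_fun (g := fun _ => r ^ (-((n : ℝ) + 2 * s)))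
      (measurableSet_ball.diff measurableSet_ball), setIntegral_const, smul_eq_mul]
    intro y hy
    have : ‖x - y‖ < r := by
      have := hy.1; rwa [mem_ball, dist_comm, dist_eq_norm] at this
    simp only [kcut]
    rw [max_eq_right this.le]
  have h5 : volume.real (ball x r \ ball x (r / 2)) =
      r ^ n * volume.real (ball (0 : Euc n) 1) - (r / 2) ^ n * volume.real (ball (0 : Euc n) 1) := by
    rw [measureReal_sdiff (ball_subset_ball (by linarith)) measurableSet_ball]
    have e : ∀ t > 0, volume.real (ball x t) = t ^ n * volume.real (ball (0 : Euc n) 1) := by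
      intro t ht
      have := Measure.addHaar_ball_of_pos (volume : Measure (Euc n)) x ht
      rw [Measure.real, this, ENNReal.toReal_mul, ENNReal.toReal_ofReal (by positivity)]
      simp [Measure.real]
    rw [e r hr, e (r / 2) (by positivity)]
  have h6 : (r / 2) ^ n ≤ r ^ n / 2 := by
    rw [div_pow]
    have : (2 : ℝ) ^ 1 ≤ 2 ^ n := pow_le_pow_right₀ (by norm_num) hn1
    gcongr
    linarith
  have h7 : r ^ n * r ^ (-((n : ℝ) + 2 * s)) = r ^ (-(2 * s)) := by
    rw [← Real.rpow_natCast, ← Real.rpow_add hr]; congr 1; ring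
  have hω : 0 ≤ volume.real (ball (0 : Euc n) 1) := measureReal_nonneg
  have h8 : volume.real (ball (0 : Euc n) 1) / 2 * r ^ (-(2 * s)) ≤
      volume.real (ball x r \ ball x (r / 2)) * r ^ (-((n : ℝ) + 2 * s)) := by
    rw [← h7, h5]
    have : 0 < r ^ (-((n : ℝ) + 2 * s)) := by positivity
    calc _ = (r ^ n / 2 * volume.real (ball (0 : Euc n) 1)) * r ^ (-((n : ℝ) + 2 * s)) := by ring
      _ ≤ _ := by
        apply mul_le_mul_of_nonneg_right _ this.le
        nlinarith
  linarith

/-! ### The singular part acting on an antisymmetric barrier -/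

/-- If the average of the antisymmetric function `ψ` over the four points `x ± z`, `x ± z_*` exceeds
`ψ x` by at most `M ‖z‖²`, then the singular part of the operator applied to `ψ` at `x` is, in the
limit, at least `-M` times the second moment of the singular kernel. The integral
over the half space is unfolded to `ℝⁿ`, where the kernel is invariant under `z ↦ -z` and
`z ↦ z_*`. -/
lemma sing_lower (hs : s ∈ Set.Ioo (0 : ℝ) 1) {x : Euc n} (hx : 0 < x 0) {r : ℝ} (hr : 0 < r)
    {ψ : Euc n → ℝ} (hanti : AntiSymmFn n ψ) (hmeas : Measurable ψ) {Bd : ℝ}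
    (hbd : ∀ y ∈ ball x r, |ψ y| ≤ Bd) {M : ℝ} (hM : 0 ≤ M)
    (hsym : ∀ z, ‖z‖ < r → ψ (x + z) + ψ (x - z) + ψ (x + reflFirst n z) +
      ψ (x - reflFirst n z) - 4 * ψ x ≤ 4 * M * ‖z‖ ^ 2) {η : ℝ} (hη : 0 < η) :
    ∀ᶠ ε in 𝓝[>] (0 : ℝ), -(M * ∫ z : Euc n, fcut n s r z * ‖z‖ ^ 2) - η ≤
      (∫ y in halfSpace n \ ball x ε,
        (fcut n s r (x - y) - fcut n s r (reflFirst n x - y)) * (ψ x - ψ y)) +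
        2 * ψ x * ∫ y in (halfSpace n)ᶜ, fcut n s r (x - y) := by
  have hs0 := hs.1
  obtain ⟨Cm, hCm, hmom⟩ := second_moment (n := n) hs
  have hψx : |ψ x| ≤ Bd := hbd x (mem_ball_self hr)
  have hBd : 0 ≤ Bd := (abs_nonneg _).trans hψx
  have hdiff : ∀ y ∈ ball x r, |ψ x - ψ y| ≤ 2 * Bd := fun y hy => by
    have := abs_sub (ψ x) (ψ y); have := hbd y hy; linarith
  have hout : ∀ y, y ∉ ball x r → fcut n s r (x - y) = 0 := by
    intro y hy
    apply fcut_eq_zero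
    rw [mem_ball, dist_comm, dist_eq_norm] at hy
    linarith
  have hG : IntegrableOn (fun y => fcut n s r (reflFirst n x - y) * (ψ x - ψ y)) (halfSpace n) := by
    refine integrableOn_of_bdd_ball meas_half (by fun_prop) (x := x) (r := r)
      (C := (x 0) ^ (-((n : ℝ) + 2 * s)) * (2 * Bd)) ?_ ?_
    · intro y hy hyb
      rw [abs_mul, abs_of_nonneg (fcut_nonneg _)]
      exact mul_le_mul (fcut_le_of_le hs0 hx (refl_norm_ge hx hy)) (hdiff y hyb) (abs_nonneg _)
        (by positivity)
    · intro y hy hyb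
      rw [fcut_eq_zero, zero_mul]
      rw [mem_ball, dist_comm, dist_eq_norm] at hyb
      exact (not_lt.1 hyb).trans (norm_sub_le_refl hx hy)
  have hA : ∀ δ > 0, ∀ S : Set (Euc n), MeasurableSet S → (∀ y ∈ S, δ ≤ ‖x - y‖) →
      IntegrableOn (fun y => fcut n s r (x - y) * (ψ x - ψ y)) S := by
    intro δ hδ S hS hSδ
    refine integrableOn_of_bdd_ball hS (by fun_prop) (x := x) (r := r)
      (C := δ ^ (-((n : ℝ) + 2 * s)) * (2 * Bd)) ?_ ?_
    · intro y hy hyb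
      rw [abs_mul, abs_of_nonneg (fcut_nonneg _)]
      exact mul_le_mul (fcut_le_of_le hs0 hδ (hSδ y hy)) (hdiff y hyb) (abs_nonneg _)
        (by positivity)
    · intro y hy hyb
      rw [hout y hyb, zero_mul]
  have hf : IntegrableOn (fun y => fcut n s r (x - y)) (halfSpace n)ᶜ := by
    refine (integrableOn_compl_kernel hs0 hx).mono'
      (fcut_meas.comp (measurable_const.sub measurable_id)).aestronglyMeasurable
      (ae_of_all _ fun y => ?_)
    rw [Real.norm_of_nonneg (fcut_nonneg _)]
    exact fcut_le_rpow _
  have hAc := hA (x 0) hx (halfSpace n)ᶜ meas_half.compl (fun y hy => norm_ge_of_compl hy)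
  -- the reflected half of the kernel, moved to the complementary half space
  have hGval : 2 * ψ x * (∫ y in (halfSpace n)ᶜ, fcut n s r (x - y)) -
      ∫ y in halfSpace n, fcut n s r (reflFirst n x - y) * (ψ x - ψ y) =
      ∫ y in (halfSpace n)ᶜ, fcut n s r (x - y) * (ψ x - ψ y) := by
    have h2 := (integrableOn_refl _).2 hG
    have e : ∀ y, fcut n s r (reflFirst n x - reflFirst n y) * (ψ x - ψ (reflFirst n y)) =
        2 * ψ x * fcut n s r (x - y) - fcut n s r (x - y) * (ψ x - ψ y) := by
      intro y
      rw [← refl_sub, fcut_refl, hanti y]; ring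
    rw [← setIntegral_refl]
    simp only [e]
    rw [integral_sub (hf.const_mul _) hAc, integral_const_mul]
    ring
  have hlim := tendsto_diff_ball hG x
  have hev := hlim.eventually (gt_mem_nhds (show _ < (∫ y in halfSpace n,
    fcut n s r (reflFirst n x - y) * (ψ x - ψ y)) + η by linarith))
  filter_upwards [hev, self_mem_nhdsWithin, mem_nhdsWithin_of_mem_nhds (Iio_mem_nhds hx)]
    with ε hε1 hε0 hεx
  have hε0' : 0 < ε := hε0
  have hεx' : ε < x 0 := hεx
  have hball : ∀ y ∈ (ball x ε)ᶜ, ε ≤ ‖x - y‖ := by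
    intro y hy
    rw [Set.mem_compl_iff, mem_ball, dist_comm, dist_eq_norm] at hy
    linarith
  have hm : MeasurableSet (halfSpace n \ ball x ε) := meas_half.diff measurableSet_ball
  have hA1 := hA ε hε0' _ hm (fun y hy => hball y hy.2)
  have hA2 := hA ε hε0' _ measurableSet_ball.compl hball
  have e1 : ∫ y in halfSpace n \ ball x ε,
        (fcut n s r (x - y) - fcut n s r (reflFirst n x - y)) * (ψ x - ψ y) =
      (∫ y in halfSpace n \ ball x ε, fcut n s r (x - y) * (ψ x - ψ y)) -
      ∫ y in halfSpace n \ ball x ε, fcut n s r (reflFirst n x - y) * (ψ x - ψ y) := by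
    rw [← integral_sub hA1 (hG.mono_set Set.sdiff_subset)]
    simp only [sub_mul]
  have e2 : (∫ y in halfSpace n \ ball x ε, fcut n s r (x - y) * (ψ x - ψ y)) +
      ∫ y in (halfSpace n)ᶜ, fcut n s r (x - y) * (ψ x - ψ y) =
      ∫ y in (ball x ε)ᶜ, fcut n s r (x - y) * (ψ x - ψ y) := by
    rw [← setIntegral_union _ meas_half.compl hA1 hAc]
    · congr 2
      ext y
      constructor
      · rintro (h | h)
        · exact h.2
        · intro h'
          have h1 := norm_ge_of_compl (x := x) h
          rw [mem_ball, dist_comm, dist_eq_norm] at h'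
          linarith
      · intro h
        by_cases h' : y ∈ halfSpace n
        · exact Or.inl ⟨h', h⟩
        · exact Or.inr h'
    · exact Set.disjoint_left.2 fun y hy hy' => hy' hy.1
  let B : Euc n → ℝ := fun z => (ball (0 : Euc n) ε)ᶜ.indicator
    (fun z => fcut n s r z * (ψ x - ψ (x + z))) z
  have hBx : ∀ z, B z = (ball x ε)ᶜ.indicator
      (fun y => fcut n s r (x - y) * (ψ x - ψ y)) (x + z) := by
    intro z
    by_cases h : z ∈ (ball (0 : Euc n) ε)ᶜ
    · simp only [B]
      rw [Set.indicator_of_mem h, Set.indicator_of_mem (by simpa using h)]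
      simp [fcut_neg]
    · simp only [B]
      rw [Set.indicator_of_notMem h, Set.indicator_of_notMem (by simpa using h)]
  have hBint : Integrable B := by
    have := ((integrable_indicator_iff measurableSet_ball.compl).2 hA2).comp_add_left x
    exact this.congr (ae_of_all _ fun z => (hBx z).symm)
  have e3 : ∫ y in (ball x ε)ᶜ, fcut n s r (x - y) * (ψ x - ψ y) = ∫ z, B z := by
    simp only [hBx]
    rw [integral_add_left_eq_self (μ := volume) ((ball x ε)ᶜ.indicator
      (fun y => fcut n s r (x - y) * (ψ x - ψ y))), integral_indicator measurableSet_ball.compl]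
  have i1 : ∫ z, B (-z) = ∫ z, B z := integral_neg_eq_self B volume
  have i2 : ∫ z, B (reflFirst n z) = ∫ z, B z := refl_mp.integral_comp refl_emb B
  have i3 : ∫ z, B (-(reflFirst n z)) = ∫ z, B z := by
    rw [refl_mp.integral_comp refl_emb (fun z => B (-z)), i1]
  have j1 : Integrable fun z => B (-z) := hBint.comp_neg
  have j2 : Integrable fun z => B (reflFirst n z) :=
    (refl_mp.integrable_comp_emb refl_emb).2 hBint
  have j3 : Integrable fun z => B (-(reflFirst n z)) :=
    (refl_mp.integrable_comp_emb refl_emb (g := fun z => B (-z))).2 j1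
  have hpt : ∀ z, -(4 * M) * (fcut n s r z * ‖z‖ ^ 2) ≤
      B z + B (-z) + (B (reflFirst n z) + B (-(reflFirst n z))) := by
    intro z
    have hf0 := fcut_nonneg (s := s) (r := r) z
    by_cases h : z ∈ (ball (0 : Euc n) ε)ᶜ
    · have hz : ¬ (‖z‖ < ε) := by simpa using h
      simp only [B]
      rw [Set.indicator_of_mem h, Set.indicator_of_mem (by simpa using hz),
        Set.indicator_of_mem (by simpa [refl_norm] using hz),
        Set.indicator_of_mem (by simpa [refl_norm] using hz)]
      simp only [fcut_neg, fcut_refl, ← sub_eq_add_neg]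
      rcases lt_or_ge ‖z‖ r with h1 | h1
      · have := mul_le_mul_of_nonneg_left (hsym z h1) hf0
        nlinarith
      · rw [fcut_eq_zero h1]; simp
    · have hz : ‖z‖ < ε := by simpa using h
      simp only [B]
      rw [Set.indicator_of_notMem h, Set.indicator_of_notMem (by simpa using hz),
        Set.indicator_of_notMem (by simpa [refl_norm] using hz),
        Set.indicator_of_notMem (by simpa [refl_norm] using hz)]
      have : 0 ≤ M * (fcut n s r z * ‖z‖ ^ 2) := by positivity
      linarith
  have hfin := integral_mono ((hmom r hr).1.const_mul (-(4 * M)))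
    ((hBint.add j1).add (j2.add j3)) hpt
  rw [integral_const_mul] at hfin
  have e4 : ∫ z, ((B + fun z => B (-z)) + ((fun z => B (reflFirst n z)) +
      fun z => B (-(reflFirst n z)))) z = 4 * ∫ z, B z := by
    rw [integral_add' (hBint.add j1) (j2.add j3), integral_add' hBint j1, integral_add' j2 j3,
      i1, i2, i3]
    ring
  rw [e4] at hfin
  linarith

end Sing

section Barrier
variable {n : ℕ} [NeZero n] {s : ℝ}

/-! ### The barriers -/

lemma norm_add_refl (x z : Euc n) :
    ‖x + z‖ ^ 2 - ‖x + reflFirst n z‖ ^ 2 = 4 * (x 0 * z 0) := by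
  have h := refl_sub_norm_sq (-z) x
  rw [refl_neg] at h
  have e1 : ‖x + reflFirst n z‖ = ‖-reflFirst n z - x‖ := by rw [← norm_neg]; congr 1; abel
  have e2 : ‖x + z‖ = ‖-z - x‖ := by rw [← norm_neg]; congr 1; abel
  rw [e1, e2, h]
  simp only [PiLp.neg_apply]
  ring

/-- The four-point second difference of `y ↦ y₁ h(‖y‖²)` at `x`, for a function `h` with the
one-sided expansion `h(t) ≤ h(‖x‖²) + l (t - ‖x‖²) + Q ‖z‖²` and Lipschitz constant `L`. -/
lemma four_point {h : ℝ → ℝ} {x z : Euc n} (hx : 0 < x 0) {I : Set ℝ} {l Q L : ℝ}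
    (hI : ∀ w : Euc n, ‖w‖ = ‖z‖ → ‖x + w‖ ^ 2 ∈ I)
    (hq : ∀ w : Euc n, ‖w‖ = ‖z‖ →
      h (‖x + w‖ ^ 2) ≤ h (‖x‖ ^ 2) + l * (‖x + w‖ ^ 2 - ‖x‖ ^ 2) + Q * ‖z‖ ^ 2)
    (hL0 : 0 ≤ L) (hL : ∀ t ∈ I, ∀ t' ∈ I, |h t - h t'| ≤ L * |t - t'|) :
    (x + z) 0 * h (‖x + z‖ ^ 2) + (x - z) 0 * h (‖x - z‖ ^ 2) +
      (x + reflFirst n z) 0 * h (‖x + reflFirst n z‖ ^ 2) +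
      (x - reflFirst n z) 0 * h (‖x - reflFirst n z‖ ^ 2) - 4 * (x 0 * h (‖x‖ ^ 2)) ≤
      4 * ((l + Q + 2 * L) * x 0) * ‖z‖ ^ 2 := by
  have n2 : ‖-z‖ = ‖z‖ := norm_neg z
  have n3 : ‖reflFirst n z‖ = ‖z‖ := refl_norm z
  have n4 : ‖-reflFirst n z‖ = ‖z‖ := by rw [norm_neg, n3]
  have q1 := hq z rfl
  have q2 := hq _ n2
  have q3 := hq _ n3
  have q4 := hq _ n4
  have L1 := hL _ (hI z rfl) _ (hI _ n3)
  have L2 := hL _ (hI _ n2) _ (hI _ n4)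
  have d1 := norm_add_refl x z
  have d2 := norm_add_refl x (-z)
  rw [refl_neg] at d2
  have p1 := parallelogram_law_with_norm ℝ x z
  have p2 := parallelogram_law_with_norm ℝ x (reflFirst n z)
  rw [n3] at p2
  rw [d1] at L1
  rw [d2] at L2
  simp only [← sub_eq_add_neg] at *
  simp only [PiLp.add_apply, PiLp.sub_apply, PiLp.neg_apply, refl_zero] at *
  generalize h (‖x + z‖ ^ 2) = h1 at *
  generalize h (‖x - z‖ ^ 2) = h2 at *
  generalize h (‖x + reflFirst n z‖ ^ 2) = h3 at *
  generalize h (‖x - reflFirst n z‖ ^ 2) = h4 at *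
  generalize h (‖x‖ ^ 2) = h0 at *
  have hz : z 0 ^ 2 ≤ ‖z‖ ^ 2 := by
    rw [← sq_abs]; exact pow_le_pow_left₀ (abs_nonneg _) (abs_coord_le z) 2
  have k1 : z 0 * (h1 - h3) ≤ 4 * L * x 0 * ‖z‖ ^ 2 := by
    calc z 0 * (h1 - h3) ≤ |z 0| * |h1 - h3| := by rw [← abs_mul]; exact le_abs_self _
      _ ≤ |z 0| * (L * |4 * (x 0 * z 0)|) := by gcongr
      _ = 4 * L * x 0 * z 0 ^ 2 := by
        rw [abs_mul, abs_mul, abs_of_pos hx, ← sq_abs (z 0), abs_of_pos (four_pos : (0 : ℝ) < 4)]; ring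
      _ ≤ _ := by gcongr
  have k2 : z 0 * (h4 - h2) ≤ 4 * L * x 0 * ‖z‖ ^ 2 := by
    calc z 0 * (h4 - h2) ≤ |z 0| * |h4 - h2| := by rw [← abs_mul]; exact le_abs_self _
      _ = |z 0| * |h2 - h4| := by rw [abs_sub_comm h4 h2]
      _ ≤ |z 0| * (L * |4 * (x 0 * -z 0)|) := by gcongr
      _ = 4 * L * x 0 * z 0 ^ 2 := by
        rw [abs_mul, abs_mul, abs_neg, abs_of_pos hx, ← sq_abs (z 0), abs_of_pos (four_pos : (0 : ℝ) < 4)]; ring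
      _ ≤ _ := by gcongr
  have k3 : h1 + h2 + h3 + h4 - 4 * h0 ≤ (4 * l + 4 * Q) * ‖z‖ ^ 2 := by
    have e : l * (‖x + z‖ ^ 2 - ‖x‖ ^ 2) + l * (‖x - z‖ ^ 2 - ‖x‖ ^ 2) +
        l * (‖x + reflFirst n z‖ ^ 2 - ‖x‖ ^ 2) + l * (‖x - reflFirst n z‖ ^ 2 - ‖x‖ ^ 2) =
        4 * l * ‖z‖ ^ 2 := by linear_combination l * p1 + l * p2
    linarith
  have k4 := mul_le_mul_of_nonneg_left k3 hx.le
  nlinarith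

/-- The compactly supported barrier `y₁ (R² - |y|²)₊²`, used from below. -/
def phiB (n : ℕ) [NeZero n] (R : ℝ) (y : Euc n) : ℝ := y 0 * (max (R ^ 2 - ‖y‖ ^ 2) 0) ^ 2

/-- The barrier `y₁ (R² - |y|²)^{-(n+2)}`, which blows up on the sphere of radius `R` and is
used from above; only its values in the ball of radius `R` matter. -/
def psiB (n : ℕ) [NeZero n] (R : ℝ) (y : Euc n) : ℝ := y 0 * ((R ^ 2 - ‖y‖ ^ 2) ^ (n + 2))⁻¹

@[fun_prop]
lemma phiB_cont {R : ℝ} : Continuous (phiB n R) := by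
  unfold phiB; fun_prop

@[fun_prop]
lemma psiB_meas {R : ℝ} : Measurable (psiB n R) := by
  unfold psiB; fun_prop

lemma phiB_anti {R : ℝ} : AntiSymmFn n (phiB n R) := by
  intro x; simp only [phiB, refl_norm, refl_zero]; ring

lemma psiB_anti {R : ℝ} : AntiSymmFn n (psiB n R) := by
  intro x; simp only [psiB, refl_norm, refl_zero]; ring

lemma phiB_out {R : ℝ} (hR : 0 < R) {y : Euc n} (hy : R ≤ ‖y‖) : phiB n R y = 0 := by
  have : R ^ 2 - ‖y‖ ^ 2 ≤ 0 := by nlinarith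
  simp [phiB, max_eq_right this]

lemma phiB_nonneg {R : ℝ} {y : Euc n} (hy : 0 ≤ y 0) : 0 ≤ phiB n R y := by
  unfold phiB; positivity

lemma phiB_le {R : ℝ} {y : Euc n} (hy : 0 ≤ y 0) : phiB n R y ≤ R ^ 4 * y 0 := by
  have h1 : max (R ^ 2 - ‖y‖ ^ 2) 0 ≤ R ^ 2 := max_le (by nlinarith [sq_nonneg ‖y‖]) (by positivity)
  have h2 : (max (R ^ 2 - ‖y‖ ^ 2) 0) ^ 2 ≤ (R ^ 2) ^ 2 :=
    pow_le_pow_left₀ (le_max_right _ _) h1 2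
  unfold phiB; nlinarith

lemma phiB_abs_le {R : ℝ} (hR : 0 < R) (y : Euc n) : |phiB n R y| ≤ R ^ 5 := by
  rcases le_or_gt R ‖y‖ with h | h
  · rw [phiB_out hR h]; simp; positivity
  have h1 : max (R ^ 2 - ‖y‖ ^ 2) 0 ≤ R ^ 2 := max_le (by nlinarith [sq_nonneg ‖y‖]) (by positivity)
  have h2 : (max (R ^ 2 - ‖y‖ ^ 2) 0) ^ 2 ≤ (R ^ 2) ^ 2 :=
    pow_le_pow_left₀ (le_max_right _ _) h1 2
  unfold phiB
  rw [abs_mul, abs_of_nonneg (sq_nonneg (max (R ^ 2 - ‖y‖ ^ 2) 0))]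
  calc _ ≤ R * (R ^ 2) ^ 2 := mul_le_mul ((abs_coord_le y).trans h.le) h2 (by positivity) hR.le
    _ = _ := by ring

lemma phiB_four {R : ℝ} {x : Euc n} (hx : 0 < x 0) (hxR : ‖x‖ < R) (z : Euc n) :
    -phiB n R (x + z) + -phiB n R (x - z) + -phiB n R (x + reflFirst n z) +
      -phiB n R (x - reflFirst n z) - 4 * -phiB n R x ≤ 4 * (6 * R ^ 2 * x 0) * ‖z‖ ^ 2 := by
  have hd : 0 < R ^ 2 - ‖x‖ ^ 2 := by nlinarith [norm_nonneg x]
  have key := four_point (h := fun t => -(max (R ^ 2 - t) 0) ^ 2) (x := x) (z := z) hx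
    (I := Set.Ici 0) (l := 2 * (R ^ 2 - ‖x‖ ^ 2)) (Q := 0) (L := 2 * R ^ 2)
    (fun w _ => by simp only [Set.mem_Ici]; positivity) ?_ (by positivity) ?_
  · have h3 : (2 * (R ^ 2 - ‖x‖ ^ 2) + 0 + 2 * (2 * R ^ 2)) * x 0 ≤ 6 * R ^ 2 * x 0 := by
      apply mul_le_mul_of_nonneg_right _ hx.le
      nlinarith [sq_nonneg ‖x‖]
    have h4 : 4 * ((2 * (R ^ 2 - ‖x‖ ^ 2) + 0 + 2 * (2 * R ^ 2)) * x 0) * ‖z‖ ^ 2 ≤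
      4 * (6 * R ^ 2 * x 0) * ‖z‖ ^ 2 := by gcongr
    refine le_trans (le_of_eq ?_) (key.trans h4)
    simp only [phiB]; ring
  · intro w _
    generalize ‖x + w‖ ^ 2 = t
    rw [max_eq_left hd.le]
    rcases max_cases (R ^ 2 - t) 0 with ⟨h, h'⟩ | ⟨h, h'⟩ <;> rw [h] <;>
      nlinarith [sq_nonneg (t - ‖x‖ ^ 2)]
  · intro t ht t' ht'
    have ht0 : 0 ≤ t := ht
    have ht0' : 0 ≤ t' := ht'
    have e : -(max (R ^ 2 - t) 0) ^ 2 - -(max (R ^ 2 - t') 0) ^ 2 =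
      (max (R ^ 2 - t') 0 + max (R ^ 2 - t) 0) * (max (R ^ 2 - t') 0 - max (R ^ 2 - t) 0) := by ring
    rw [e, abs_mul, abs_of_nonneg (by positivity)]
    have h1 : max (R ^ 2 - t) 0 ≤ R ^ 2 := max_le (by linarith) (by positivity)
    have h2 : max (R ^ 2 - t') 0 ≤ R ^ 2 := max_le (by linarith) (by positivity)
    have h3 := abs_max_sub_max_le_abs (R ^ 2 - t') (R ^ 2 - t) 0
    have e2 : R ^ 2 - t' - (R ^ 2 - t) = t - t' := by ring
    rw [e2] at h3
    apply mul_le_mul _ h3 (abs_nonneg _) (by positivity)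
    linarith

/-- A one-sided second order Taylor bound for `(1 - e)^{-q}`. -/
lemma taylor_inv_pow (q : ℕ) : ∃ C : ℝ, 0 ≤ C ∧ ∀ e : ℝ, |e| ≤ 1 / 2 →
    ((1 - e) ^ q)⁻¹ ≤ 1 + q * e + C * e ^ 2 := by
  induction q with
  | zero => exact ⟨0, le_rfl, fun e _ => by simp⟩
  | succ q ih =>
    obtain ⟨C, hC, h⟩ := ih
    refine ⟨2 * (q + 1 + C), by positivity, fun e he => ?_⟩
    have h1 := h e he
    have he' := abs_le.1 he
    have hpos : 0 < 1 - e := by linarith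
    rw [pow_succ, mul_inv]
    rw [← div_eq_mul_inv, div_le_iff₀ hpos]
    refine h1.trans ?_
    push_cast
    have : 0 ≤ (1 - 2 * e) * (((q : ℝ) + 1 + C) * e ^ 2) :=
      mul_nonneg (by linarith) (by positivity)
    nlinarith

/-- Second differences of the upper barrier over the four points `x ± z`, `x ± z_*`, for `z` well
inside the distance to the sphere. Averaging over the reflected pairs is what keeps the factor `x₁`
in the bound. -/
lemma psiB_four (n : ℕ) [NeZero n] {R : ℝ} (hR : 0 < R) : ∃ C > 0, ∀ θ : ℝ, 0 < θ → θ ≤ 1 / (6 * R) →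
    ∀ x : Euc n, 0 < x 0 → ‖x‖ < R → ∀ z : Euc n, ‖z‖ < θ * (R ^ 2 - ‖x‖ ^ 2) →
    (R ^ 2 - ‖x‖ ^ 2) / 2 ≤ R ^ 2 - ‖x + z‖ ^ 2 ∧
    psiB n R (x + z) + psiB n R (x - z) + psiB n R (x + reflFirst n z) +
      psiB n R (x - reflFirst n z) - 4 * psiB n R x ≤
      4 * (C * x 0 * ((R ^ 2 - ‖x‖ ^ 2) ^ (n + 4))⁻¹) * ‖z‖ ^ 2 := by
  obtain ⟨Cq, hCq, htay⟩ := taylor_inv_pow (n + 2)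
  refine ⟨(n + 2) * R ^ 2 + 9 * Cq * R ^ 2 + 2 * ((n + 2) * 2 ^ (n + 3)) * R ^ 2, by positivity, ?_⟩
  intro θ hθ hθR x hx hxR z hz
  set d := R ^ 2 - ‖x‖ ^ 2 with hd
  have hd0 : 0 < d := by rw [hd]; nlinarith [norm_nonneg x]
  have hdR : d ≤ R ^ 2 := by rw [hd]; nlinarith [norm_nonneg x]
  have hzd : 6 * R * ‖z‖ ≤ d := by
    have : ‖z‖ ≤ 1 / (6 * R) * d := hz.le.trans (by gcongr)
    calc _ ≤ 6 * R * (1 / (6 * R) * d) := by gcongr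
      _ = d := by field_simp
  have hzR : ‖z‖ ≤ R := by nlinarith [norm_nonneg z]
  have hT : ∀ w : Euc n, ‖w‖ = ‖z‖ → |‖x + w‖ ^ 2 - ‖x‖ ^ 2| ≤ 3 * R * ‖z‖ := by
    intro w hw
    have h1 := abs_norm_sub_norm_le (x + w) x
    rw [add_sub_cancel_left, hw] at h1
    have h2 : ‖x + w‖ ≤ 2 * R := by
      have := norm_add_le x w; rw [hw] at this; linarith
    have e : ‖x + w‖ ^ 2 - ‖x‖ ^ 2 = (‖x + w‖ + ‖x‖) * (‖x + w‖ - ‖x‖) := by ring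
    rw [e, abs_mul, abs_of_nonneg (by positivity)]
    apply mul_le_mul _ h1 (abs_nonneg _) (by positivity)
    linarith
  have hI : ∀ w : Euc n, ‖w‖ = ‖z‖ → ‖x + w‖ ^ 2 ∈ {t : ℝ | d / 2 ≤ R ^ 2 - t} := by
    intro w hw
    have := (abs_le.1 (hT w hw)).2
    simp only [Set.mem_ofPred_eq]
    linarith
  refine ⟨hI z rfl, ?_⟩
  have key := four_point (h := fun t => ((R ^ 2 - t) ^ (n + 2))⁻¹) (x := x) (z := z) hx
    (I := {t : ℝ | d / 2 ≤ R ^ 2 - t}) (l := (n + 2) * (d ^ (n + 3))⁻¹)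
    (Q := 9 * Cq * R ^ 2 * (d ^ (n + 4))⁻¹) (L := (n + 2) * (2 / d) ^ (n + 3))
    hI ?_ (by positivity) ?_
  · have h3 : ((n + 2) * (d ^ (n + 3))⁻¹ + 9 * Cq * R ^ 2 * (d ^ (n + 4))⁻¹ +
        2 * ((n + 2) * (2 / d) ^ (n + 3))) ≤ ((n + 2) * R ^ 2 + 9 * Cq * R ^ 2 +
        2 * ((n + 2) * 2 ^ (n + 3)) * R ^ 2) * (d ^ (n + 4))⁻¹ := by
      have e1 : (d ^ (n + 3))⁻¹ = d * (d ^ (n + 4))⁻¹ := by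
        rw [pow_succ d (n + 3)]; field_simp
      have e2 : (2 / d) ^ (n + 3) = 2 ^ (n + 3) * (d * (d ^ (n + 4))⁻¹) := by
        rw [div_pow, ← e1]; rfl
      rw [e2, e1]
      have h4 : d * (d ^ (n + 4))⁻¹ ≤ R ^ 2 * (d ^ (n + 4))⁻¹ := by gcongr
      calc _ ≤ (n + 2) * (R ^ 2 * (d ^ (n + 4))⁻¹) + 9 * Cq * R ^ 2 * (d ^ (n + 4))⁻¹ +
        2 * ((n + 2) * (2 ^ (n + 3) * (R ^ 2 * (d ^ (n + 4))⁻¹))) := by gcongr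
        _ = _ := by ring
    calc _ ≤ _ := key
      _ ≤ _ := by
        have := mul_le_mul_of_nonneg_right h3 hx.le
        apply mul_le_mul_of_nonneg_right _ (sq_nonneg _)
        linarith
  · intro w hw
    have h1 := hT w hw
    generalize ‖x + w‖ ^ 2 = t at h1
    have h2 : |(t - ‖x‖ ^ 2) / d| ≤ 1 / 2 := by
      rw [abs_div, abs_of_pos hd0, div_le_iff₀ hd0]; linarith
    have h3 := htay _ h2
    have e1 : R ^ 2 - t = d * (1 - (t - ‖x‖ ^ 2) / d) := by
      have : d * ((t - ‖x‖ ^ 2) / d) = t - ‖x‖ ^ 2 := by field_simp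
      rw [mul_sub, this, hd]; ring
    have h4 : ((t - ‖x‖ ^ 2) / d) ^ 2 ≤ 9 * R ^ 2 * ‖z‖ ^ 2 / d ^ 2 := by
      rw [div_pow]
      gcongr
      rw [← sq_abs]
      calc _ ≤ (3 * R * ‖z‖) ^ 2 := by gcongr
        _ = _ := by ring
    rw [e1, mul_pow, mul_inv, ← hd]
    have h5 : (0 : ℝ) < (d ^ (n + 2))⁻¹ := by positivity
    calc _ ≤ (d ^ (n + 2))⁻¹ * (1 + (n + 2 : ℕ) * ((t - ‖x‖ ^ 2) / d) +
          Cq * (9 * R ^ 2 * ‖z‖ ^ 2 / d ^ 2)) := by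
          apply mul_le_mul_of_nonneg_left _ h5.le
          refine h3.trans ?_
          gcongr
      _ = _ := by
        push_cast
        rw [pow_succ d (n + 3), pow_succ d (n + 2)]
        field_simp
  · intro t ht t' ht'
    simp only [Set.mem_ofPred_eq] at ht ht'
    have p1 : 0 < R ^ 2 - t := by linarith
    have p2 : 0 < R ^ 2 - t' := by linarith
    rw [← inv_pow, ← inv_pow]
    have b1 : (R ^ 2 - t)⁻¹ ≤ 2 / d := by
      rw [inv_le_comm₀ p1 (by positivity), inv_div]; exact ht
    have b2 : (R ^ 2 - t')⁻¹ ≤ 2 / d := by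
      rw [inv_le_comm₀ p2 (by positivity), inv_div]; exact ht'
    have h1 := abs_pow_sub_pow_le (R ^ 2 - t)⁻¹ (R ^ 2 - t')⁻¹ (n + 2)
    have h2 : |(R ^ 2 - t)⁻¹ - (R ^ 2 - t')⁻¹| ≤ (2 / d) ^ 2 * |t - t'| := by
      have e : (R ^ 2 - t)⁻¹ - (R ^ 2 - t')⁻¹ = (R ^ 2 - t)⁻¹ * (R ^ 2 - t')⁻¹ * (t - t') := by
        field_simp; ring
      rw [e, abs_mul, abs_of_pos (by positivity), sq (2 / d)]
      gcongr
    have h3 : max |(R ^ 2 - t)⁻¹| |(R ^ 2 - t')⁻¹| ≤ 2 / d := by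
      rw [abs_of_pos (by positivity), abs_of_pos (by positivity)]; exact max_le b1 b2
    have h4 : max |(R ^ 2 - t)⁻¹| |(R ^ 2 - t')⁻¹| ^ (n + 2 - 1) ≤ (2 / d) ^ (n + 2 - 1) :=
      pow_le_pow_left₀ (le_max_of_le_left (abs_nonneg _)) h3 _
    calc _ ≤ _ := h1
      _ ≤ ((2 / d) ^ 2 * |t - t'|) * (n + 2 : ℕ) * (2 / d) ^ (n + 2 - 1) := by gcongr
      _ = _ := by
        have : n + 2 - 1 = n + 1 := rfl
        rw [this]
        push_cast; ring

end Barrier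

section Oper
variable {n : ℕ} [NeZero n] {s : ℝ}

/-! ### The truncated operator -/

/-- The truncated operator, divided by `c_{n,s}`: the zeroth order coefficient is written as an
integral of the kernel over the complement of the half space. -/
def truncOp (n : ℕ) [NeZero n] (s : ℝ) (u : Euc n → ℝ) (x : Euc n) (ε : ℝ) : ℝ :=
  (∫ y in halfSpace n \ ball x ε, aKernel n s x y * (u x - u y)) +
    2 * u x * ∫ y in (halfSpace n)ᶜ, ‖x - y‖ ^ (-((n : ℝ) + 2 * s))

lemma truncOp_tendsto (hs : s ∈ Set.Ioo (0 : ℝ) 1) {u : Euc n → ℝ} {x : Euc n} (hx : 0 < x 0)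
    {L : ℝ} (h : HasAntiFracLap n s u x L) :
    Tendsto (truncOp n s u x) (𝓝[>] 0) (𝓝 (L / cns n s)) := by
  have hc : 0 < cns n s := cns_pos hs
  have h2 := Filter.Tendsto.div_const h (cns n s)
  refine h2.congr fun ε => ?_
  have hz := zero_order_const (n := n) hs hx
  have e : cns 1 s / s * u x * x 0 ^ (-(2 * s)) = u x * (cns 1 s / s * x 0 ^ (-(2 * s))) := by ring
  rw [e, hz, truncOp]
  field_simp

/-- The singular part of the antisymmetric kernel. -/
def kerF (n : ℕ) [NeZero n] (s r : ℝ) (x y : Euc n) : ℝ :=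
  fcut n s r (x - y) - fcut n s r (reflFirst n x - y)

/-- The bounded part of the antisymmetric kernel. -/
def kerG (n : ℕ) [NeZero n] (s r : ℝ) (x y : Euc n) : ℝ :=
  kcut n s r (x - y) - kcut n s r (reflFirst n x - y)

lemma kerF_meas {r : ℝ} {x : Euc n} : Measurable (kerF n s r x) := by
  unfold kerF; fun_prop

lemma kerG_meas {r : ℝ} {x : Euc n} : Measurable (kerG n s r x) := by
  unfold kerG; fun_prop

lemma aKernel_split (hs : 0 < s) {r : ℝ} {x y : Euc n} (hx : 0 < x 0) (hy : 0 < y 0)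
    (hyx : y ≠ x) : aKernel n s x y = kerF n s r x y + kerG n s r x y := by
  have h1 : x - y ≠ 0 := sub_ne_zero.2 hyx.symm
  have h2 : reflFirst n x - y ≠ 0 := by
    intro h
    have := refl_norm_ge hx hy
    rw [h, norm_zero] at this
    linarith
  rw [aKernel, fcut_add_kcut (r := r) hs h1, fcut_add_kcut (r := r) hs h2, kerF, kerG]
  ring

lemma kerF_out {r : ℝ} {x y : Euc n} (hx : 0 < x 0) (hy : 0 < y 0)
    (h : y ∉ ball x r) : kerF n s r x y = 0 := by
  rw [mem_ball, dist_comm, dist_eq_norm] at h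
  have h1 := norm_sub_le_refl hx hy
  rw [kerF, fcut_eq_zero (not_lt.1 h), fcut_eq_zero ((not_lt.1 h).trans h1), sub_zero]

lemma ne_of_notMem_ball {x y : Euc n} {ε : ℝ} (hε : 0 < ε) (h : y ∉ ball x ε) : y ≠ x := by
  rintro rfl; exact h (mem_ball_self hε)

lemma kerF_nonneg (hs : 0 < s) {r : ℝ} {x y : Euc n} (hx : 0 < x 0) (hy : 0 < y 0)
    (hyx : y ≠ x) : 0 ≤ kerF n s r x y := fdiff_nonneg hs hx hy hyx

lemma kerF_le (hs : 0 < s) {r ε : ℝ} (hε : 0 < ε) {x y : Euc n} (hx : 0 < x 0) (hy : 0 < y 0)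
    (h : y ∉ ball x ε) : |kerF n s r x y| ≤ ε ^ (-((n : ℝ) + 2 * s)) := by
  rw [abs_of_nonneg (kerF_nonneg hs hx hy (ne_of_notMem_ball hε h))]
  rw [mem_ball, dist_comm, dist_eq_norm] at h
  have h1 := fcut_le_of_le (r := r) hs hε (not_lt.1 h)
  have h2 := fcut_nonneg (s := s) (r := r) (reflFirst n x - y)
  rw [kerF]; linarith

lemma int_F (hs : 0 < s) {r ε : ℝ} (hε : 0 < ε) {x : Euc n} (hx : 0 < x 0) {g : Euc n → ℝ}
    (hg : LocallyIntegrable g) :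
    IntegrableOn (fun y => kerF n s r x y * g y) (halfSpace n \ ball x ε) := by
  have hm : MeasurableSet (halfSpace n \ ball x ε) := meas_half.diff measurableSet_ball
  have h1 : Integrable ((ball x r).indicator fun y => ε ^ (-((n : ℝ) + 2 * s)) * |g y|)
      (volume.restrict (halfSpace n \ ball x ε)) := by
    have h2 : IntegrableOn g (ball x r) :=
      (hg.integrableOn_isCompact (isCompact_closedBall x r)).mono_set ball_subset_closedBall
    exact ((integrable_indicator_iff measurableSet_ball).2 (h2.abs.const_mul _)).restrict
  refine h1.mono' (kerF_meas.aestronglyMeasurable.mul hg.aestronglyMeasurable.restrict) ?_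
  filter_upwards [ae_restrict_mem hm] with y hy
  by_cases hb : y ∈ ball x r
  · rw [Set.indicator_of_mem hb, Real.norm_eq_abs, abs_mul]
    exact mul_le_mul_of_nonneg_right (kerF_le hs hε hx hy.1 hy.2) (abs_nonneg _)
  · rw [Set.indicator_of_notMem hb, kerF_out hx hy.1 hb]; simp

lemma kerG_nonneg (hs : 0 < s) {r : ℝ} (hr : 0 < r) {x y : Euc n} (hx : 0 < x 0) (hy : 0 < y 0) :
    0 ≤ kerG n s r x y := kdiff_nonneg hs hr hx hy

lemma int_G (hs : 0 < s) {r : ℝ} (hr : 0 < r) {x : Euc n} (hx : 0 < x 0) {u : Euc n → ℝ}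
    (hu : MemA n s u) : IntegrableOn (fun y => kerG n s r x y * u y) (halfSpace n) := by
  obtain ⟨C, hC, h⟩ := kdiff_upper (n := n) hs (R := max ‖x‖ r) (lt_max_of_lt_right hr)
  refine (hu.2.2.const_mul (C * r ^ (-((n : ℝ) + 2 * s + 2)) * x 0)).mono'
    (kerG_meas.aestronglyMeasurable.mul hu.2.1.aestronglyMeasurable.restrict) ?_
  filter_upwards [ae_restrict_mem meas_half] with y hy
  rw [Real.norm_eq_abs, abs_mul, abs_of_nonneg (kerG_nonneg hs hr hx hy)]
  have := mul_le_mul_of_nonneg_right (h r hr (le_max_right _ _) x y hx (le_max_left _ _) hy)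
    (abs_nonneg (u y))
  refine this.trans (le_of_eq ?_)
  ring

lemma int_G_one (hs : 0 < s) {r : ℝ} (hr : 0 < r) (x : Euc n) : Integrable (kerG n s r x) :=
  (kcut_sub_int hs hr x).sub (kcut_sub_int hs hr (reflFirst n x))

lemma trunc_split (hs : 0 < s) {r ε : ℝ} (hr : 0 < r) (hε : 0 < ε) {x : Euc n} (hx : 0 < x 0)
    {u : Euc n → ℝ} (hu : MemA n s u) :
    IntegrableOn (fun y => aKernel n s x y * (u x - u y)) (halfSpace n \ ball x ε) ∧
    truncOp n s u x ε = ((∫ y in halfSpace n \ ball x ε, kerF n s r x y * (u x - u y)) +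
      2 * u x * ∫ y in (halfSpace n)ᶜ, fcut n s r (x - y)) +
      u x * ((∫ y in halfSpace n \ ball x ε, kerG n s r x y) +
        2 * ∫ y in (halfSpace n)ᶜ, kcut n s r (x - y)) -
      ∫ y in halfSpace n \ ball x ε, kerG n s r x y * u y := by
  have hm : MeasurableSet (halfSpace n \ ball x ε) := meas_half.diff measurableSet_ball
  have hF := int_F hs (r := r) hε hx (g := fun y => u x - u y)
    ((locallyIntegrable_const _).sub hu.2.1)
  have hG := (int_G hs hr hx hu).mono_set (Set.sdiff_subset (s := halfSpace n) (t := ball x ε))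
  have hG1 : IntegrableOn (fun y => u x * kerG n s r x y) (halfSpace n \ ball x ε) :=
    ((int_G_one hs hr x).const_mul _).integrableOn
  have hcong : Set.EqOn (fun y => aKernel n s x y * (u x - u y))
      (fun y => kerF n s r x y * (u x - u y) + (u x * kerG n s r x y - kerG n s r x y * u y))
      (halfSpace n \ ball x ε) := by
    intro y hy
    simp only
    rw [aKernel_split hs (r := r) hx hy.1 (ne_of_notMem_ball hε hy.2)]; ring
  have hGG : IntegrableOn (fun y => u x * kerG n s r x y - kerG n s r x y * u y)
    (halfSpace n \ ball x ε) := hG1.sub hG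
  refine ⟨(integrableOn_congr_fun hcong hm).2 (hF.add hGG), ?_⟩
  have hf : IntegrableOn (fun y => fcut n s r (x - y)) (halfSpace n)ᶜ := by
    refine (integrableOn_compl_kernel hs hx).mono'
      (fcut_meas.comp (measurable_const.sub measurable_id)).aestronglyMeasurable
      (ae_of_all _ fun y => ?_)
    rw [Real.norm_of_nonneg (fcut_nonneg _)]
    exact fcut_le_rpow _
  have hz : ∫ y in (halfSpace n)ᶜ, ‖x - y‖ ^ (-((n : ℝ) + 2 * s)) =
      (∫ y in (halfSpace n)ᶜ, fcut n s r (x - y)) + ∫ y in (halfSpace n)ᶜ, kcut n s r (x - y) := by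
    rw [← integral_add hf (kcut_sub_int hs hr x).integrableOn]
    refine setIntegral_congr_fun meas_half.compl fun y hy => ?_
    refine fcut_add_kcut hs fun h => ?_
    have := norm_ge_of_compl (x := x) hy
    rw [h, norm_zero] at this
    linarith
  rw [truncOp, setIntegral_congr_fun hm hcong, integral_add hF hGG, integral_sub hG1 hG,
    integral_const_mul, hz]
  ring

lemma phiB_memA {R : ℝ} (hR : 0 < R) : MemA n s (phiB n R) := by
  refine ⟨phiB_anti, phiB_cont.locallyIntegrable, ?_⟩
  refine integrableOn_of_bdd_ball meas_half ?_ (x := 0) (r := R) (C := R * R ^ 5) ?_ ?_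
  · have := (phiB_cont (n := n) (R := R)).measurable
    fun_prop
  · intro y hy hyb
    have hy' : ‖y‖ < R := by simpa using hyb
    have h1 : (1 : ℝ) ≤ 1 + ‖y‖ ^ ((n : ℝ) + 2 * s + 2) := by
      have : 0 ≤ ‖y‖ ^ ((n : ℝ) + 2 * s + 2) := by positivity
      linarith
    rw [abs_div, abs_of_pos (by linarith : 0 < 1 + ‖y‖ ^ ((n : ℝ) + 2 * s + 2)), abs_mul, abs_abs]
    refine (div_le_self (by positivity) h1).trans ?_
    exact mul_le_mul ((abs_coord_le y).trans hy'.le) (phiB_abs_le hR y) (abs_nonneg _) hR.le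
  · intro y hy hyb
    have hy' : R ≤ ‖y‖ := by simpa using hyb
    simp [phiB_out hR hy']

/-! ### The bound from below -/

lemma anti_zero {u : Euc n → ℝ} (hu : AntiSymmFn n u) {x : Euc n} (hx : x 0 = 0) : u x = 0 := by
  have h := hu x
  have : reflFirst n x = x := by simp [reflFirst, hx]
  rw [this] at h; linarith

/-- The touching argument from below: at a negative minimum `x` of `u - τ φ`, the equation forces
`τ` to be at least a fixed multiple of the norm of `u`. -/
lemma lower_touch (hs : s ∈ Set.Ioo (0 : ℝ) 1) {R K : ℝ} (hR : 0 < R) (hK : 0 ≤ K) :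
    ∃ C > 0, ∀ (u : Euc n → ℝ) (x : Euc n) (c τ : ℝ), MemA n s u → (∀ y ∈ halfSpace n, 0 ≤ u y) →
      0 < x 0 → ‖x‖ < R → |c| ≤ K → HasAntiFracLap n s u x (-(c * u x)) → 0 ≤ τ →
      u x < τ * phiB n R x →
      (∀ y ∈ halfSpace n, u x - τ * phiB n R x ≤ u y - τ * phiB n R y) →
      ANorm n s u ≤ C * τ := by
  have hs0 := hs.1
  obtain ⟨c₀, hc₀, hker⟩ := kernel_lower (n := n) hs0 hR
  have hcn : 0 < cns n s := cns_pos hs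
  obtain ⟨Cm, hCm, hmom⟩ := second_moment (n := n) hs
  set I := ∫ z : Euc n, fcut n s 1 z * ‖z‖ ^ 2 with hI
  have hI0 : 0 ≤ I := integral_nonneg fun z => mul_nonneg (fcut_nonneg z) (by positivity)
  set m := ∫ z : Euc n, kcut n s 1 z with hm
  have hm0 : 0 ≤ m := integral_nonneg fun z => kcut_nonneg z
  set Aφ := ANorm n s (phiB n R) with hAφ
  have hAφ0 : 0 ≤ Aφ := by
    rw [hAφ, ANorm]
    refine setIntegral_nonneg meas_half fun y hy => ?_
    have : 0 < y 0 := hy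
    positivity
  refine ⟨(K * R ^ 4 / cns n s + 6 * R ^ 2 * I + 1 + 2 * R ^ 4 * m + c₀ * Aφ) / c₀,
    by positivity, ?_⟩
  intro u x c τ hu hpos hx hxR hcK hlap hτ hlt hmin
  have hφA := phiB_memA (n := n) (s := s) hR
  have hux : 0 ≤ u x := hpos x hx
  have hφx : phiB n R x ≤ R ^ 4 * x 0 := phiB_le hx.le
  -- `P` is the pointwise lower bound for the kernel
  let P : Euc n → ℝ := fun y => c₀ * x 0 * (y 0 / (1 + ‖y‖ ^ ((n : ℝ) + 2 * s + 2)))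
  have hP0 : ∀ y ∈ halfSpace n, 0 ≤ P y := by
    intro y hy
    have : 0 < y 0 := hy
    simp only [P]; positivity
  have hPw : ∀ w : Euc n → ℝ, MemA n s w → (∀ y ∈ halfSpace n, 0 ≤ w y) →
      IntegrableOn (fun y => P y * w y) (halfSpace n) ∧
      ∫ y in halfSpace n, P y * w y = c₀ * x 0 * ANorm n s w := by
    intro w hw hw0
    have hc : Set.EqOn (fun y => P y * w y) (fun y => c₀ * x 0 *
        (y 0 * |w y| / (1 + ‖y‖ ^ ((n : ℝ) + 2 * s + 2)))) (halfSpace n) := by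
      intro y hy
      simp only [P]
      rw [abs_of_nonneg (hw0 y hy)]; ring
    refine ⟨(integrableOn_congr_fun hc meas_half).2 (hw.2.2.const_mul _), ?_⟩
    rw [setIntegral_congr_fun meas_half hc, integral_const_mul, ANorm]
  obtain ⟨hPu, hPu'⟩ := hPw u hu hpos
  obtain ⟨hPφ, hPφ'⟩ := hPw _ hφA (fun y hy => phiB_nonneg (le_of_lt hy))
  have hev := sing_lower hs hx one_pos (ψ := fun y => -phiB n R y) (s := s)
    (fun y => by simp only [phiB_anti y]) (phiB_cont.measurable.neg) (Bd := R ^ 5)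
    (fun y _ => by rw [abs_neg]; exact phiB_abs_le hR y) (M := 6 * R ^ 2 * x 0) (by positivity)
    (fun z _ => phiB_four hx hxR z) (η := x 0) hx
  rw [← hI] at hev
  have hbound : ∀ᶠ ε in 𝓝[>] (0 : ℝ), truncOp n s u x ε ≤
      τ * (6 * R ^ 2 * x 0 * I + x 0 + 2 * (R ^ 4 * x 0) * m) + τ * (c₀ * x 0 * Aφ) -
      ∫ y in halfSpace n \ ball x ε, P y * u y := by
    filter_upwards [hev, self_mem_nhdsWithin] with ε hε hε0
    have hε0' : 0 < ε := hε0
    have hms : MeasurableSet (halfSpace n \ ball x ε) := meas_half.diff measurableSet_ball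
    obtain ⟨hiu, -⟩ := trunc_split hs0 one_pos hε0' hx hu
    obtain ⟨hiφ, hDφ⟩ := trunc_split hs0 one_pos hε0' hx hφA
    have hsub : halfSpace n \ ball x ε ⊆ halfSpace n := Set.sdiff_subset
    have hPu1 := hPu.mono_set hsub
    have hPφ1 := hPφ.mono_set hsub
    have hi1 : IntegrableOn (fun y => τ * (aKernel n s x y * (phiB n R x - phiB n R y)) +
        τ * (P y * phiB n R y)) (halfSpace n \ ball x ε) :=
      (hiφ.const_mul τ).add (hPφ1.const_mul τ)
    have hmono : ∫ y in halfSpace n \ ball x ε, aKernel n s x y * (u x - u y) ≤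
        ∫ y in halfSpace n \ ball x ε, ((τ * (aKernel n s x y * (phiB n R x - phiB n R y)) +
          τ * (P y * phiB n R y)) - P y * u y) := by
      refine setIntegral_mono_on hiu (hi1.sub hPu1) hms fun y hy => ?_
      have h1 := hker x y hx hxR.le hy.1 (ne_of_notMem_ball hε0' hy.2)
      have h2 := hmin y hy.1
      have h3 := hP0 y hy.1
      have h4 : P y * (u y - τ * phiB n R y) ≤ P y * ((u y - τ * phiB n R y) -
        (u x - τ * phiB n R x)) := mul_le_mul_of_nonneg_left (by linarith) h3
      have h5 : P y * ((u y - τ * phiB n R y) - (u x - τ * phiB n R x)) ≤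
        aKernel n s x y * ((u y - τ * phiB n R y) - (u x - τ * phiB n R x)) :=
        mul_le_mul_of_nonneg_right h1 (by linarith)
      nlinarith
    rw [integral_sub hi1 hPu1, integral_add (hiφ.const_mul τ) (hPφ1.const_mul τ),
      integral_const_mul, integral_const_mul] at hmono
    have hZ : 0 ≤ ∫ y in (halfSpace n)ᶜ, ‖x - y‖ ^ (-((n : ℝ) + 2 * s)) :=
      integral_nonneg fun y => by positivity
    have h6 : ∫ y in halfSpace n \ ball x ε, P y * phiB n R y ≤ c₀ * x 0 * Aφ := by
      rw [← hPφ']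
      refine setIntegral_mono_set hPφ ?_ hsub.eventuallyLE
      filter_upwards [ae_restrict_mem meas_half] with y hy
      exact mul_nonneg (hP0 y hy) (phiB_nonneg (le_of_lt hy))
    have h7 : truncOp n s u x ε ≤ τ * truncOp n s (phiB n R) x ε + τ * (c₀ * x 0 * Aφ) -
        ∫ y in halfSpace n \ ball x ε, P y * u y := by
      have h8 := mul_le_mul_of_nonneg_right hlt.le hZ
      have h9 := mul_le_mul_of_nonneg_left h6 hτ
      rw [truncOp, truncOp]
      nlinarith
    have h10 : truncOp n s (phiB n R) x ε ≤ 6 * R ^ 2 * x 0 * I + x 0 + 2 * (R ^ 4 * x 0) * m := by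
      have h11 : 0 ≤ ∫ y in halfSpace n \ ball x ε, kerG n s 1 x y * phiB n R y :=
        setIntegral_nonneg hms fun y hy =>
          mul_nonneg (kerG_nonneg hs0 one_pos hx hy.1) (phiB_nonneg (le_of_lt hy.1))
      have h12 := mass_upper (x := x) hs0 one_pos ε
      have h13 := mul_le_mul_of_nonneg_left h12 (phiB_nonneg (R := R) hx.le)
      have h14 : phiB n R x * (2 * m) ≤ (R ^ 4 * x 0) * (2 * m) :=
        mul_le_mul_of_nonneg_right hφx (by positivity)
      have h15 : (∫ y in halfSpace n \ ball x ε, (fcut n s 1 (x - y) -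
          fcut n s 1 (reflFirst n x - y)) * (-phiB n R x - -phiB n R y)) =
          -∫ y in halfSpace n \ ball x ε, kerF n s 1 x y * (phiB n R x - phiB n R y) := by
        rw [← integral_neg]
        congr 1; ext y; simp only [kerF]; ring
      rw [h15] at hε
      rw [hDφ]
      simp only [kerG] at h11 h13 ⊢
      rw [← hm] at h13
      linarith
    have h16 := mul_le_mul_of_nonneg_left h10 hτ
    linarith
  have hlim := (tendsto_const_nhds (x := τ * (6 * R ^ 2 * x 0 * I + x 0 + 2 * (R ^ 4 * x 0) * m) +
    τ * (c₀ * x 0 * Aφ))).sub (tendsto_diff_ball hPu x)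
  have hfin := le_of_tendsto_of_tendsto (truncOp_tendsto hs hx hlap) hlim hbound
  rw [hPu'] at hfin
  have h17 : -(K * (τ * (R ^ 4 * x 0))) / cns n s ≤ -(c * u x) / cns n s := by
    refine div_le_div_of_nonneg_right (neg_le_neg ?_) hcn.le
    have h18 : u x ≤ τ * (R ^ 4 * x 0) := hlt.le.trans (mul_le_mul_of_nonneg_left hφx hτ)
    calc c * u x ≤ |c| * u x := mul_le_mul_of_nonneg_right (le_abs_self c) hux
      _ ≤ K * (τ * (R ^ 4 * x 0)) := mul_le_mul hcK h18 hux hK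
  have h19 : x 0 * (c₀ * ANorm n s u) ≤
      x 0 * ((K * R ^ 4 / cns n s + 6 * R ^ 2 * I + 1 + 2 * R ^ 4 * m + c₀ * Aφ) * τ) := by
    have e : -(K * (τ * (R ^ 4 * x 0))) / cns n s = -(x 0 * τ * (K * R ^ 4 / cns n s)) := by
      field_simp
    rw [e] at h17
    nlinarith
  have h20 := le_of_mul_le_mul_left h19 hx
  rw [div_mul_eq_mul_div, le_div_iff₀ hc₀]
  linarith

lemma lower_bound (hs : s ∈ Set.Ioo (0 : ℝ) 1) {R K : ℝ} (hR : 0 < R) (hK : 0 ≤ K) :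
    ∃ C > 0, ∀ u : Euc n → ℝ, MemA n s u → ContinuousOn u (closedBall 0 R) →
      (∀ y ∈ halfSpace n, 0 ≤ u y) →
      (∀ x ∈ ball (0 : Euc n) R ∩ halfSpace n, ∃ c, |c| ≤ K ∧
        HasAntiFracLap n s u x (-(c * u x))) →
      ∀ x ∈ halfSpace n, ANorm n s u * phiB n R x ≤ C * u x := by
  obtain ⟨C, hC, h⟩ := lower_touch (n := n) hs hR hK
  refine ⟨2 * C, by positivity, ?_⟩
  intro u hu hcont hpos hlap x hx
  have hx0 : 0 < x 0 := hx
  rcases le_or_gt (ANorm n s u) 0 with hA | hA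
  · have h1 := hpos x hx
    have h2 := phiB_nonneg (R := R) hx0.le
    have h3 : ANorm n s u * phiB n R x ≤ 0 := mul_nonpos_of_nonpos_of_nonneg hA h2
    have h4 : 0 ≤ 2 * C * u x := by positivity
    linarith
  set τ := ANorm n s u / (2 * C) with hτ
  have hτ0 : 0 < τ := by positivity
  by_contra! hlt
  have hneg : u x < τ * phiB n R x := by
    rw [hτ, div_mul_eq_mul_div, lt_div_iff₀ (by positivity)]; linarith
  let S : Set (Euc n) := closedBall 0 R ∩ {y | 0 ≤ y 0}
  have hScl : IsClosed {y : Euc n | 0 ≤ y 0} := isClosed_le continuous_const (by fun_prop)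
  have hS : IsCompact S := (isCompact_closedBall _ _).inter_right hScl
  have hxR : ‖x‖ < R := by
    by_contra! hge
    rw [phiB_out hR hge, mul_zero] at hneg
    exact absurd (hpos x hx) (not_le.2 hneg)
  have hxS : x ∈ S := ⟨by simpa using hxR.le, hx0.le⟩
  obtain ⟨y, hyS, hymin⟩ := hS.exists_isMinOn ⟨x, hxS⟩
    (f := fun y => u y - τ * phiB n R y)
    ((hcont.mono Set.inter_subset_left).sub (continuousOn_const.mul phiB_cont.continuousOn))
  have hyx : u y - τ * phiB n R y ≤ u x - τ * phiB n R x := hymin hxS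
  have hyneg : u y < τ * phiB n R y := by linarith
  have hy0 : 0 < y 0 := by
    rcases lt_or_eq_of_le (show 0 ≤ y 0 from hyS.2) with h1 | h1
    · exact h1
    · rw [anti_zero hu.1 h1.symm, anti_zero phiB_anti h1.symm] at hyneg
      simp at hyneg
  have hyR : ‖y‖ < R := by
    by_contra! hge
    rw [phiB_out hR hge, mul_zero] at hyneg
    exact absurd (hpos y hy0) (not_le.2 hyneg)
  obtain ⟨c, hc, hl⟩ := hlap y ⟨by simpa using hyR, hy0⟩
  have := h u y c τ hu hpos hy0 hyR hc hl hτ0.le hyneg ?_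
  · have e : C * τ = ANorm n s u / 2 := by rw [hτ]; field_simp
    linarith
  · intro z hz
    rcases le_or_gt ‖z‖ R with h1 | h1
    · exact hymin (show z ∈ S from ⟨by simpa using h1, show (0 : ℝ) ≤ z 0 from le_of_lt hz⟩)
    · rw [phiB_out hR h1.le, mul_zero, sub_zero]
      have := hpos z hz
      linarith

end Oper

section Upper
variable {n : ℕ} [NeZero n] {s : ℝ}

/-! ### The bound from above -/

lemma exists_theta {a b R ω : ℝ} (hs : 0 < s) (hR : 0 < R) (hω : 0 < ω) :
    ∃ θ > 0, θ ≤ 1 / (6 * R) ∧ a * θ ^ 2 + b * (θ * R ^ 2) ^ (2 * s) < ω := by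
  have hcont : Continuous fun θ : ℝ => a * θ ^ 2 + b * (θ * R ^ 2) ^ (2 * s) := by
    have : Continuous fun θ : ℝ => (θ * R ^ 2) ^ (2 * s) :=
      (Real.continuous_rpow_const (by positivity)).comp (by fun_prop)
    fun_prop
  have h0 := hcont.tendsto 0
  simp only [zero_mul, Real.zero_rpow (by positivity : 2 * s ≠ 0)] at h0
  norm_num at h0
  have h0' : Tendsto (fun θ : ℝ => a * θ ^ 2 + b * (θ * R ^ 2) ^ (2 * s)) (𝓝[>] 0) (𝓝 0) :=
    h0.mono_left nhdsWithin_le_nhds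
  have h1 := h0'.eventually (gt_mem_nhds hω)
  have h2 : ∀ᶠ θ in 𝓝[>] (0 : ℝ), θ < 1 / (6 * R) :=
    mem_nhdsWithin_of_mem_nhds (Iio_mem_nhds (by positivity))
  obtain ⟨θ, h3, h4, h5⟩ := (h1.and (h2.and self_mem_nhdsWithin)).exists
  exact ⟨θ, h5, h4.le, h3⟩

lemma ANorm_nonneg (u : Euc n → ℝ) : 0 ≤ ANorm n s u := by
  refine setIntegral_nonneg meas_half fun y hy => ?_
  have : 0 < y 0 := hy
  positivity

/-- The touching argument from above: at a positive maximum `x` of `u - τ ψ` in the half ball, the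
equation forces `τ` to be at most a fixed multiple of the norm of `u`. The kernel is split at
the scale `r = θ (R² - ‖x‖²)`, with `θ` small. -/
lemma upper_touch (hs : s ∈ Set.Ioo (0 : ℝ) 1) {R K : ℝ} (hR : 0 < R) (hK : 0 ≤ K) :
    ∃ C > 0, ∀ (u : Euc n → ℝ) (x : Euc n) (c τ : ℝ), MemA n s u → (∀ y ∈ halfSpace n, 0 ≤ u y) →
      0 < x 0 → ‖x‖ < R → |c| ≤ K → HasAntiFracLap n s u x (-(c * u x)) → 0 ≤ τ →
      τ * psiB n R x < u x →
      (∀ y ∈ ball (0 : Euc n) R ∩ halfSpace n, u y - τ * psiB n R y ≤ u x - τ * psiB n R x) →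
      τ ≤ C * ANorm n s u := by
  have hs0 := hs.1
  have hcn : 0 < cns n s := cns_pos hs
  obtain ⟨Ck, hCk, hker⟩ := kdiff_upper (n := n) hs0 hR
  obtain ⟨Cψ, hCψ, hfour⟩ := psiB_four n hR
  obtain ⟨Cm, hCm, hmom⟩ := second_moment (n := n) hs
  set ω := volume.real (ball (0 : Euc n) 1) with hω'
  have hω : 0 < ω :=
    ENNReal.toReal_pos (measure_ball_pos _ _ one_pos).ne' measure_ball_lt_top.ne
  obtain ⟨θ, hθ, hθR, hθω⟩ := exists_theta (s := s) (a := Cψ * Cm) (b := K / cns n s) hs0 hR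
    (show 0 < ω / 4 by positivity)
  refine ⟨Ck * (θ ^ (n + 2))⁻¹ / (ω / 8), by positivity, ?_⟩
  intro u x c τ hu hpos hx hxR hcK hlap hτ hlt hmax
  have hux : 0 ≤ u x := hpos x hx
  set d := R ^ 2 - ‖x‖ ^ 2 with hd
  have hd0 : 0 < d := by rw [hd]; nlinarith [norm_nonneg x]
  have hdR : d ≤ R ^ 2 := by rw [hd]; nlinarith [norm_nonneg x]
  set r := θ * d with hr
  have hr0 : 0 < r := by positivity
  have hrR2 : r ≤ θ * R ^ 2 := by rw [hr]; gcongr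
  have hrR : r ≤ R := by
    calc r ≤ 1 / (6 * R) * R ^ 2 := hrR2.trans (by gcongr)
      _ = R / 6 := by field_simp
      _ ≤ R := by linarith
  have hψx : psiB n R x = x 0 * (d ^ (n + 2))⁻¹ := rfl
  have hψx0 : 0 < psiB n R x := by rw [hψx]; positivity
  have hrs : 0 < r ^ (-(2 * s)) := by positivity
  have hball : ∀ y ∈ ball x r, d / 2 ≤ R ^ 2 - ‖y‖ ^ 2 := by
    intro y hy
    have h1 : ‖y - x‖ < θ * d := by rwa [mem_ball, dist_eq_norm] at hy
    have := (hfour θ hθ hθR x hx hxR (y - x) h1).1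
    rwa [add_sub_cancel] at this
  have hballR : ∀ y ∈ ball x r, ‖y‖ < R := by
    intro y hy
    have := hball y hy
    exact lt_of_pow_lt_pow_left₀ 2 hR.le (by linarith)
  have hψbd : ∀ y ∈ ball x r, |psiB n R y| ≤ R * ((d / 2) ^ (n + 2))⁻¹ := by
    intro y hy
    have h1 := hball y hy
    have h2 : 0 < R ^ 2 - ‖y‖ ^ 2 := by linarith
    rw [psiB, abs_mul, abs_of_pos (by positivity : 0 < ((R ^ 2 - ‖y‖ ^ 2) ^ (n + 2))⁻¹)]
    exact mul_le_mul ((abs_coord_le y).trans (hballR y hy).le) (by gcongr) (by positivity) hR.le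
  have hη : 0 < psiB n R x * (ω / 8 * r ^ (-(2 * s))) := by positivity
  have hev := sing_lower hs hx hr0 psiB_anti psiB_meas hψbd
    (M := Cψ * x 0 * (d ^ (n + 4))⁻¹) (by positivity)
    (fun z hz => (hfour θ hθ hθR x hx hxR z hz).2) hη
  have hbound : ∀ᶠ ε in 𝓝[>] (0 : ℝ),
      -(u x * (Cψ * Cm * θ ^ 2 * r ^ (-(2 * s)))) - u x * (ω / 8 * r ^ (-(2 * s))) +
      u x * (ω / 2 * r ^ (-(2 * s))) -
      Ck * r ^ (-((n : ℝ) + 2 * s + 2)) * x 0 * ANorm n s u ≤ truncOp n s u x ε := by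
    filter_upwards [hev, self_mem_nhdsWithin,
      mem_nhdsWithin_of_mem_nhds (Iio_mem_nhds (half_pos hr0))] with ε hε hε0 hεr
    have hε0' : 0 < ε := hε0
    have hεr' : ε < r / 2 := hεr
    have hms : MeasurableSet (halfSpace n \ ball x ε) := meas_half.diff measurableSet_ball
    have hsub : halfSpace n \ ball x ε ⊆ halfSpace n := Set.sdiff_subset
    rw [(trunc_split hs0 hr0 hε0' hx hu).2]
    -- the singular part is compared with that of the barrier
    have hFu := int_F hs0 (r := r) hε0' hx (g := fun y => u x - u y)
      ((locallyIntegrable_const _).sub hu.2.1)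
    have hFψ : IntegrableOn (fun y => kerF n s r x y * (psiB n R x - psiB n R y))
        (halfSpace n \ ball x ε) := by
      refine integrableOn_of_bdd_ball hms (kerF_meas.mul (measurable_const.sub psiB_meas))
        (x := x) (r := r)
        (C := ε ^ (-((n : ℝ) + 2 * s)) * (2 * (R * ((d / 2) ^ (n + 2))⁻¹))) ?_ ?_
      · intro y hy hyb
        rw [abs_mul]
        refine mul_le_mul (kerF_le hs0 hε0' hx hy.1 hy.2) ?_ (abs_nonneg _) (by positivity)
        have h1 := abs_sub (psiB n R x) (psiB n R y)
        have h2 := hψbd x (mem_ball_self hr0)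
        have h3 := hψbd y hyb
        linarith
      · intro y hy hyb
        rw [kerF_out hx hy.1 hyb, zero_mul]
    have h1 : τ * ∫ y in halfSpace n \ ball x ε, kerF n s r x y * (psiB n R x - psiB n R y) ≤
        ∫ y in halfSpace n \ ball x ε, kerF n s r x y * (u x - u y) := by
      rw [← integral_const_mul]
      refine setIntegral_mono_on (hFψ.const_mul τ) hFu hms fun y hy => ?_
      by_cases hyb : y ∈ ball x r
      · have h2 := hmax y ⟨by simpa using hballR y hyb, hy.1⟩
        have h3 := kerF_nonneg (r := r) hs0 hx hy.1 (ne_of_notMem_ball hε0' hy.2)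
        have h4 : kerF n s r x y * (τ * (psiB n R x - psiB n R y)) ≤
          kerF n s r x y * (u x - u y) := mul_le_mul_of_nonneg_left (by linarith) h3
        linarith
      · rw [kerF_out hx hy.1 hyb]; simp
    have hFc : 0 ≤ ∫ y in (halfSpace n)ᶜ, fcut n s r (x - y) :=
      integral_nonneg fun y => fcut_nonneg _
    have h5 := mul_le_mul_of_nonneg_right hlt.le hFc
    have h6 := mul_le_mul_of_nonneg_left hε hτ
    -- the second moment bound, rewritten through `ψ x` and the scale `r`
    have h7 : τ * (Cψ * x 0 * (d ^ (n + 4))⁻¹ * ∫ z : Euc n, fcut n s r z * ‖z‖ ^ 2) ≤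
        u x * (Cψ * Cm * θ ^ 2 * r ^ (-(2 * s))) := by
      have e1 : r ^ (2 - 2 * s) = (θ * d) ^ 2 * r ^ (-(2 * s)) := by
        rw [← hr, ← Real.rpow_natCast, ← Real.rpow_add hr0]
        congr 1
      calc _ ≤ τ * (Cψ * x 0 * (d ^ (n + 4))⁻¹ * (Cm * r ^ (2 - 2 * s))) := by
            gcongr; exact (hmom r hr0).2
        _ = (τ * psiB n R x) * (Cψ * Cm * θ ^ 2 * r ^ (-(2 * s))) := by
            rw [e1, hψx, show n + 4 = n + 2 + 2 from rfl, pow_add d (n + 2) 2]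
            field_simp
        _ ≤ _ := by gcongr
    have h8 : τ * (psiB n R x * (ω / 8 * r ^ (-(2 * s)))) ≤ u x * (ω / 8 * r ^ (-(2 * s))) := by
      rw [← mul_assoc]; gcongr
    have h9 := mul_le_mul_of_nonneg_left (mass_lower (x := x) hs0 hr0 hεr'.le) hux
    have h10 : ∫ y in halfSpace n \ ball x ε, kerG n s r x y * u y ≤
        Ck * r ^ (-((n : ℝ) + 2 * s + 2)) * x 0 * ANorm n s u := by
      calc _ ≤ ∫ y in halfSpace n, kerG n s r x y * u y := by
            refine setIntegral_mono_set (int_G hs0 hr0 hx hu) ?_ hsub.eventuallyLE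
            filter_upwards [ae_restrict_mem meas_half] with y hy
            exact mul_nonneg (kerG_nonneg hs0 hr0 hx hy) (hpos y hy)
        _ ≤ ∫ y in halfSpace n, Ck * r ^ (-((n : ℝ) + 2 * s + 2)) * x 0 *
            (y 0 * |u y| / (1 + ‖y‖ ^ ((n : ℝ) + 2 * s + 2))) := by
            refine setIntegral_mono_on (int_G hs0 hr0 hx hu) (hu.2.2.const_mul _) meas_half
              fun y hy => ?_
            rw [abs_of_nonneg (hpos y hy)]
            have := mul_le_mul_of_nonneg_right (hker r hr0 hrR x y hx hxR.le hy) (hpos y hy)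
            refine this.trans (le_of_eq ?_)
            ring
        _ = _ := by rw [integral_const_mul, ANorm]
    simp only [kerF, kerG] at *
    rw [← hω'] at h9
    linarith
  have hfin := ge_of_tendsto (truncOp_tendsto hs hx hlap) hbound
  have h11 : -(c * u x) / cns n s ≤ u x * (K / cns n s * (θ * R ^ 2) ^ (2 * s) * r ^ (-(2 * s))) := by
    have h12 : -(c * u x) ≤ K * u x := by
      have := mul_le_mul_of_nonneg_right ((neg_le_abs c).trans hcK) hux
      linarith
    have h13 : (1 : ℝ) ≤ (θ * R ^ 2) ^ (2 * s) * r ^ (-(2 * s)) := by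
      calc (1 : ℝ) = r ^ (2 * s) * r ^ (-(2 * s)) := by
            rw [← Real.rpow_add hr0]; simp
        _ ≤ _ := by gcongr
    calc -(c * u x) / cns n s ≤ K * u x / cns n s := by gcongr
      _ = u x * (K / cns n s) * 1 := by ring
      _ ≤ u x * (K / cns n s) * ((θ * R ^ 2) ^ (2 * s) * r ^ (-(2 * s))) := by gcongr
      _ = _ := by ring
  have h14 : u x * r ^ (-(2 * s)) * (Cψ * Cm * θ ^ 2 + K / cns n s * (θ * R ^ 2) ^ (2 * s)) ≤
      u x * r ^ (-(2 * s)) * (ω / 4) := by gcongr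
  have e2 : r ^ (-((n : ℝ) + 2 * s + 2)) = (θ ^ (n + 2))⁻¹ * (d ^ (n + 2))⁻¹ * r ^ (-(2 * s)) := by
    rw [← mul_inv, ← mul_pow, ← hr, ← Real.rpow_natCast, ← Real.rpow_neg hr0.le,
      ← Real.rpow_add hr0]
    congr 1; push_cast; ring
  rw [e2] at hfin
  have h15 : r ^ (-(2 * s)) * (u x * (ω / 8)) ≤ r ^ (-(2 * s)) *
      (Ck * (θ ^ (n + 2))⁻¹ * ANorm n s u * psiB n R x) := by
    rw [hψx]
    linarith
  have h16 := le_of_mul_le_mul_left h15 hrs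
  have h17 : psiB n R x * (τ * (ω / 8)) ≤ psiB n R x * (Ck * (θ ^ (n + 2))⁻¹ * ANorm n s u) := by
    have := mul_le_mul_of_nonneg_right hlt.le (by positivity : 0 ≤ ω / 8)
    linarith
  have h18 := le_of_mul_le_mul_left h17 hψx0
  rw [div_mul_eq_mul_div, le_div_iff₀ (by positivity)]
  exact h18

lemma upper_bound (hs : s ∈ Set.Ioo (0 : ℝ) 1) {R K : ℝ} (hR : 0 < R) (hK : 0 ≤ K) :
    ∃ C > 0, ∀ u : Euc n → ℝ, MemA n s u → ContinuousOn u (closedBall 0 R) →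
      (∀ y ∈ halfSpace n, 0 ≤ u y) →
      (∀ x ∈ ball (0 : Euc n) R ∩ halfSpace n, ∃ c, |c| ≤ K ∧
        HasAntiFracLap n s u x (-(c * u x))) →
      ∀ x ∈ ball (0 : Euc n) R ∩ halfSpace n, u x ≤ C * ANorm n s u * psiB n R x := by
  obtain ⟨C, hC, h⟩ := upper_touch (n := n) hs hR hK
  refine ⟨C, hC, ?_⟩
  intro u hu hcont hpos hlap x hx
  by_contra! hlt
  have hpsi0 : ∀ y ∈ ball (0 : Euc n) R ∩ halfSpace n, 0 < psiB n R y := by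
    intro y hy
    have h1 : ‖y‖ < R := by simpa using hy.1
    have h2 : 0 < R ^ 2 - ‖y‖ ^ 2 := by nlinarith [norm_nonneg y]
    have h3 : 0 < y 0 := hy.2
    rw [psiB]; positivity
  have hψx := hpsi0 x hx
  obtain ⟨τ, hτ1, hτ2⟩ := exists_between ((lt_div_iff₀ hψx).2 hlt)
  rw [lt_div_iff₀ hψx] at hτ2
  have hτ0 : 0 < τ := lt_of_le_of_lt (mul_nonneg hC.le (ANorm_nonneg u)) hτ1
  set δ := u x - τ * psiB n R x with hδ
  have hδ0 : 0 < δ := by rw [hδ]; linarith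
  -- the superlevel set `{u - τ ψ ≥ δ}` of the half ball, in a form that is visibly compact
  let S : Set (Euc n) := closedBall 0 R ∩ (fun y => (y 0, u y - δ,
    (R ^ 2 - ‖y‖ ^ 2) ^ (n + 2) * (u y - δ) - τ * y 0)) ⁻¹' (Set.Ici 0 ×ˢ Set.Ici 0 ×ˢ Set.Ici 0)
  have hScl : IsClosed S := by
    refine ContinuousOn.preimage_isClosed_of_isClosed ?_ isClosed_closedBall
      (isClosed_Ici.prod (isClosed_Ici.prod isClosed_Ici))
    have c0 : ContinuousOn (fun y : Euc n => y 0) (closedBall 0 R) := by fun_prop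
    have c1 : ContinuousOn (fun y : Euc n => (R ^ 2 - ‖y‖ ^ 2) ^ (n + 2)) (closedBall 0 R) := by
      fun_prop
    exact c0.prodMk ((hcont.sub continuousOn_const).prodMk
      ((c1.mul (hcont.sub continuousOn_const)).sub (continuousOn_const.mul c0)))
  have hS : IsCompact S := (isCompact_closedBall 0 R).of_isClosed_subset hScl Set.inter_subset_left
  have hmem : ∀ y, y ∈ S ↔ ‖y‖ ≤ R ∧ 0 ≤ y 0 ∧ 0 ≤ u y - δ ∧
      0 ≤ (R ^ 2 - ‖y‖ ^ 2) ^ (n + 2) * (u y - δ) - τ * y 0 := by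
    intro y
    simp only [S, Set.mem_inter_iff, mem_closedBall, dist_zero_right, Set.mem_preimage,
      Set.mem_prod, Set.mem_Ici]
  have hSball : ∀ y ∈ S, y ∈ ball (0 : Euc n) R ∩ halfSpace n := by
    intro y hy
    obtain ⟨h1, h2, h3, h4⟩ := (hmem y).1 hy
    have hy0 : 0 < y 0 := by
      rcases lt_or_eq_of_le h2 with h5 | h5
      · exact h5
      · rw [anti_zero hu.1 h5.symm] at h3; linarith
    refine ⟨?_, hy0⟩
    rw [mem_ball, dist_zero_right]
    refine lt_of_le_of_ne h1 fun h5 => ?_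
    rw [h5, sub_self, zero_pow (by positivity), zero_mul] at h4
    have := mul_pos hτ0 hy0
    linarith
  have hSiff : ∀ y ∈ ball (0 : Euc n) R ∩ halfSpace n, δ ≤ u y - τ * psiB n R y ↔ y ∈ S := by
    intro y hy
    have h1 : ‖y‖ < R := by simpa using hy.1
    have h2 : 0 < R ^ 2 - ‖y‖ ^ 2 := by nlinarith [norm_nonneg y]
    have h3 : 0 < y 0 := hy.2
    have h4 := mul_pos hτ0 (hpsi0 y hy)
    have h5 : 0 < (R ^ 2 - ‖y‖ ^ 2) ^ (n + 2) := by positivity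
    have e : (R ^ 2 - ‖y‖ ^ 2) ^ (n + 2) * (u y - δ) - τ * y 0 =
        (R ^ 2 - ‖y‖ ^ 2) ^ (n + 2) * (u y - τ * psiB n R y - δ) := by
      rw [psiB]; field_simp; ring
    rw [hmem, e, mul_nonneg_iff_of_pos_left h5]
    constructor
    · intro h6; exact ⟨h1.le, h3.le, by linarith, by linarith⟩
    · intro h6; linarith [h6.2.2.2]
  have hxS : x ∈ S := (hSiff x hx).1 le_rfl
  have hψc : ContinuousOn (psiB n R) S := by
    have c1 : Continuous fun y : Euc n => (R ^ 2 - ‖y‖ ^ 2) ^ (n + 2) := by fun_prop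
    have c0 : Continuous fun y : Euc n => y 0 := by fun_prop
    refine c0.continuousOn.mul (c1.continuousOn.inv₀ fun y hy => ?_)
    have h1 : ‖y‖ < R := by simpa using (hSball y hy).1
    have h2 : 0 < R ^ 2 - ‖y‖ ^ 2 := by nlinarith [norm_nonneg y]
    positivity
  obtain ⟨y, hyS, hymax⟩ := hS.exists_isMaxOn ⟨x, hxS⟩
    (f := fun y => u y - τ * psiB n R y)
    ((hcont.mono Set.inter_subset_left).sub (continuousOn_const.mul hψc))
  have hyB := hSball y hyS
  have hyδ := (hSiff y hyB).2 hyS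
  obtain ⟨c, hc, hl⟩ := hlap y hyB
  have := h u y c τ hu hpos hyB.2 (by simpa using hyB.1) hc hl hτ0.le (by linarith) ?_
  · linarith
  · intro z hz
    by_cases hzS : z ∈ S
    · exact hymax hzS
    · have := mt (hSiff z hz).1 hzS
      linarith

end Upper

/-- the boundary Harnack inequality (Theorem 1.3). -/
theorem stmt2
    (n : ℕ) [NeZero n] (s : ℝ) (hs : s ∈ Set.Ioo (0 : ℝ) 1)
    (ρ : ℝ) (hρ : 0 < ρ) (K : ℝ) :
    ∃ C : ℝ, 1 ≤ C ∧
      ∀ (c u : Euc n → ℝ) (α : ℝ),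
        0 < α → NotInteger (2 * s + α) →
        (∀ x ∈ Metric.ball (0 : Euc n) ρ ∩ halfSpace n, |c x| ≤ K) →
        MemHolderOn (2 * s + α) (Metric.ball (0 : Euc n) ρ) u →
        MemA n s u →
        (∀ x ∈ halfSpace n, 0 ≤ u x) →
        (∀ x ∈ Metric.ball (0 : Euc n) ρ ∩ halfSpace n,
          HasAntiFracLap n s u x (-(c x * u x))) →
        (∀ x ∈ Metric.ball (0 : Euc n) (ρ / 2) ∩ halfSpace n,
          ∀ y ∈ Metric.ball (0 : Euc n) (ρ / 2) ∩ halfSpace n,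
          u x / x 0 ≤ C * (u y / y 0)) ∧
        (∀ x ∈ Metric.ball (0 : Euc n) (ρ / 2) ∩ halfSpace n,
          C⁻¹ * ANorm n s u ≤ u x / x 0 ∧ u x / x 0 ≤ C * ANorm n s u) := by
  -- both barriers live in the ball of radius `R = 3ρ/4`
  set R := 3 / 4 * ρ with hRdef
  have hR : 0 < R := by positivity
  obtain ⟨C₁, hC₁, hlow⟩ := lower_bound (n := n) hs (K := |K|) hR (abs_nonneg _)
  obtain ⟨C₂, hC₂, hup⟩ := upper_bound (n := n) hs (K := |K|) hR (abs_nonneg _)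
  -- lower bound for `R² - |x|²` on the smaller ball
  set d₀ := R ^ 2 - (ρ / 2) ^ 2 with hd₀
  have hd₀p : 0 < d₀ := by rw [hd₀, hRdef]; nlinarith
  set A := C₁ / d₀ ^ 2 with hA
  set B := C₂ * (d₀ ^ (n + 2))⁻¹ with hB
  have hA0 : 0 < A := by positivity
  have hB0 : 0 < B := by positivity
  refine ⟨1 + A + B + A * B, by nlinarith [mul_pos hA0 hB0], ?_⟩
  intro c u α _ _ hcK hhol hu hpos hlap
  have hcont : ContinuousOn u (closedBall 0 R) :=
    hhol.1.continuousOn.mono (closedBall_subset_ball (by rw [hRdef]; linarith))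
  have hlap' : ∀ x ∈ ball (0 : Euc n) R ∩ halfSpace n, ∃ c, |c| ≤ |K| ∧
      HasAntiFracLap n s u x (-(c * u x)) := by
    intro x hx
    have hx' : x ∈ ball (0 : Euc n) ρ ∩ halfSpace n :=
      ⟨ball_subset_ball (by rw [hRdef]; linarith) hx.1, hx.2⟩
    exact ⟨c x, (hcK x hx').trans (le_abs_self K), hlap x hx'⟩
  have hN := ANorm_nonneg (s := s) u
  have hd : ∀ x ∈ ball (0 : Euc n) (ρ / 2), d₀ ≤ R ^ 2 - ‖x‖ ^ 2 := by
    intro x hx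
    have h1 : ‖x‖ < ρ / 2 := by simpa using hx
    rw [hd₀]
    have := pow_le_pow_left₀ (norm_nonneg x) h1.le 2
    linarith
  have hL : ∀ x ∈ ball (0 : Euc n) (ρ / 2) ∩ halfSpace n, ANorm n s u ≤ A * (u x / x 0) := by
    intro x hx
    have hx0 : 0 < x 0 := hx.2
    have h1 := hlow u hu hcont hpos hlap' x hx.2
    have h2 : x 0 * d₀ ^ 2 ≤ phiB n R x := by
      rw [phiB]
      have := hd x hx.1
      have h3 : d₀ ^ 2 ≤ (max (R ^ 2 - ‖x‖ ^ 2) 0) ^ 2 :=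
        pow_le_pow_left₀ hd₀p.le (this.trans (le_max_left _ _)) 2
      gcongr
    have h4 := (mul_le_mul_of_nonneg_left h2 hN).trans h1
    rw [hA, div_mul_div_comm, le_div_iff₀ (by positivity)]
    linarith
  have hU : ∀ x ∈ ball (0 : Euc n) (ρ / 2) ∩ halfSpace n, u x / x 0 ≤ B * ANorm n s u := by
    intro x hx
    have hx0 : 0 < x 0 := hx.2
    have h1 := hup u hu hcont hpos hlap' x
      ⟨ball_subset_ball (by rw [hRdef]; linarith) hx.1, hx.2⟩
    have h2 : psiB n R x ≤ x 0 * (d₀ ^ (n + 2))⁻¹ := by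
      rw [psiB]
      have := hd x hx.1
      gcongr
    have h3 := h1.trans (mul_le_mul_of_nonneg_left h2 (mul_nonneg hC₂.le hN))
    rw [div_le_iff₀ hx0, hB]
    linarith
  have hq : ∀ x ∈ ball (0 : Euc n) (ρ / 2) ∩ halfSpace n, 0 ≤ u x / x 0 := fun x hx =>
    div_nonneg (hpos x hx.2) (le_of_lt hx.2)
  have hAB := mul_pos hA0 hB0
  refine ⟨fun x hx y hy => ?_, fun x hx => ⟨?_, ?_⟩⟩
  · have h1 := hU x hx
    have h2 := mul_le_mul_of_nonneg_left (hL y hy) hB0.le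
    have h3 : (A * B) * (u y / y 0) ≤ (1 + A + B + A * B) * (u y / y 0) :=
      mul_le_mul_of_nonneg_right (by linarith) (hq y hy)
    linarith
  · rw [inv_mul_le_iff₀ (by positivity)]
    exact (hL x hx).trans (mul_le_mul_of_nonneg_right (by linarith) (hq x hx))
  · exact (hU x hx).trans (mul_le_mul_of_nonneg_right (by linarith) hN)

end
end

section
/- Let x ∈ ℝⁿ₊ and let u ∈ ℒ_s(ℝⁿ) be an antisymmetric function that is C^{2s+α} in a neighbourhood of x for some α > 0 with 2s+α not an integer. Then the antisymmetric representation of the fractional Laplacian converges at x and agrees with the principal value definition: c_{n,s} lim_{ε→0⁺} ∫_{ℝⁿ∖B_ε(x)} (u(x)−u(y))/|x−y|^{n+2s} dy = c_{n,s} lim_{ε→0⁺} ∫_{ℝⁿ₊∖B_ε(x)} (|x−y|^{−n−2s} − |x_*−y|^{−n−2s})(u(x)−u(y)) dy + (c_{1,s}/s)·u(x)·x₁^{−2s}. -/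
/-!
Write `K(y) = |x - y|^{-n-2s}` and `K_*(y) = |x_* - y|^{-n-2s}`.

*Existence of the principal value.* Since `2s + α > 2s`, there are a linear map `ℓ` and `σ > 2s`
with `u(y) - u(x) - ℓ(y - x) = O(|y - x|^σ)` near `x` (`taylor_bound`). Adding `ℓ(y - x) K(y)` on a
ball about `x` makes the integrand absolutely integrable (`integrable_regularized`), while the added
term integrates to zero over every annulus by oddness. Hence the truncated integrals converge
(`exists_pv_limit`).

*Comparison.* For `ε < x₁` the ball `B_ε(x)` lies in the half space `H`. Splitting the truncated
integral along `H` and its complement and folding the latter by the reflection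
(`setIntegral_compl_halfSpace`) gives
`∫_{B_ε(x)ᶜ} K (u(x) - u) = ∫_{H ∖ B_ε(x)} (K - K_*)(u(x) - u) + ∫_{H ∖ B_ε(x)} K_* (u(x) - u)
  + ∫_H K_* (u(x) + u)`.
The point `x_*` has distance `x₁ > 0` from `H`, so `K_*` causes no trouble there, and the last two
terms tend to `2 u(x) ∫_H K_*`. This mass is computed by writing the kernel as a superposition of
Gaussians (`lintegral_kernel_half`), and `c_{n,s}` times it is `(c_{1,s} / s) u(x) x₁^{-2s}`.
-/

open MeasureTheory Metric Filter Topology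

noncomputable section

/-! ### First-order expansion at the base point -/

/-- The only consequence of Hölder regularity of order `β > 2s` that is used: at `x`, `u` agrees
with an affine function up to an error of order `σ > 2s`. The linear part is `0` when `β < 1` and
the gradient otherwise; when `β ≥ 2` one may take `σ = 2 > 2s`. -/
lemma taylor_bound {X : Type*} [NormedAddCommGroup X] [NormedSpace ℝ X] {β s δ : ℝ}
    (hs : s < 1) (hβ : 2 * s < β) (hδ : 0 < δ) {x : X} {u : X → ℝ}
    (hu : MemHolderOn β (ball x δ) u) :
    ∃ (l : X →L[ℝ] ℝ) (C σ r : ℝ), 2 * s < σ ∧ 0 < r ∧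
      ∀ y ∈ ball x r, |u y - u x - l (y - x)| ≤ C * ‖y - x‖ ^ σ := by
  obtain ⟨hcd, C, hC⟩ := hu
  have hxB : x ∈ ball x δ := mem_ball_self hδ
  have hudo : UniqueDiffOn ℝ (ball x δ) := isOpen_ball.uniqueDiffOn
  -- It suffices to have a Hölder modulus of the gradient at `x`.
  have key : ∀ (K γ r : ℝ), 0 ≤ γ → 2 * s < γ + 1 → 0 < r → r ≤ δ → 0 ≤ K →
      DifferentiableOn ℝ u (ball x δ) →
      (∀ y ∈ ball x r, ‖fderiv ℝ u y - fderiv ℝ u x‖ ≤ K * ‖y - x‖ ^ γ) →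
      ∃ (l : X →L[ℝ] ℝ) (C σ r : ℝ), 2 * s < σ ∧ 0 < r ∧
      ∀ y ∈ ball x r, |u y - u x - l (y - x)| ≤ C * ‖y - x‖ ^ σ := by
    intro K γ r hγ hγs hr hrδ hK hd hb
    refine ⟨fderiv ℝ u x, K, γ + 1, r, hγs, hr, fun y hy => ?_⟩
    rcases eq_or_ne y x with rfl | hne
    · simp
      positivity
    have hpos : 0 < ‖y - x‖ := norm_pos_iff.2 (sub_ne_zero.2 hne)
    have hyr : ‖y - x‖ < r := by simpa [dist_eq_norm] using hy
    have hsub : closedBall x ‖y - x‖ ⊆ ball x r := closedBall_subset_ball hyr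
    have := (convex_closedBall x ‖y - x‖).norm_image_sub_le_of_norm_hasFDerivWithin_le'
      (𝕜 := ℝ) (f := u) (f' := fderiv ℝ u) (φ := fderiv ℝ u x) (C := K * ‖y - x‖ ^ γ) (x := x) (y := y)
      (fun z hz => ((hd.differentiableAt (isOpen_ball.mem_nhds
        (ball_subset_ball hrδ (hsub hz)))).hasFDerivAt).hasFDerivWithinAt)
      (fun z hz => (hb z (hsub hz)).trans (by
        have : ‖z - x‖ ≤ ‖y - x‖ := by simpa [dist_eq_norm] using hz
        gcongr)) (mem_closedBall_self hpos.le) (by simp [dist_eq_norm])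
    rw [Real.norm_eq_abs] at this
    rw [Real.rpow_add_one hpos.ne', ← mul_assoc]
    exact this
  have hfl : β < ⌊β⌋₊ + 1 := Nat.lt_floor_add_one β
  obtain h0 | h1 | h2 : ⌊β⌋₊ = 0 ∨ ⌊β⌋₊ = 1 ∨ 2 ≤ ⌊β⌋₊ := by omega
  · refine ⟨0, C, max β 0, δ, lt_max_of_lt_left hβ, hδ, fun y hy => ?_⟩
    rw [h0] at hC
    have := hC.dist_le hy hxB
    rw [iteratedFDerivWithin_zero_eq_comp, Function.comp, Function.comp,
      LinearIsometryEquiv.dist_map, Real.dist_eq, dist_eq_norm] at this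
    simpa using this
  · rw [h1] at hC hcd hfl
    have hβ1 : 1 ≤ β := by
      simpa using (Nat.le_floor_iff' one_ne_zero).1 h1.ge
    refine key C (β - 1) δ (by linarith) (by linarith) hδ le_rfl C.2
      (hcd.differentiableOn (by norm_num)) fun y hy => ?_
    have := hC.dist_le hy hxB
    rw [iteratedFDerivWithin_succ_eq_comp_right hudo hy,
      iteratedFDerivWithin_succ_eq_comp_right hudo hxB, Function.comp, Function.comp,
      LinearIsometryEquiv.dist_map, iteratedFDerivWithin_zero_eq_comp, Function.comp, Function.comp,
      LinearIsometryEquiv.dist_map, dist_eq_norm, dist_eq_norm,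
      fderivWithin_of_isOpen isOpen_ball hy, fderivWithin_of_isOpen isOpen_ball hxB] at this
    simpa [hβ1] using this
  · have hcd2 : ContDiffOn ℝ 2 u (ball x δ) := hcd.of_le (by exact_mod_cast h2)
    have hat : ContDiffAt ℝ 2 u x := hcd2.contDiffAt (isOpen_ball.mem_nhds hxB)
    have hat' : ContDiffAt ℝ 1 (fderiv ℝ u) x := hat.fderiv_right (by norm_num)
    obtain ⟨K, t, ht, hL⟩ := hat'.exists_lipschitzOnWith
    obtain ⟨r, hr, hrt⟩ := Metric.mem_nhds_iff.1 ht
    refine key K 1 (min r δ) (by norm_num) (by linarith) (by positivity) (min_le_right _ _) K.2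
      (hcd2.differentiableOn (by norm_num)) fun y hy => ?_
    have := hL.dist_le_mul y (hrt (ball_subset_ball (min_le_left _ _) hy)) x (mem_of_mem_nhds ht)
    simpa [dist_eq_norm] using this

/-! ### Mass of the kernel on a half space -/

/-- Euler's integral in `ℝ≥0∞`; read from right to left it writes `c ^ (-p)` as a superposition of
exponentials. -/
lemma lintegral_rpow_mul_exp {p c : ℝ} (hp : 0 < p) (hc : 0 < c) :
    ∫⁻ t in Set.Ioi (0 : ℝ), ENNReal.ofReal (t ^ (p - 1) * Real.exp (-(c * t))) =
      ENNReal.ofReal (Real.Gamma p * c ^ (-p)) := by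
  have h := Real.integral_rpow_mul_exp_neg_mul_Ioi hp hc
  have hv : ∫ t in Set.Ioi (0 : ℝ), t ^ (p - 1) * Real.exp (-(c * t)) =
      Real.Gamma p * c ^ (-p) := by
    rw [h, one_div, Real.inv_rpow hc.le, Real.rpow_neg hc.le, mul_comm]
  have hpos : 0 < Real.Gamma p * c ^ (-p) := mul_pos (Real.Gamma_pos_of_pos hp) (by positivity)
  rw [← hv, ofReal_integral_eq_lintegral_ofReal]
  · exact not_imp_comm.1 integral_undef (by rw [hv]; exact hpos.ne')
  · filter_upwards [ae_restrict_mem measurableSet_Ioi] with t ht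
    have : 0 < t := ht
    positivity

/-- Fubini for the Gaussian over a half space: the `n - 1` tangential variables each contribute
`√(π / t)`. -/
lemma lintegral_gauss_half (n : ℕ) [NeZero n] {a t : ℝ} (ht : 0 < t) :
    ∫⁻ z in {z : Euc n | a < z 0}, ENNReal.ofReal (Real.exp (-(‖z‖ ^ 2 * t))) =
      ENNReal.ofReal ((Real.pi / t) ^ (((n : ℝ) - 1) / 2)) *
        ∫⁻ w in Set.Ioi a, ENNReal.ofReal (Real.exp (-(w ^ 2 * t))) := by
  have hg : Integrable (fun w : ℝ => Real.exp (-(w ^ 2 * t))) := by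
    convert integrable_exp_neg_mul_sq ht using 3
    ring
  have hgi : ∫ w : ℝ, Real.exp (-(w ^ 2 * t)) = (Real.pi / t) ^ (1 / 2 : ℝ) := by
    rw [← Real.sqrt_eq_rpow, ← integral_gaussian]
    congr with w
    ring_nf
  let f : Fin n → ℝ → ℝ := fun i => if i = 0 then
    (Set.Ioi a).indicator (fun w => Real.exp (-(w ^ 2 * t))) else fun w => Real.exp (-(w ^ 2 * t))
  have hf : ∀ i, Integrable (f i) := by
    intro i
    by_cases hi : i = 0
    · simp only [f, hi, if_true]
      exact hg.indicator measurableSet_Ioi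
    · simp only [f, hi, if_false]
      exact hg
  have hf0 : ∀ i w, 0 ≤ f i w := by
    intro i w
    by_cases hi : i = 0
    · simp only [f, hi, if_true]
      exact Set.indicator_nonneg (fun _ _ => (Real.exp_pos _).le) _
    · simp only [f, hi, if_false]
      positivity
  have hprod : ∀ z : Euc n, ({z : Euc n | a < z 0}).indicator
      (fun z => ENNReal.ofReal (Real.exp (-(‖z‖ ^ 2 * t)))) z =
      ENNReal.ofReal (∏ i, f i (z.ofLp i)) := by
    intro z
    have hexp : Real.exp (-(‖z‖ ^ 2 * t)) = ∏ i, Real.exp (-((z i) ^ 2 * t)) := by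
      rw [← Real.exp_sum, EuclideanSpace.real_norm_sq_eq, Finset.sum_mul, Finset.sum_neg_distrib]
    by_cases hz : a < z 0
    · rw [Set.indicator_of_mem (by exact hz), hexp]
      congr 1
      refine Finset.prod_congr rfl fun i _ => ?_
      by_cases hi : i = 0
      · subst hi; simp [f, hz]
      · simp [f, hi]
    · rw [Set.indicator_of_notMem (by exact hz), Finset.prod_eq_zero (Finset.mem_univ 0)]
      · simp
      · simp [f, hz]
  have hms : MeasurableSet {z : Euc n | a < z 0} :=
    measurableSet_lt measurable_const (by fun_prop)
  rw [← lintegral_indicator hms]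
  simp_rw [hprod]
  have hfi := Integrable.fintype_prod (μ := fun _ : Fin n => (volume : Measure ℝ)) hf
  have e1 : ∫⁻ z : Euc n, ENNReal.ofReal (∏ i, f i (z.ofLp i)) =
      ∫⁻ z, ENNReal.ofReal (∏ i, f i (z i)) ∂Measure.pi (fun _ : Fin n => (volume : Measure ℝ)) :=
    (EuclideanSpace.volume_preserving_symm_measurableEquiv_toLp (Fin n)).lintegral_comp_emb
      (MeasurableEquiv.measurableEmbedding _) (fun z => ENNReal.ofReal (∏ i, f i (z i)))
  rw [e1, ← ofReal_integral_eq_lintegral_ofReal hfi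
    (Filter.Eventually.of_forall fun z => Finset.prod_nonneg fun i _ => hf0 i _),
    integral_fintype_prod_eq_prod, ← ofReal_integral_eq_lintegral_ofReal hg.integrableOn
    (Filter.Eventually.of_forall fun z => (Real.exp_pos _).le), ← ENNReal.ofReal_mul (by positivity)]
  congr 1
  rw [← Finset.mul_prod_erase _ _ (Finset.mem_univ (0 : Fin n)), mul_comm]
  congr 1
  · rw [Finset.prod_congr rfl (g := fun _ => (Real.pi / t) ^ (1 / 2 : ℝ))]
    · rw [Finset.prod_const, Finset.card_erase_of_mem (Finset.mem_univ _), Finset.card_univ,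
        Fintype.card_fin, ← Real.rpow_natCast, ← Real.rpow_mul (by positivity),
        Nat.cast_sub (Nat.one_le_iff_ne_zero.2 (NeZero.ne n))]
      congr 1
      push_cast
      ring
    · intro i hi
      simp only [f, Finset.ne_of_mem_erase hi, if_false]
      exact hgi
  · simp only [f, if_true]
    rw [integral_indicator measurableSet_Ioi]

/-- The mass of `‖z‖ ^ (-(n + 2s))` on `{z₁ > a}`. Writing the kernel as a superposition of
Gaussians reduces the computation to the one-dimensional integral of `w ^ (-1 - 2s)` over `w > a`. -/
lemma lintegral_kernel_half (n : ℕ) [NeZero n] {s a : ℝ} (hs : 0 < s) (ha : 0 < a) :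
    ∫⁻ z in {z : Euc n | a < z 0}, ENNReal.ofReal (‖z‖ ^ (-((n : ℝ) + 2 * s))) =
      ENNReal.ofReal (Real.pi ^ (((n : ℝ) - 1) / 2) * Real.Gamma (s + 1 / 2) /
        Real.Gamma (((n : ℝ) + 2 * s) / 2) * (a ^ (-(2 * s)) / (2 * s))) := by
  set q : ℝ := ((n : ℝ) + 2 * s) / 2 with hq
  have hqpos : 0 < q := by positivity
  have hG : 0 < Real.Gamma q := Real.Gamma_pos_of_pos hqpos
  have hG2 : 0 < Real.Gamma (s + 1 / 2) := Real.Gamma_pos_of_pos (by positivity)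
  have hms : MeasurableSet {z : Euc n | a < z 0} :=
    measurableSet_lt measurable_const (by fun_prop)
  have hmain : ENNReal.ofReal (Real.Gamma q) *
      ∫⁻ z in {z : Euc n | a < z 0}, ENNReal.ofReal (‖z‖ ^ (-((n : ℝ) + 2 * s))) =
      ENNReal.ofReal (Real.pi ^ (((n : ℝ) - 1) / 2) * Real.Gamma (s + 1 / 2) *
        (a ^ (-(2 * s)) / (2 * s))) := by
    calc _ = ∫⁻ z in {z : Euc n | a < z 0}, ∫⁻ t in Set.Ioi (0 : ℝ),
            ENNReal.ofReal (t ^ (q - 1) * Real.exp (-(‖z‖ ^ 2 * t))) := by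
          rw [← lintegral_const_mul' _ _ ENNReal.ofReal_ne_top]
          refine setLIntegral_congr_fun hms fun z hz => ?_
          have hz0 : z ≠ 0 := by
            rintro rfl
            exact absurd hz (by simp [ha.le])
          have hzp : 0 < ‖z‖ := norm_pos_iff.2 hz0
          rw [lintegral_rpow_mul_exp hqpos (by positivity), ← ENNReal.ofReal_mul hG.le]
          congr 2
          rw [← Real.rpow_natCast, ← Real.rpow_mul hzp.le]
          congr 1
          rw [hq]; push_cast; ring
      _ = ∫⁻ t in Set.Ioi (0 : ℝ), ∫⁻ z in {z : Euc n | a < z 0},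
            ENNReal.ofReal (t ^ (q - 1) * Real.exp (-(‖z‖ ^ 2 * t))) := by
          refine lintegral_lintegral_swap (Measurable.aemeasurable ?_)
          unfold Function.uncurry
          fun_prop
      _ = ∫⁻ t in Set.Ioi (0 : ℝ), ∫⁻ w in Set.Ioi a,
            ENNReal.ofReal (Real.pi ^ (((n : ℝ) - 1) / 2)) *
              ENNReal.ofReal (t ^ (s + 1 / 2 - 1) * Real.exp (-(w ^ 2 * t))) := by
          refine setLIntegral_congr_fun measurableSet_Ioi fun t (ht : 0 < t) => ?_
          simp_rw [ENNReal.ofReal_mul (Real.rpow_nonneg ht.le (q - 1)),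
            ENNReal.ofReal_mul (Real.rpow_nonneg ht.le (s + 1 / 2 - 1))]
          rw [lintegral_const_mul' _ _ ENNReal.ofReal_ne_top, lintegral_gauss_half n ht,
            lintegral_const_mul' _ _ ENNReal.ofReal_ne_top,
            lintegral_const_mul' _ _ ENNReal.ofReal_ne_top, ← mul_assoc, ← mul_assoc,
            ← ENNReal.ofReal_mul (by positivity), ← ENNReal.ofReal_mul (by positivity)]
          congr 2
          rw [Real.div_rpow Real.pi_pos.le ht.le, div_eq_mul_inv, ← Real.rpow_neg ht.le,
            mul_left_comm, ← Real.rpow_add ht]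
          congr 2
          rw [hq]; ring
      _ = ∫⁻ w in Set.Ioi a, ∫⁻ t in Set.Ioi (0 : ℝ),
            ENNReal.ofReal (Real.pi ^ (((n : ℝ) - 1) / 2)) *
              ENNReal.ofReal (t ^ (s + 1 / 2 - 1) * Real.exp (-(w ^ 2 * t))) := by
          refine lintegral_lintegral_swap (Measurable.aemeasurable ?_)
          unfold Function.uncurry
          fun_prop
      _ = ∫⁻ w in Set.Ioi a, ENNReal.ofReal (Real.pi ^ (((n : ℝ) - 1) / 2) *
            Real.Gamma (s + 1 / 2)) * ENNReal.ofReal (w ^ (-(2 * s) - 1)) := by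
          refine setLIntegral_congr_fun measurableSet_Ioi fun w (hw : a < w) => ?_
          have hw0 : 0 < w := ha.trans hw
          rw [lintegral_const_mul' _ _ ENNReal.ofReal_ne_top,
            lintegral_rpow_mul_exp (by positivity) (by positivity),
            ← ENNReal.ofReal_mul (by positivity), ← ENNReal.ofReal_mul (by positivity), mul_assoc]
          congr 3
          rw [← Real.rpow_natCast, ← Real.rpow_mul hw0.le]
          congr 1
          push_cast; ring
      _ = _ := by
          rw [lintegral_const_mul' _ _ ENNReal.ofReal_ne_top,
            ← ofReal_integral_eq_lintegral_ofReal
              (integrableOn_Ioi_rpow_of_lt (by linarith) ha), integral_Ioi_rpow_of_lt (by linarith) ha,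
            ← ENNReal.ofReal_mul (by positivity)]
          · congr 2
            rw [sub_add_cancel, neg_div_neg_eq]
          · filter_upwards [ae_restrict_mem measurableSet_Ioi] with w hw
            have : 0 < w := ha.trans hw
            positivity
  have hGne : ENNReal.ofReal (Real.Gamma q) ≠ 0 := by simpa using hG
  rw [← ENNReal.mul_right_inj hGne ENNReal.ofReal_ne_top, hmain, ← ENNReal.ofReal_mul hG.le]
  congr 1
  field_simp

/-! ### The reflection and the half space -/

lemma reflFirst_eq_reflection (n : ℕ) [NeZero n] (x : Euc n) :
    reflFirst n x = (ℝ ∙ (EuclideanSpace.single 0 1 : Euc n))ᗮ.reflection x := by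
  rw [Submodule.reflection_orthogonal_apply, Submodule.reflection_singleton_apply]
  simp [reflFirst, EuclideanSpace.inner_single_left]
  rw [two_smul, ← add_smul]
  ring_nf

lemma reflFirst_zero_coord (n : ℕ) [NeZero n] (x : Euc n) : reflFirst n x 0 = -x 0 := by
  simp [reflFirst]
  ring

lemma norm_reflFirst_sub (n : ℕ) [NeZero n] (x y : Euc n) :
    ‖reflFirst n x - y‖ = ‖x - reflFirst n y‖ := by
  simp_rw [reflFirst_eq_reflection]
  conv_rhs => rw [← LinearIsometryEquiv.norm_map
    ((ℝ ∙ (EuclideanSpace.single 0 1 : Euc n))ᗮ.reflection), map_sub,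
    Submodule.reflection_reflection]

lemma measurePreserving_reflFirst (n : ℕ) [NeZero n] :
    MeasurePreserving (reflFirst n) volume volume := by
  have : reflFirst n = (ℝ ∙ (EuclideanSpace.single 0 1 : Euc n))ᗮ.reflection :=
    funext (reflFirst_eq_reflection n)
  rw [this]
  exact LinearIsometryEquiv.measurePreserving _

lemma measurableEmbedding_reflFirst (n : ℕ) [NeZero n] :
    MeasurableEmbedding (reflFirst n) := by
  have : reflFirst n = (ℝ ∙ (EuclideanSpace.single 0 1 : Euc n))ᗮ.reflection :=
    funext (reflFirst_eq_reflection n)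
  rw [this]
  exact ((ℝ ∙ (EuclideanSpace.single 0 1 : Euc n))ᗮ.reflection).toHomeomorph.measurableEmbedding

lemma measurableSet_halfSpace (n : ℕ) [NeZero n] : MeasurableSet (halfSpace n) :=
  measurableSet_lt measurable_const (by fun_prop)

/-- The reflected half space is `{y₁ < 0}`, which differs from the complement of `{y₁ > 0}` by the
null hyperplane `{y₁ = 0}`. -/
lemma preimage_halfSpace_ae (n : ℕ) [NeZero n] :
    (reflFirst n ⁻¹' halfSpace n : Set (Euc n)) =ᵐ[volume] (halfSpace n)ᶜ := by
  let S : Submodule ℝ (Euc n) := LinearMap.ker (EuclideanSpace.proj (0 : Fin n) : Euc n →L[ℝ] ℝ).toLinearMap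
  have hS : S ≠ ⊤ := by
    intro h
    have : (EuclideanSpace.single 0 1 : Euc n) ∈ S := h ▸ Submodule.mem_top
    simp [S] at this
  have h0 : volume (S : Set (Euc n)) = 0 := Measure.addHaar_submodule _ S hS
  have hae : ∀ᵐ y : Euc n, y ∉ (S : Set (Euc n)) := measure_eq_zero_iff_ae_notMem.1 h0
  filter_upwards [hae] with y hy
  have hy0 : y 0 ≠ 0 := by simpa [S] using hy
  apply propext
  change 0 < reflFirst n y 0 ↔ ¬ (0 < y 0)
  rw [reflFirst_zero_coord, not_lt, neg_pos]
  exact ⟨le_of_lt, fun h => lt_of_le_of_ne h hy0⟩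

/-! ### Integrability of the kernel -/

/-- Away from its pole `p`, the kernel is dominated by the weight defining `ℒₛ`. -/
lemma kernel_le {n : ℕ} (p : Euc n) {q ε : ℝ} (hq : 0 < q) (hε : 0 < ε) :
    ∃ C : ℝ, ∀ y, ε ≤ ‖p - y‖ → ‖p - y‖ ^ (-q) ≤ C * (1 / (1 + ‖y‖ ^ q)) := by
  refine ⟨(1 / ε) ^ q + (‖p‖ / ε + 1) ^ q, fun y hy => ?_⟩
  have hd : 0 < ‖p - y‖ := hε.trans_le hy
  have h1 : 1 ≤ ‖p - y‖ / ε := (one_le_div hε).2 hy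
  have h2 : ‖y‖ ≤ (‖p‖ / ε + 1) * ‖p - y‖ := by
    have h3 : ‖y‖ ≤ ‖p‖ + ‖p - y‖ := by
      have := norm_sub_le p (p - y)
      simpa using this
    have h4 : ‖p‖ * 1 ≤ ‖p‖ * (‖p - y‖ / ε) := by gcongr
    calc ‖y‖ ≤ ‖p‖ * 1 + ‖p - y‖ := by simpa using h3
      _ ≤ ‖p‖ * (‖p - y‖ / ε) + ‖p - y‖ := by gcongr
      _ = _ := by ring
  rw [Real.rpow_neg hd.le, mul_one_div, le_div_iff₀ (by positivity), inv_mul_le_iff₀ (by positivity),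
    mul_add, ← Real.mul_rpow (by positivity) (by positivity),
    ← Real.mul_rpow (by positivity) (by positivity)]
  have h5 : 1 ≤ (‖p - y‖ * (1 / ε)) ^ q := by
    rw [mul_one_div]
    exact Real.one_le_rpow h1 hq.le
  have h6 : ‖y‖ ^ q ≤ (‖p - y‖ * (‖p‖ / ε + 1)) ^ q := by
    rw [mul_comm]
    gcongr
  linarith

lemma integrable_one_div_one_add_norm_rpow {n : ℕ} {q : ℝ} (hq : (n : ℝ) < q) :
    Integrable (fun y : Euc n => 1 / (1 + ‖y‖ ^ q)) := by
  have hq0 : 0 < q := lt_of_le_of_lt (Nat.cast_nonneg n) hq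
  have h := (integrable_one_add_norm (E := Euc n) (μ := volume) (r := q) (by simpa using hq)).const_mul
    ((2 : ℝ) ^ q)
  refine h.mono' (Measurable.aestronglyMeasurable (by fun_prop)) (Filter.Eventually.of_forall fun y => ?_)
  rw [Real.norm_of_nonneg (by positivity), Real.rpow_neg (by positivity), ← div_eq_mul_inv,
    div_le_div_iff₀ (by positivity) (by positivity), one_mul]
  rcases le_total ‖y‖ 1 with h1 | h1
  · calc (1 + ‖y‖) ^ q ≤ 2 ^ q := by gcongr; linarith
      _ ≤ 2 ^ q * (1 + ‖y‖ ^ q) := le_mul_of_one_le_right (by positivity) (by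
        have : 0 ≤ ‖y‖ ^ q := by positivity
        linarith)
  · calc (1 + ‖y‖) ^ q ≤ (2 * ‖y‖) ^ q := by gcongr; linarith
      _ = 2 ^ q * ‖y‖ ^ q := Real.mul_rpow (by norm_num) (by positivity)
      _ ≤ _ := by gcongr; linarith

lemma integrableOn_kernel_mul {n : ℕ} {q ε : ℝ} (hq : 0 < q) (hε : 0 < ε) (p : Euc n)
    {f : Euc n → ℝ} (hf : AEStronglyMeasurable f volume)
    (hfi : Integrable (fun y => |f y| / (1 + ‖y‖ ^ q)) volume) :
    IntegrableOn (fun y => ‖p - y‖ ^ (-q) * f y) (ball p ε)ᶜ := by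
  obtain ⟨C, hC⟩ := kernel_le p hq hε
  refine (hfi.const_mul C).integrableOn.mono' ?_ ?_
  · have : AEStronglyMeasurable (fun y : Euc n => ‖p - y‖ ^ (-q)) volume :=
      Measurable.aestronglyMeasurable (by fun_prop)
    exact (this.mul hf).restrict
  · filter_upwards [ae_restrict_mem measurableSet_ball.compl] with y hy
    have hy' : ε ≤ ‖p - y‖ := by
      simpa [dist_eq_norm, norm_sub_rev] using hy
    rw [norm_mul, Real.norm_of_nonneg (by positivity), Real.norm_eq_abs]
    calc _ ≤ C * (1 / (1 + ‖y‖ ^ q)) * |f y| := by gcongr; exact hC y hy'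
      _ = _ := by ring

lemma integrableOn_norm_rpow_ball {n : ℕ} [NeZero n] (x : Euc n) {p r : ℝ} (hp : -(n : ℝ) < p) :
    IntegrableOn (fun y : Euc n => ‖x - y‖ ^ p) (ball x r) := by
  have hn : 1 ≤ n := Nat.one_le_iff_ne_zero.2 (NeZero.ne n)
  have h0 : IntegrableOn (fun z : Euc n => ‖z‖ ^ p) (ball 0 r) := by
    rw [integrableOn_fun_norm_addHaar volume (f := fun t : ℝ => t ^ p)]
    rcases le_or_gt r 0 with hr | hr
    · simp [Set.Ioo_eq_empty_of_le hr]
    have := (intervalIntegral.integrableOn_Ioo_rpow_iff (s := (n : ℝ) - 1 + p) hr).2 (by linarith)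
    refine this.congr_fun (fun t ht => ?_) measurableSet_Ioo
    simp only [finrank_euclideanSpace, Fintype.card_fin, smul_eq_mul]
    rw [Real.rpow_add ht.1, ← Real.rpow_natCast, Nat.cast_sub hn, Nat.cast_one]
  have := (Measure.measurePreserving_sub_left (volume : Measure (Euc n)) x).integrableOn_comp_preimage
    (Homeomorph.subLeft x).measurableEmbedding (f := fun z : Euc n => ‖z‖ ^ p) (s := ball 0 r)
  have hpre : (fun y => x - y) ⁻¹' (ball (0 : Euc n) r) = ball x r := by
    ext y
    simp [dist_eq_norm, norm_sub_rev]
  rw [hpre] at this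
  exact this.2 h0

/-! ### Existence of the principal value -/

lemma tendsto_setIntegral_diff_ball {n : ℕ} [NeZero n] {S : Set (Euc n)} (x : Euc n)
    {f : Euc n → ℝ} (hf : IntegrableOn f S) :
    Tendsto (fun ε : ℝ => ∫ y in S \ ball x ε, f y) (𝓝[>] 0) (𝓝 (∫ y in S, f y)) := by
  have h1 : ∀ ε : ℝ, ∫ y in S \ ball x ε, f y = ∫ y in S, (ball x ε)ᶜ.indicator f y := by
    intro ε
    rw [setIntegral_indicator measurableSet_ball.compl, Set.sdiff_eq]
  simp_rw [h1]
  refine tendsto_integral_filter_of_dominated_convergence (fun y => ‖f y‖) ?_ ?_ hf.norm ?_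
  · exact Filter.Eventually.of_forall fun ε => hf.1.indicator measurableSet_ball.compl
  · exact Filter.Eventually.of_forall fun ε => Filter.Eventually.of_forall fun y =>
      norm_indicator_le_norm_self _ _
  · have hne : ∀ᵐ y : Euc n, y ≠ x := by
      have : Nontrivial (Euc n) := inferInstance
      simp [ae_iff]
    filter_upwards [ae_restrict_of_ae hne] with y hy
    refine tendsto_const_nhds.congr' ?_
    have hd : 0 < dist y x := dist_pos.2 hy
    filter_upwards [Ioo_mem_nhdsGT hd] with ε hε
    rw [Set.indicator_of_mem]
    simpa using hε.2.le

/-- The linear part of `u` contributes nothing to the truncated integrals, by oddness under the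
point reflection `y ↦ 2x - y`. -/
lemma setIntegral_kernel_mul_linear_annulus {n : ℕ} (x : Euc n) (l : Euc n →L[ℝ] ℝ) (q r ε : ℝ) :
    ∫ y in (ball x ε)ᶜ, (ball x r).indicator (fun y => ‖x - y‖ ^ (-q) * l (y - x)) y = 0 := by
  rw [← integral_indicator measurableSet_ball.compl]
  set h : Euc n → ℝ := (ball x ε)ᶜ.indicator
    ((ball x r).indicator (fun y => ‖x - y‖ ^ (-q) * l (y - x))) with hh
  have hodd : ∀ y, h ((x + x) - y) = -h y := by
    intro y
    have hd : dist (x + x - y) x = dist y x := by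
      rw [dist_eq_norm, dist_eq_norm, ← norm_neg]
      congr 1
      abel
    have h1 : ‖x - (x + x - y)‖ = ‖x - y‖ := by
      rw [← norm_neg]
      congr 1
      abel
    have h2 : l (x + x - y - x) = -l (y - x) := by
      rw [← map_neg]
      congr 1
      abel
    simp only [hh, Set.indicator, Set.mem_compl_iff, mem_ball, hd, h1, h2]
    split_ifs
    · simp
    · exact mul_neg _ _
    · simp
  have h3 := integral_sub_left_eq_self h volume (x + x)
  simp_rw [hodd] at h3
  rw [integral_neg] at h3
  linarith

/-- Once the linear part of `u` at `x` is subtracted near `x`, the singular integrand is absolutely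
integrable: it is `O(‖x - y‖ ^ (σ - n - 2s))` there, with `σ > 2s`. -/
lemma integrable_regularized {n : ℕ} [NeZero n] {s C σ r : ℝ} (hs : 0 < s) (x : Euc n)
    {u : Euc n → ℝ} (l : Euc n →L[ℝ] ℝ) (hσ : 2 * s < σ)
    (hb : ∀ y ∈ ball x r, |u y - u x - l (y - x)| ≤ C * ‖y - x‖ ^ σ)
    (hum : AEStronglyMeasurable u volume)
    (hfar : IntegrableOn (fun y => ‖x - y‖ ^ (-((n : ℝ) + 2 * s)) * (u x - u y)) (ball x r)ᶜ) :
    Integrable (fun y => ‖x - y‖ ^ (-((n : ℝ) + 2 * s)) * (u x - u y) +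
      (ball x r).indicator (fun y => ‖x - y‖ ^ (-((n : ℝ) + 2 * s)) * l (y - x)) y) := by
  have hq : 0 < (n : ℝ) + 2 * s := by positivity
  rw [← integrableOn_univ, ← Set.union_compl_self (ball x r)]
  refine IntegrableOn.union ?_ ?_
  · have h1 : IntegrableOn (fun y => ‖x - y‖ ^ (-((n : ℝ) + 2 * s)) * (u x - u y + l (y - x)))
        (ball x r) := by
      have h2 := (integrableOn_norm_rpow_ball x (r := r)
        (p := σ - ((n : ℝ) + 2 * s)) (by linarith)).const_mul |C|
      refine h2.mono' ?_ ?_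
      · have m1 : AEStronglyMeasurable (fun y : Euc n => ‖x - y‖ ^ (-((n : ℝ) + 2 * s))) volume :=
          Measurable.aestronglyMeasurable (by fun_prop)
        have m2 : AEStronglyMeasurable (fun y : Euc n => l (y - x)) volume :=
          Continuous.aestronglyMeasurable (by fun_prop)
        exact (m1.mul ((aestronglyMeasurable_const.sub hum).add m2)).restrict
      · filter_upwards [ae_restrict_mem measurableSet_ball] with y hy
        rcases eq_or_ne y x with rfl | hne
        · simp
          positivity
        have hpos : 0 < ‖x - y‖ := norm_pos_iff.2 (sub_ne_zero.2 hne.symm)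
        have hby := hb y hy
        rw [norm_sub_rev] at hby
        rw [norm_mul, Real.norm_of_nonneg (by positivity), Real.norm_eq_abs, ← abs_neg,
          sub_eq_add_neg σ, Real.rpow_add hpos]
        calc _ = ‖x - y‖ ^ (-((n : ℝ) + 2 * s)) * |u y - u x - l (y - x)| := by
              congr 2; ring
          _ ≤ ‖x - y‖ ^ (-((n : ℝ) + 2 * s)) * (|C| * ‖x - y‖ ^ σ) := by
              gcongr
              exact hby.trans (by gcongr; exact le_abs_self C)
          _ = _ := by ring
    refine h1.congr_fun (fun y hy => ?_) measurableSet_ball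
    simp only [Set.indicator_of_mem hy]
    ring
  · refine hfar.congr_fun (fun y hy => ?_) measurableSet_ball.compl
    simp only [Set.indicator_of_notMem hy, add_zero]

lemma exists_pv_limit {n : ℕ} [NeZero n] {s C σ r : ℝ} (hs : 0 < s) (x : Euc n)
    {u : Euc n → ℝ} (l : Euc n →L[ℝ] ℝ) (hσ : 2 * s < σ) (hr : 0 < r)
    (hb : ∀ y ∈ ball x r, |u y - u x - l (y - x)| ≤ C * ‖y - x‖ ^ σ)
    (hum : AEStronglyMeasurable u volume)
    (hfar : ∀ ε > 0, IntegrableOn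
      (fun y => ‖x - y‖ ^ (-((n : ℝ) + 2 * s)) * (u x - u y)) (ball x ε)ᶜ) :
    ∃ L, Tendsto (fun ε : ℝ => ∫ y in (ball x ε)ᶜ,
      ‖x - y‖ ^ (-((n : ℝ) + 2 * s)) * (u x - u y)) (𝓝[>] 0) (𝓝 L) := by
  have hq : 0 < (n : ℝ) + 2 * s := by positivity
  have hg := integrable_regularized hs x l hσ hb hum (hfar r hr)
  refine ⟨_, (tendsto_setIntegral_diff_ball (S := Set.univ) x hg.integrableOn).congr' ?_⟩
  filter_upwards [self_mem_nhdsWithin] with ε hε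
  have hε : 0 < ε := hε
  rw [← Set.compl_eq_univ_sdiff]
  -- The linear term is integrable off `ball x ε`, being the difference of two integrable terms.
  have hi : IntegrableOn ((ball x r).indicator
      (fun y => ‖x - y‖ ^ (-((n : ℝ) + 2 * s)) * l (y - x))) (ball x ε)ᶜ := by
    refine (hg.integrableOn.sub (hfar ε hε)).congr (Filter.Eventually.of_forall fun y => ?_)
    simp
  rw [integral_add (hfar ε hε) hi, setIntegral_kernel_mul_linear_annulus, add_zero]

/-! ### Comparison of the two representations -/

lemma setIntegral_reflected_kernel (n : ℕ) [NeZero n] {s : ℝ} (hs : 0 < s) {x : Euc n}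
    (hx : 0 < x 0) :
    ∫ y in halfSpace n, ‖reflFirst n x - y‖ ^ (-((n : ℝ) + 2 * s)) =
      Real.pi ^ (((n : ℝ) - 1) / 2) * Real.Gamma (s + 1 / 2) /
        Real.Gamma (((n : ℝ) + 2 * s) / 2) * ((x 0) ^ (-(2 * s)) / (2 * s)) := by
  have h := (measurePreserving_sub_right (volume : Measure (Euc n))
    (reflFirst n x)).setIntegral_preimage_emb (Homeomorph.subRight _).measurableEmbedding
    (fun z : Euc n => ‖z‖ ^ (-((n : ℝ) + 2 * s))) {z : Euc n | x 0 < z 0}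
  have hpre : (fun y => y - reflFirst n x) ⁻¹' {z : Euc n | x 0 < z 0} = halfSpace n := by
    ext y
    simp [halfSpace, reflFirst_zero_coord]
  rw [hpre] at h
  simp_rw [norm_sub_rev (reflFirst n x)]
  have hG1 : 0 < Real.Gamma (s + 1 / 2) := Real.Gamma_pos_of_pos (by positivity)
  have hG2 : 0 < Real.Gamma (((n : ℝ) + 2 * s) / 2) := Real.Gamma_pos_of_pos (by positivity)
  rw [h, integral_eq_lintegral_of_nonneg_ae (Filter.Eventually.of_forall fun z => by positivity)
    (Measurable.aestronglyMeasurable (by fun_prop)), lintegral_kernel_half n hs hx,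
    ENNReal.toReal_ofReal (by positivity)]

/-- The dimensional constants cancel, leaving the one-dimensional constant `c_{1,s} / s`. -/
lemma cns_mul_reflected (n : ℕ) [NeZero n] {s : ℝ} (hs : s ∈ Set.Ioo (0 : ℝ) 1) (t : ℝ) :
    cns n s * (2 * (Real.pi ^ (((n : ℝ) - 1) / 2) * Real.Gamma (s + 1 / 2) /
        Real.Gamma (((n : ℝ) + 2 * s) / 2) * (t / (2 * s)))) = cns 1 s / s * t := by
  have hs0 : 0 < s := hs.1
  have hG2 : 0 < Real.Gamma (((n : ℝ) + 2 * s) / 2) := Real.Gamma_pos_of_pos (by positivity)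
  have hG3 : 0 < Real.Gamma (1 - s) := Real.Gamma_pos_of_pos (by linarith [hs.2])
  have hpi : Real.pi ^ ((n : ℝ) / 2) = Real.pi ^ (((n : ℝ) - 1) / 2) * Real.pi ^ ((1 : ℝ) / 2) := by
    rw [← Real.rpow_add Real.pi_pos]
    congr 1
    ring
  have hg : ((1 : ℝ) + 2 * s) / 2 = s + 1 / 2 := by ring
  unfold cns
  rw [hpi, Nat.cast_one, hg]
  have h1 : 0 < Real.pi ^ (((n : ℝ) - 1) / 2) := by positivity
  have h2 : 0 < Real.pi ^ ((1 : ℝ) / 2) := by positivity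
  have h4 : 0 < (4 : ℝ) ^ s := by positivity
  generalize Real.Gamma (((n : ℝ) + 2 * s) / 2) = A at *
  generalize Real.Gamma (1 - s) = B at *
  generalize Real.Gamma (s + 1 / 2) = D at *
  generalize Real.pi ^ (((n : ℝ) - 1) / 2) = P at *
  generalize Real.pi ^ ((1 : ℝ) / 2) = Q at *
  field_simp

lemma halfSpace_subset_compl_ball {n : ℕ} [NeZero n] {x : Euc n} :
    halfSpace n ⊆ (ball (reflFirst n x) (x 0))ᶜ := by
  intro y hy
  have hy : 0 < y 0 := hy
  have h1 := PiLp.norm_apply_le (y - reflFirst n x) 0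
  simp only [PiLp.sub_apply, reflFirst_zero_coord, sub_neg_eq_add] at h1
  have h2 := le_abs_self (y 0 + x 0)
  rw [Real.norm_eq_abs] at h1
  simp only [Set.mem_compl_iff, mem_ball, dist_eq_norm, not_lt]
  linarith

lemma ball_subset_halfSpace {n : ℕ} [NeZero n] {x : Euc n} : ball x (x 0) ⊆ halfSpace n := by
  intro y hy
  have h1 := PiLp.norm_apply_le (y - x) 0
  rw [mem_ball, dist_eq_norm] at hy
  rw [Real.norm_eq_abs, PiLp.sub_apply] at h1
  have h2 := neg_abs_le (y 0 - x 0)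
  change 0 < y 0
  linarith

/-- The contribution of the lower half space, folded onto the upper one by the reflection; the sign
of `u y` flips by antisymmetry. -/
lemma setIntegral_compl_halfSpace {n : ℕ} [NeZero n] {u : Euc n → ℝ} (hanti : AntiSymmFn n u)
    (x : Euc n) (q : ℝ) :
    ∫ y in (halfSpace n)ᶜ, ‖x - y‖ ^ (-q) * (u x - u y) =
      ∫ y in halfSpace n, ‖reflFirst n x - y‖ ^ (-q) * (u x + u y) := by
  have h := (measurePreserving_reflFirst n).setIntegral_preimage_emb
    (measurableEmbedding_reflFirst n)
    (fun y => ‖reflFirst n x - y‖ ^ (-q) * (u x + u y)) (halfSpace n)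
  rw [← h, setIntegral_congr_set (preimage_halfSpace_ae n)]
  refine integral_congr_ae (Filter.Eventually.of_forall fun y => ?_)
  have hinv : reflFirst n (reflFirst n y) = y := by
    simp_rw [reflFirst_eq_reflection, Submodule.reflection_reflection]
  simp only [norm_reflFirst_sub, hinv, hanti y, ← sub_eq_add_neg]

/-- the antisymmetric representation of the fractional Laplacian
converges and agrees with the principal value definition (Proposition 2.1). -/
theorem stmt4
    (n : ℕ) [NeZero n] (s : ℝ) (hs : s ∈ Set.Ioo (0 : ℝ) 1)
    (x : Euc n) (hx : x ∈ halfSpace n)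
    (u : Euc n → ℝ) (α : ℝ) (hα : 0 < α) (hint : NotInteger (2 * s + α))
    (huL : MemL n s u)
    (hanti : AntiSymmFn n u)
    (hreg : ∃ δ > 0, MemHolderOn (2 * s + α) (Metric.ball x δ) u) :
    ∃ L : ℝ, HasPVFracLap n s u x L ∧ HasAntiFracLap n s u x L := by
  obtain ⟨δ, hδ, hreg⟩ := hreg
  have hs0 : 0 < s := hs.1
  have hx0 : 0 < x 0 := hx
  have hq : 0 < (n : ℝ) + 2 * s := by positivity
  have hum : AEStronglyMeasurable u volume := huL.1.aestronglyMeasurable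
  have hone := integrable_one_div_one_add_norm_rpow (n := n) (q := (n : ℝ) + 2 * s) (by linarith)
  -- Integrability of the kernel against `c + d * u`, away from its pole.
  have hker : ∀ (p : Euc n) (ε : ℝ), 0 < ε → ∀ c d : ℝ, IntegrableOn
      (fun y => ‖p - y‖ ^ (-((n : ℝ) + 2 * s)) * (c + d * u y)) (ball p ε)ᶜ := by
    intro p ε hε c d
    have i1 := integrableOn_kernel_mul hq hε p (f := fun _ => (1 : ℝ)) aestronglyMeasurable_const
      (by simpa using hone)
    have i2 := integrableOn_kernel_mul hq hε p hum huL.2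
    refine ((i1.const_mul c).add (i2.const_mul d)).congr (Filter.Eventually.of_forall fun y => ?_)
    simp only [Pi.add_apply]
    ring
  have hfar : ∀ ε > 0, IntegrableOn
      (fun y => ‖x - y‖ ^ (-((n : ℝ) + 2 * s)) * (u x - u y)) (ball x ε)ᶜ := by
    intro ε hε
    simpa [sub_eq_add_neg] using hker x ε hε (u x) (-1)
  have hrefl : ∀ c d : ℝ, IntegrableOn
      (fun y => ‖reflFirst n x - y‖ ^ (-((n : ℝ) + 2 * s)) * (c + d * u y)) (halfSpace n) :=
    fun c d => (hker (reflFirst n x) (x 0) hx0 c d).mono_set halfSpace_subset_compl_ball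
  have hreflm : IntegrableOn
      (fun y => ‖reflFirst n x - y‖ ^ (-((n : ℝ) + 2 * s)) * (u x - u y)) (halfSpace n) := by
    simpa [sub_eq_add_neg] using hrefl (u x) (-1)
  have hreflp : IntegrableOn
      (fun y => ‖reflFirst n x - y‖ ^ (-((n : ℝ) + 2 * s)) * (u x + u y)) (halfSpace n) := by
    simpa using hrefl (u x) 1
  obtain ⟨l, C, σ, r, hσ, hr, hb⟩ := taylor_bound hs.2 (by linarith) hδ hreg
  obtain ⟨F₀, hF⟩ := exists_pv_limit hs0 x l hσ hr hb hum hfar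
  have hH := measurableSet_halfSpace n
  have hD := tendsto_setIntegral_diff_ball x hreflm
  set D₀ := ∫ y in halfSpace n, ‖reflFirst n x - y‖ ^ (-((n : ℝ) + 2 * s)) * (u x - u y) with hD₀
  set E₀ := ∫ y in halfSpace n, ‖reflFirst n x - y‖ ^ (-((n : ℝ) + 2 * s)) * (u x + u y) with hE₀
  have hDE : D₀ + E₀ = 2 * u x *
      ∫ y in halfSpace n, ‖reflFirst n x - y‖ ^ (-((n : ℝ) + 2 * s)) := by
    rw [hD₀, hE₀, ← integral_add hreflm hreflp, ← integral_const_mul]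
    congr with y
    ring
  rw [setIntegral_reflected_kernel n hs0 hx0] at hDE
  refine ⟨cns n s * F₀, ?_, ?_⟩
  · refine (hF.const_mul (cns n s)).congr fun ε => ?_
    congr 2 with y
    rw [Real.rpow_neg (norm_nonneg _), div_eq_inv_mul]
  · have hlim : cns n s * F₀ = cns n s * (F₀ - E₀ - D₀) +
        (cns 1 s / s) * u x * (x 0) ^ (-(2 * s)) := by
      have := cns_mul_reflected n hs ((x 0) ^ (-(2 * s)))
      linear_combination (cns n s) * hDE + u x * this
    unfold HasAntiFracLap
    rw [hlim]
    refine Tendsto.add_const _ (Tendsto.const_mul _ ?_)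
    refine ((hF.sub_const E₀).sub hD).congr' ?_
    filter_upwards [Ioo_mem_nhdsGT hx0] with ε hε
    have hsub : ball x ε ⊆ halfSpace n := (ball_subset_ball hε.2.le).trans ball_subset_halfSpace
    have hsplit : (ball x ε)ᶜ = (halfSpace n \ ball x ε) ∪ (halfSpace n)ᶜ := by
      ext y
      have := @hsub y
      simp only [Set.mem_compl_iff, Set.mem_union, Set.mem_sdiff]
      tauto
    have hi := hfar ε hε.1
    rw [hsplit] at hi
    rw [hsplit, setIntegral_union (disjoint_compl_right.mono_left Set.sdiff_subset)
      hH.compl hi.left_of_union hi.right_of_union, setIntegral_compl_halfSpace hanti,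
      add_sub_cancel_right, ← integral_sub hi.left_of_union (hreflm.mono_set Set.sdiff_subset)]
    congr with y
    simp only [aKernel]
    ring

end
end

section
/- For every integer n ≥ 1 and every s ∈ (0,1), ∫_{ℝⁿ₊} |e₁+z|^{−n−2s} dz = π^{(n−1)/2}·Γ((1+2s)/2) / (2s·Γ((n+2s)/2)); consequently c_{n,s}·∫_{ℝⁿ₊} |e₁+z|^{−n−2s} dz = 2^{2s−1}·Γ((1+2s)/2)/(π^{1/2}·Γ(1−s)) = c_{1,s}/(2s), a quantity independent of n. -/
/-!
With `a = (n + 2s)/2`, the Gamma integral gives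
`Γ(a) |e₁ + z|^{-2a} = ∫₀^∞ t^{a-1} exp(-t |e₁ + z|²) dt`. By Tonelli the `z`-integral may be taken
first (`lintegral_gaussian_halfSpace`): the Gaussian factors over the coordinates, the `n - 1`
transversal ones contribute `(π/t)^{(n-1)/2}`, and the power of `t` left over is `t^{b-1}` with
`b = (1 + 2s)/2`, whatever `n` is. A second exchange and the same Gamma integral in one dimension
leave `π^{(n-1)/2} Γ(b) ∫₀^∞ (1 + r)^{-1-2s} dr`, and the last integral is `1/(2s)`
(`gamma_mul_lintegral_halfSpace`). Everything is done with `[0, ∞]`-valued integrals, so that no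
integrability on the product spaces has to be shown. The statements on `c_{n,s}` are algebra.
-/

open MeasureTheory Metric Filter Topology

noncomputable section

/-! ### One-dimensional integrals -/

lemma lintegral_gamma_kernel {a r : ℝ} (ha : 0 < a) (hr : 0 < r) :
    ∫⁻ t in Set.Ioi (0 : ℝ), ENNReal.ofReal (t ^ (a - 1) * Real.exp (-(r * t))) =
      ENNReal.ofReal (r ^ (-a) * Real.Gamma a) := by
  have h := Real.integral_rpow_mul_exp_neg_mul_Ioi ha hr
  have hpos : 0 < (1 / r) ^ a * Real.Gamma a :=
    mul_pos (Real.rpow_pos_of_pos (by positivity) _) (Real.Gamma_pos_of_pos ha)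
  have hint : Integrable (fun t : ℝ => t ^ (a - 1) * Real.exp (-(r * t)))
      (volume.restrict (Set.Ioi 0)) :=
    Integrable.of_integral_ne_zero (by rw [h]; exact hpos.ne')
  rw [← ofReal_integral_eq_lintegral_ofReal hint, h, one_div, Real.inv_rpow hr.le,
    Real.rpow_neg hr.le]
  filter_upwards [ae_restrict_mem measurableSet_Ioi] with t ht
  have : (0 : ℝ) < t := ht
  positivity

lemma lintegral_one_add_rpow {s : ℝ} (hs : 0 < s) :
    ∫⁻ r in Set.Ioi (0 : ℝ), ENNReal.ofReal ((1 + r) ^ (-(1 + 2 * s))) =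
      ENNReal.ofReal (1 / (2 * s)) := by
  have h1 : ∫⁻ r in Set.Ioi (1 : ℝ), ENNReal.ofReal (r ^ (-(1 + 2 * s))) =
      ENNReal.ofReal (1 / (2 * s)) := by
    rw [← ofReal_integral_eq_lintegral_ofReal
      (integrableOn_Ioi_rpow_of_lt (by linarith) one_pos),
      integral_Ioi_rpow_of_lt (by linarith) one_pos]
    · congr 1
      rw [Real.one_rpow, show -(1 + 2 * s) + 1 = -(2 * s) by ring, neg_div_neg_eq]
    · filter_upwards [ae_restrict_mem measurableSet_Ioi] with t ht
      have : (0 : ℝ) < t := lt_trans one_pos ht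
      positivity
  rw [← h1, ← lintegral_indicator measurableSet_Ioi, ← lintegral_indicator measurableSet_Ioi,
    ← lintegral_add_left_eq_self ((Set.Ioi (1 : ℝ)).indicator _) (1 : ℝ)]
  congr 1
  ext r
  simp [Set.indicator_apply]

/-! ### The Gaussian integral over the half space -/

lemma norm_e1_add_sq (n : ℕ) [NeZero n] (z : Euc n) :
    ‖e1 n + z‖ ^ 2 = ∑ i, (if i = 0 then (1 + z i) ^ 2 else z i ^ 2) := by
  rw [EuclideanSpace.norm_sq_eq]
  refine Finset.sum_congr rfl fun i _ => ?_
  by_cases hi : i = 0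
  · subst hi; simp [e1]
  · simp [e1, hi]

/-- The Gaussian splits into coordinates: the first one contributes a truncated Gaussian, each of
the remaining `n - 1` a full one. -/
lemma lintegral_gaussian_halfSpace (n : ℕ) [NeZero n] {t : ℝ} (ht : 0 < t) :
    ∫⁻ z in halfSpace n, ENNReal.ofReal (Real.exp (-(‖e1 n + z‖ ^ 2 * t))) =
      ENNReal.ofReal ((Real.pi / t) ^ (((n : ℝ) - 1) / 2)) *
        ∫⁻ r in Set.Ioi (0 : ℝ), ENNReal.ofReal (Real.exp (-((1 + r) ^ 2 * t))) := by
  set f : ℝ → ℝ := (Set.Ioi (0 : ℝ)).indicator fun r => Real.exp (-((1 + r) ^ 2 * t)) with hf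
  set g : ℝ → ℝ := fun r => Real.exp (-t * r ^ 2) with hg
  set G : Fin n → ℝ → ℝ := fun i => if i = 0 then f else g with hG
  have hgi : Integrable g := integrable_exp_neg_mul_sq ht
  have hfi : Integrable f := by
    refine Integrable.indicator ?_ measurableSet_Ioi
    have := hgi.comp_add_left 1
    simpa [hg, mul_comm] using this
  have hf0 : ∀ r, 0 ≤ f r := fun r => Set.indicator_nonneg (fun _ _ => (Real.exp_pos _).le) r
  have hGi : ∀ i, Integrable (G i) := by
    intro i
    by_cases hi : i = 0 <;> simp [hG, hi, hfi, hgi]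
  have hG0 : ∀ i r, 0 ≤ G i r := by
    intro i r
    by_cases hi : i = 0
    · simp [hG, hi, hf0]
    · simp [hG, hi, hg, Real.exp_nonneg]
  have hmeas : MeasurableSet (halfSpace n) :=
    measurableSet_lt measurable_const (by fun_prop)
  -- on the whole space the truncated Gaussian is the product of the `G i`
  have hprod : ∀ z : Euc n, (halfSpace n).indicator
      (fun z => ENNReal.ofReal (Real.exp (-(‖e1 n + z‖ ^ 2 * t)))) z =
      ENNReal.ofReal (∏ i, G i (z i)) := by
    intro z
    by_cases hz : z ∈ halfSpace n
    · rw [Set.indicator_of_mem hz, norm_e1_add_sq, Finset.sum_mul, ← Finset.sum_neg_distrib,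
        Real.exp_sum]
      congr 1
      refine Finset.prod_congr rfl fun i _ => ?_
      by_cases hi : i = 0
      · subst hi
        have hz' : z 0 ∈ Set.Ioi (0 : ℝ) := hz
        simp only [hG, if_true, hf, Set.indicator_of_mem hz']
      · simp only [hG, hi, if_false, hg]
        ring_nf
    · rw [Set.indicator_of_notMem hz, Finset.prod_eq_zero (Finset.mem_univ 0), ENNReal.ofReal_zero]
      have hz' : z 0 ∉ Set.Ioi (0 : ℝ) := hz
      simp only [hG, if_true, hf, Set.indicator_of_notMem hz']
  have hval : ∫ x : Fin n → ℝ, ∏ i, G i (x i) =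
      (Real.pi / t) ^ (((n : ℝ) - 1) / 2) * ∫ r, f r := by
    rw [integral_fintype_prod_volume_eq_prod, ← Finset.mul_prod_erase _ _ (Finset.mem_univ 0),
      mul_comm]
    have hne : ∀ i ∈ Finset.univ.erase (0 : Fin n), ∫ r, G i r = √(Real.pi / t) := by
      intro i hi
      simp only [hG, (Finset.mem_erase.1 hi).1, if_false, hg]
      exact integral_gaussian t
    rw [Finset.prod_congr rfl hne, Finset.prod_const, Finset.card_erase_of_mem (Finset.mem_univ _),
      Finset.card_univ, Fintype.card_fin]
    congr 1
    rw [Real.sqrt_eq_rpow, ← Real.rpow_natCast, ← Real.rpow_mul (by positivity),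
      Nat.cast_sub (NeZero.one_le)]
    congr 1
    push_cast
    ring
  rw [← lintegral_indicator hmeas]
  simp_rw [hprod]
  rw [(PiLp.volume_preserving_ofLp (Fin n)).lintegral_comp_emb
    (MeasurableEquiv.toLp 2 (Fin n → ℝ)).symm.measurableEmbedding
    (fun x : Fin n → ℝ => ENNReal.ofReal (∏ i, G i (x i))), volume_pi,
    ← ofReal_integral_eq_lintegral_ofReal (Integrable.fintype_prod hGi)
      (Eventually.of_forall fun x => Finset.prod_nonneg fun i _ => hG0 i _)]
  rw [volume_pi] at hval
  rw [hval, ENNReal.ofReal_mul (by positivity),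
    ofReal_integral_eq_lintegral_ofReal hfi (Eventually.of_forall hf0),
    ← lintegral_indicator measurableSet_Ioi]
  congr 2
  ext r
  by_cases hr : r ∈ Set.Ioi (0 : ℝ)
  · simp only [hf, Set.indicator_of_mem hr]
  · simp only [hf, Set.indicator_of_notMem hr, ENNReal.ofReal_zero]

/-! ### Subordination -/

/-- Writing both `|e₁ + z|^{-n-2s}` and `(1 + r)^{-1-2s}` as Gamma integrals of Gaussians and
exchanging the integrals twice reduces the half-space integral to a half-line one. -/
lemma gamma_mul_lintegral_halfSpace (n : ℕ) [NeZero n] {s : ℝ} (hs : 0 < s) :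
    ENNReal.ofReal (Real.Gamma (((n : ℝ) + 2 * s) / 2)) *
      ∫⁻ z in halfSpace n, ENNReal.ofReal (‖e1 n + z‖ ^ (-((n : ℝ) + 2 * s))) =
    ENNReal.ofReal (Real.pi ^ (((n : ℝ) - 1) / 2) * Real.Gamma ((1 + 2 * s) / 2) *
      (1 / (2 * s))) := by
  have hn : (0 : ℝ) ≤ n := Nat.cast_nonneg n
  set a : ℝ := ((n : ℝ) + 2 * s) / 2 with ha
  set b : ℝ := (1 + 2 * s) / 2 with hb
  have ha0 : 0 < a := by positivity
  have hb0 : 0 < b := by positivity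
  have hΓb := Real.Gamma_pos_of_pos hb0
  have hmeas : MeasurableSet (halfSpace n) :=
    measurableSet_lt measurable_const (by fun_prop)
  have hsq : ∀ {x c : ℝ}, 0 < x → (x ^ 2) ^ (-(c / 2)) = x ^ (-c) := by
    intro x c hx
    rw [← Real.rpow_natCast, ← Real.rpow_mul hx.le]
    congr 1
    push_cast
    ring
  have hpos : ∀ z ∈ halfSpace n, 0 < ‖e1 n + z‖ := by
    intro z hz
    rw [norm_pos_iff]
    intro h0
    have h1 : (e1 n + z) 0 = 0 := by rw [h0]; rfl
    have h2 : (0 : ℝ) < z 0 := hz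
    simp [e1] at h1
    linarith
  calc _ = ∫⁻ z in halfSpace n, ∫⁻ t in Set.Ioi (0 : ℝ),
          ENNReal.ofReal (t ^ (a - 1) * Real.exp (-(‖e1 n + z‖ ^ 2 * t))) := by
        rw [← lintegral_const_mul _ (by fun_prop)]
        refine setLIntegral_congr_fun hmeas fun z hz => ?_
        have hz' := hpos z hz
        rw [lintegral_gamma_kernel ha0 (by positivity), hsq hz', mul_comm,
          ENNReal.ofReal_mul (by positivity)]
    _ = ∫⁻ t in Set.Ioi (0 : ℝ), ∫⁻ z in halfSpace n,
          ENNReal.ofReal (t ^ (a - 1) * Real.exp (-(‖e1 n + z‖ ^ 2 * t))) :=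
        lintegral_lintegral_swap (by fun_prop)
    _ = ∫⁻ t in Set.Ioi (0 : ℝ), ∫⁻ r in Set.Ioi (0 : ℝ),
          ENNReal.ofReal (Real.pi ^ (((n : ℝ) - 1) / 2)) *
            ENNReal.ofReal (t ^ (b - 1) * Real.exp (-((1 + r) ^ 2 * t))) := by
        refine setLIntegral_congr_fun measurableSet_Ioi fun t ht => ?_
        have ht' : (0 : ℝ) < t := ht
        have htp : 0 ≤ t ^ (a - 1) := by positivity
        simp only [ENNReal.ofReal_mul htp]
        rw [lintegral_const_mul _ (by fun_prop), lintegral_gaussian_halfSpace n ht',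
          lintegral_const_mul _ (by fun_prop)]
        have htq : 0 ≤ t ^ (b - 1) := by positivity
        simp only [ENNReal.ofReal_mul htq]
        rw [lintegral_const_mul _ (by fun_prop), ← mul_assoc, ← mul_assoc,
          ← ENNReal.ofReal_mul htp, ← ENNReal.ofReal_mul (by positivity)]
        congr 2
        rw [Real.div_rpow Real.pi_pos.le ht'.le, div_eq_mul_inv, ← Real.rpow_neg ht'.le,
          mul_left_comm, ← Real.rpow_add ht']
        congr 2
        rw [ha, hb]
        ring
    _ = ∫⁻ r in Set.Ioi (0 : ℝ), ∫⁻ t in Set.Ioi (0 : ℝ),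
          ENNReal.ofReal (Real.pi ^ (((n : ℝ) - 1) / 2)) *
            ENNReal.ofReal (t ^ (b - 1) * Real.exp (-((1 + r) ^ 2 * t))) :=
        lintegral_lintegral_swap (by fun_prop)
    _ = ∫⁻ r in Set.Ioi (0 : ℝ),
          ENNReal.ofReal (Real.pi ^ (((n : ℝ) - 1) / 2) * Real.Gamma b) *
            ENNReal.ofReal ((1 + r) ^ (-(1 + 2 * s))) := by
        refine setLIntegral_congr_fun measurableSet_Ioi fun r hr => ?_
        have hr' : (0 : ℝ) < 1 + r := add_pos one_pos hr
        rw [lintegral_const_mul _ (by fun_prop), lintegral_gamma_kernel hb0 (by positivity),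
          hsq hr', ← ENNReal.ofReal_mul (by positivity), ← ENNReal.ofReal_mul (by positivity)]
        congr 1
        ring
    _ = _ := by
        rw [lintegral_const_mul _ (by fun_prop), lintegral_one_add_rpow hs,
          ← ENNReal.ofReal_mul (by positivity)]

/-- explicit value of `∫_{ℝⁿ₊} |e₁+z|^{-n-2s} dz` (Remark 2.2). -/
theorem stmt5
    (n : ℕ) [NeZero n] (s : ℝ) (hs : s ∈ Set.Ioo (0 : ℝ) 1) :
    (∫ z in halfSpace n, ‖e1 n + z‖ ^ (-((n : ℝ) + 2 * s))) =
      Real.pi ^ (((n : ℝ) - 1) / 2) * Real.Gamma ((1 + 2 * s) / 2) /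
        (2 * s * Real.Gamma (((n : ℝ) + 2 * s) / 2)) ∧
    cns n s * (∫ z in halfSpace n, ‖e1 n + z‖ ^ (-((n : ℝ) + 2 * s))) =
      (2 : ℝ) ^ (2 * s - 1) * Real.Gamma ((1 + 2 * s) / 2) /
        (Real.pi ^ ((1 : ℝ) / 2) * Real.Gamma (1 - s)) ∧
    cns n s * (∫ z in halfSpace n, ‖e1 n + z‖ ^ (-((n : ℝ) + 2 * s))) =
      cns 1 s / (2 * s) := by
  have hs0 : 0 < s := hs.1
  have hn : (0 : ℝ) ≤ n := Nat.cast_nonneg n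
  have hΓa : 0 < Real.Gamma (((n : ℝ) + 2 * s) / 2) := Real.Gamma_pos_of_pos (by positivity)
  have hΓb : 0 < Real.Gamma ((1 + 2 * s) / 2) := Real.Gamma_pos_of_pos (by positivity)
  have hΓs : 0 < Real.Gamma (1 - s) := Real.Gamma_pos_of_pos (by linarith [hs.2])
  have key : (∫ z in halfSpace n, ‖e1 n + z‖ ^ (-((n : ℝ) + 2 * s))) =
      Real.pi ^ (((n : ℝ) - 1) / 2) * Real.Gamma ((1 + 2 * s) / 2) /
        (2 * s * Real.Gamma (((n : ℝ) + 2 * s) / 2)) := by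
    have h := congrArg ENNReal.toReal (gamma_mul_lintegral_halfSpace n hs0)
    rw [ENNReal.toReal_mul, ENNReal.toReal_ofReal hΓa.le, ENNReal.toReal_ofReal (by positivity)] at h
    rw [integral_eq_lintegral_of_nonneg_ae
      (Eventually.of_forall fun z => Real.rpow_nonneg (norm_nonneg _) _)
      (Measurable.aestronglyMeasurable (by fun_prop)), eq_div_iff (by positivity)]
    field_simp at h
    linarith
  have h4 : (4 : ℝ) ^ s = 2 * 2 ^ (2 * s - 1) := by
    rw [Real.rpow_sub_one two_ne_zero, Real.rpow_mul zero_le_two]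
    norm_num
    ring
  have hpi : Real.pi ^ ((n : ℝ) / 2) = Real.pi ^ (((n : ℝ) - 1) / 2) * Real.pi ^ ((1 : ℝ) / 2) := by
    rw [← Real.rpow_add Real.pi_pos]
    congr 1
    ring
  have h2 : cns n s * (∫ z in halfSpace n, ‖e1 n + z‖ ^ (-((n : ℝ) + 2 * s))) =
      (2 : ℝ) ^ (2 * s - 1) * Real.Gamma ((1 + 2 * s) / 2) /
        (Real.pi ^ ((1 : ℝ) / 2) * Real.Gamma (1 - s)) := by
    have hp1 : 0 < Real.pi ^ (((n : ℝ) - 1) / 2) := Real.rpow_pos_of_pos Real.pi_pos _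
    have hp2 : 0 < Real.pi ^ ((1 : ℝ) / 2) := Real.rpow_pos_of_pos Real.pi_pos _
    rw [key, cns, hpi, h4]
    generalize Real.pi ^ (((n : ℝ) - 1) / 2) = A at *
    generalize Real.pi ^ ((1 : ℝ) / 2) = B at *
    field_simp
  refine ⟨key, h2, ?_⟩
  rw [h2, cns, h4, Nat.cast_one]
  have hp2 : 0 < Real.pi ^ ((1 : ℝ) / 2) := Real.rpow_pos_of_pos Real.pi_pos _
  generalize Real.pi ^ ((1 : ℝ) / 2) = B at *
  field_simp

end
end
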